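/- Let H > 0 and let Ω ⊆ ℝ² be an open connected set. Let C ⊆ ∂Ω be a nonempty relatively open arc of the boundary whose exterior curvature is at least 2H, in the sense that for every P ∈ C there exist a point z_P ∈ ℝ² with |P − z_P| = 1/(2H) and an open neighborhood V_P of P such that Ω ∩ V_P ⊆ {Q : |Q − z_P| < 1/(2H)}. Let (u_n) be a sequence of solutions of (CMC) on Ω, each continuous on Ω ∪ C, and let M ∈ ℝ be such that the oscillation of u_n on C is bounded: sup_C u_n − inf_C u_n ≤ M for every n. Then no divergence line of (u_n) has an endpoint at a point of C: for every divergence line L of (u_n), the closure of L in ℝ² does not meet C. -/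

import Mathlib

/-!
The argument is a quantitative one: the equation is tested against three vector fields near the
endpoint.

Suppose a divergence line `L`, an arc of a circle of radius `R = 1/(2H)`, accumulates at `P ∈ C`.
Since `P ∉ Ω`, connectedness makes `L` contain a one-sided arc at `P` (`arc_end`), and in polar
coordinates about the centre of `L` the endpoint is `(R, 0)` and `L ⊇ {Pol R θ : 0 < θ ≤ θ₀}`.
The hypothesis on `C` puts `Ω` near `P` inside a disc of radius `R` through `P` which crosses the
circle of `L` transversally (`Endpoint`, `exists_endpoint`). Put `X = ∇u / W`, so that
`div X = 2H`, let `n` be the radial unit vector, and call `1 - X·n ≥ 0` the defect. Along a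
divergence line the defect tends to zero pointwise, hence in `L¹` of the arc (`tendsto_defect`). It
therefore suffices to bound its integral below by a constant which depends on the geometry and on
the oscillation bound `M` only (`defect_ge`).

* `psi_bound`. On either side `σ = ±1` of the circle of `L`, let `e` be the unit bisector of the
  inward normals `σ n(P)` and `m` of the wedge between the circle and the disc containing `Ω`. The
  field `ζ φ(σ(u - u₀)) (σ X - e)`, where `φ` vanishes on `(-∞, c]` and `ζ = ((h - e·(p - P))⁺)²`,
  extends by zero across `C`, since `u` is within `c` of `u₀ = u(P)` there; its divergence is bounded
  below because `σ∇u·(σX - e) ≥ - 1/W`. On the circle `X` is nearly `n`, and `σ (σ X - e)·n` is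
  of a definite sign. So the mean of `φ(σ(u - u₀))` on an arc at scale `h` is `O(h)` plus the
  defect: on most of the arc `u` is close to its boundary values.
* `strip_bound`. Testing `div X = 2H` with the weight `1/(s + ρ - R)` and an angular cutoff, and using
  `(X·t)² ≤ 2 (1 - X·n)` for the angular component, shows that a defect of size `s²` on `ρ = R` remains
  of size `(s + t)²` on `ρ = R + t`.
* `slice_bound`, `log_bound`. As `1/W² ≤ 2 (1 - X·n)`, the slope `W` is at least of order `1/(s + t)`
  on most of the arc `ρ = R + t`, where moreover `u - u₀` is bounded. The bounded field
  `arctan(u - u₀) X` has divergence at least `W/(1 + (u - u₀)²) - O(1)`; integrating it over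
  `R ≤ ρ ≤ R + δ` gives `log (1 + δ/s) ≤ const`, so `s` is bounded below.
-/

open Real MeasureTheory Filter Set

noncomputable section

/-- Euclidean norm on `ℝ × ℝ`. -/
def enorm2 (p : ℝ × ℝ) : ℝ := Real.sqrt (p.1 ^ 2 + p.2 ^ 2)

/-- Partial derivative in the `x` direction. -/
def pdx (u : ℝ × ℝ → ℝ) (p : ℝ × ℝ) : ℝ := fderiv ℝ u p (1, 0)

/-- Partial derivative in the `y` direction. -/
def pdy (u : ℝ × ℝ → ℝ) (p : ℝ × ℝ) : ℝ := fderiv ℝ u p (0, 1)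

/-- The area element `W_u = √(1 + |∇u|²)`. -/
def Wgraph (u : ℝ × ℝ → ℝ) (p : ℝ × ℝ) : ℝ :=
  Real.sqrt (1 + (pdx u p) ^ 2 + (pdy u p) ^ 2)

/-- Upward unit normal of the graph of `u`. -/
def normalVec (u : ℝ × ℝ → ℝ) (p : ℝ × ℝ) : ℝ × ℝ × ℝ :=
  (-pdx u p / Wgraph u p, -pdy u p / Wgraph u p, 1 / Wgraph u p)

/-- `u` is a (C²) solution of the constant mean curvature `H` equation on `Ω`. -/
def IsCMCSolution (H : ℝ) (Ω : Set (ℝ × ℝ)) (u : ℝ × ℝ → ℝ) : Prop :=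
  ContDiffOn ℝ 2 u Ω ∧ ∀ p ∈ Ω,
    (1 + (pdy u p) ^ 2) * pdx (fun q => pdx u q) p
      - 2 * (pdx u p) * (pdy u p) * pdy (fun q => pdx u q) p
      + (1 + (pdx u p) ^ 2) * pdy (fun q => pdy u q) p
    = 2 * H * (1 + (pdx u p) ^ 2 + (pdy u p) ^ 2) ^ ((3 : ℝ) / 2)

/-- `C` is a divergence line of the sequence `u` on `Ω`. -/
def IsDivergenceLine (H : ℝ) (Ω : Set (ℝ × ℝ)) (u : ℕ → ℝ × ℝ → ℝ)
    (C : Set (ℝ × ℝ)) : Prop :=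
  ∃ z₁ : ℝ × ℝ, C ⊆ Ω ∧ (∀ q ∈ C, enorm2 (q - z₁) = 1 / (2 * H)) ∧
    IsConnected C ∧ C.Nontrivial ∧
    ∃ φ : ℕ → ℕ, StrictMono φ ∧ ∀ Q ∈ C,
      Tendsto (fun n => normalVec (u (φ n)) Q) atTop
        (nhds (2 * H * (z₁.1 - Q.1), 2 * H * (z₁.2 - Q.2), 0))

/-! ### Divergence theorem in polar coordinates -/

/-- The point with polar coordinates `(ρ, θ)`. -/
def Pol (ρ θ : ℝ) : ℝ × ℝ := (ρ * cos θ, ρ * sin θ)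

/-- Divergence of the planar vector field `(F₁, F₂)`. -/
def dvg (F1 F2 : ℝ × ℝ → ℝ) (p : ℝ × ℝ) : ℝ := pdx F1 p + pdy F2 p

/-- Radial component of the field `(F₁, F₂)` at `Pol ρ θ`. -/
def Fnr (F1 F2 : ℝ × ℝ → ℝ) (ρ θ : ℝ) : ℝ := F1 (Pol ρ θ) * cos θ + F2 (Pol ρ θ) * sin θ

/-- Angular component of the field `(F₁, F₂)` at `Pol ρ θ`. -/
def Ftg (F1 F2 : ℝ × ℝ → ℝ) (ρ θ : ℝ) : ℝ := - F1 (Pol ρ θ) * sin θ + F2 (Pol ρ θ) * cos θ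

lemma fderiv_split (F : ℝ × ℝ → ℝ) (p : ℝ × ℝ) (a b : ℝ) :
    fderiv ℝ F p (a, b) = pdx F p * a + pdy F p * b := by
  have : ((a, b) : ℝ × ℝ) = a • ((1 : ℝ), (0 : ℝ)) + b • ((0 : ℝ), (1 : ℝ)) := by simp
  rw [this, map_add, map_smul, map_smul]
  simp only [pdx, pdy, smul_eq_mul]; ring

lemma contDiff_Pol : ContDiff ℝ 1 (fun x : ℝ × ℝ => Pol x.1 x.2) := by
  unfold Pol; fun_prop

lemma hasDerivAt_comp_Pol_fst {F : ℝ × ℝ → ℝ} {ρ θ : ℝ} (hF : DifferentiableAt ℝ F (Pol ρ θ)) :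
    HasDerivAt (fun r => F (Pol r θ)) (pdx F (Pol ρ θ) * cos θ + pdy F (Pol ρ θ) * sin θ) ρ := by
  have h1 : HasDerivAt (fun r => Pol r θ) (cos θ, sin θ) ρ := by
    unfold Pol
    simpa using ((hasDerivAt_id ρ).mul_const (cos θ)).prodMk ((hasDerivAt_id ρ).mul_const (sin θ))
  have := hF.hasFDerivAt.comp_hasDerivAt ρ h1
  rwa [fderiv_split] at this

lemma hasDerivAt_comp_Pol_snd {F : ℝ × ℝ → ℝ} {ρ θ : ℝ} (hF : DifferentiableAt ℝ F (Pol ρ θ)) :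
    HasDerivAt (fun s => F (Pol ρ s))
      (pdx F (Pol ρ θ) * (-(ρ * sin θ)) + pdy F (Pol ρ θ) * (ρ * cos θ)) θ := by
  have h1 : HasDerivAt (fun s => Pol ρ s) (-(ρ * sin θ), ρ * cos θ) θ := by
    unfold Pol
    simpa using ((hasDerivAt_cos θ).const_mul ρ).prodMk ((hasDerivAt_sin θ).const_mul ρ)
  have := hF.hasFDerivAt.comp_hasDerivAt θ h1
  rwa [fderiv_split] at this

lemma continuousAt_fderiv_apply {f : ℝ × ℝ → ℝ} {x : ℝ × ℝ} (hf : ContDiffAt ℝ 1 f x)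
    (v : ℝ × ℝ) : ContinuousAt (fun y => fderiv ℝ f y v) x := by
  have h : ContDiffAt ℝ 0 (fderiv ℝ f) x := hf.fderiv_right (by norm_num)
  exact h.continuousAt.clm_apply continuousAt_const

/-- Divergence theorem on the polar box `[A, B] × [α, β]` for the field `(F₁, F₂)` with weight
`w(ρ) g(θ)`, the radial component being shifted by the constant `κ`. If `l` bounds
the angular integrals of the weighted divergence from below, then the integral of `l` is at most the
difference of the fluxes through the arcs `ρ = B` and `ρ = A`; the weighted flux through the sides
`θ = α, β` is assumed to vanish. -/
lemma polar_div (F1 F2 : ℝ × ℝ → ℝ) (w g l : ℝ → ℝ) (κ A B α β : ℝ) (hAB : A ≤ B) (hαβ : α ≤ β)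
    (hF1 : ∀ ρ ∈ Icc A B, ∀ θ ∈ Icc α β, ContDiffAt ℝ 1 F1 (Pol ρ θ))
    (hF2 : ∀ ρ ∈ Icc A B, ∀ θ ∈ Icc α β, ContDiffAt ℝ 1 F2 (Pol ρ θ))
    (hw : ∀ ρ ∈ Icc A B, ContDiffAt ℝ 1 w ρ) (hg : ContDiff ℝ 1 g)
    (h0 : ∀ ρ ∈ Icc A B, g α * Ftg F1 F2 ρ α = 0)
    (h1 : ∀ ρ ∈ Icc A B, g β * Ftg F1 F2 ρ β = 0)
    (hl : IntervalIntegrable l volume A B)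
    (hle : ∀ ρ ∈ Icc A B, l ρ ≤ ∫ θ in α..β, (w ρ * g θ * (ρ * dvg F1 F2 (Pol ρ θ) + κ)
      + ρ * deriv w ρ * g θ * (κ + Fnr F1 F2 ρ θ) + w ρ * deriv g θ * Ftg F1 F2 ρ θ)) :
    ∫ ρ in A..B, l ρ ≤ (∫ θ in α..β, w B * g θ * B * (κ + Fnr F1 F2 B θ))
      - ∫ θ in α..β, w A * g θ * A * (κ + Fnr F1 F2 A θ) := by
  set f : ℝ × ℝ → ℝ := fun x => w x.1 * g x.2 * x.1 * (κ + Fnr F1 F2 x.1 x.2) with hf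
  set k : ℝ × ℝ → ℝ := fun x => w x.1 * g x.2 * Ftg F1 F2 x.1 x.2 with hk
  have hC1 : ∀ x ∈ Icc A B ×ˢ Icc α β, ContDiffAt ℝ 1 (fun y : ℝ × ℝ => F1 (Pol y.1 y.2)) x :=
    fun x hx => ContDiffAt.comp x (hF1 x.1 hx.1 x.2 hx.2) contDiff_Pol.contDiffAt
  have hC2 : ∀ x ∈ Icc A B ×ˢ Icc α β, ContDiffAt ℝ 1 (fun y : ℝ × ℝ => F2 (Pol y.1 y.2)) x :=
    fun x hx => ContDiffAt.comp x (hF2 x.1 hx.1 x.2 hx.2) contDiff_Pol.contDiffAt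
  have hCw : ∀ x ∈ Icc A B ×ˢ Icc α β, ContDiffAt ℝ 1 (fun y : ℝ × ℝ => w y.1) x :=
    fun x hx => ContDiffAt.comp x (hw x.1 hx.1) contDiff_fst.contDiffAt
  have hCg : ∀ x : ℝ × ℝ, ContDiffAt ℝ 1 (fun y : ℝ × ℝ => g y.2) x :=
    fun x => (hg.comp contDiff_snd).contDiffAt
  have hCc : ∀ x : ℝ × ℝ, ContDiffAt ℝ 1 (fun y : ℝ × ℝ => cos y.2) x :=
    fun x => (contDiff_cos.comp contDiff_snd).contDiffAt
  have hCs : ∀ x : ℝ × ℝ, ContDiffAt ℝ 1 (fun y : ℝ × ℝ => sin y.2) x :=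
    fun x => (contDiff_sin.comp contDiff_snd).contDiffAt
  have hfC : ∀ x ∈ Icc A B ×ˢ Icc α β, ContDiffAt ℝ 1 f x := fun x hx =>
    (((hCw x hx).mul (hCg x)).mul contDiff_fst.contDiffAt).mul
      (contDiffAt_const.add (((hC1 x hx).mul (hCc x)).add ((hC2 x hx).mul (hCs x))))
  have hkC : ∀ x ∈ Icc A B ×ˢ Icc α β, ContDiffAt ℝ 1 k x := fun x hx =>
    ((hCw x hx).mul (hCg x)).mul ((((hC1 x hx).neg).mul (hCs x)).add ((hC2 x hx).mul (hCc x)))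
  have hi : ContinuousOn (fun x => fderiv ℝ f x (1, 0) + fderiv ℝ k x (0, 1))
      (Icc A B ×ˢ Icc α β) := fun x hx =>
    ((continuousAt_fderiv_apply (hfC x hx) _).add
      (continuousAt_fderiv_apply (hkC x hx) _)).continuousWithinAt
  have hInt : IntegrableOn (fun x => fderiv ℝ f x (1, 0) + fderiv ℝ k x (0, 1))
      (Icc A B ×ˢ Icc α β) := hi.integrableOn_compact (isCompact_Icc.prod isCompact_Icc)
  have key := integral2_divergence_prod_of_hasFDerivAt f k (fderiv ℝ f) (fderiv ℝ k) A α B β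
    (by rw [uIcc_of_le hAB, uIcc_of_le hαβ]
        exact fun x hx => (hfC x hx).continuousAt.continuousWithinAt)
    (by rw [uIcc_of_le hAB, uIcc_of_le hαβ]
        exact fun x hx => (hkC x hx).continuousAt.continuousWithinAt)
    (fun x hx => ((hfC x (by
        rw [min_eq_left hAB, max_eq_right hAB, min_eq_left hαβ, max_eq_right hαβ] at hx
        exact ⟨Ioo_subset_Icc_self hx.1, Ioo_subset_Icc_self hx.2⟩)).differentiableAt
        (by norm_num)).hasFDerivAt)
    (fun x hx => ((hkC x (by
        rw [min_eq_left hAB, max_eq_right hAB, min_eq_left hαβ, max_eq_right hαβ] at hx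
        exact ⟨Ioo_subset_Icc_self hx.1, Ioo_subset_Icc_self hx.2⟩)).differentiableAt
        (by norm_num)).hasFDerivAt)
    (by rw [uIcc_of_le hAB, uIcc_of_le hαβ]; exact hInt)
  have hz1 : ∫ x in A..B, k (x, β) = 0 := by
    rw [intervalIntegral.integral_congr (g := fun _ => (0 : ℝ))]
    · simp
    · intro ρ hρ
      rw [uIcc_of_le hAB] at hρ
      simp only [hk]
      rw [mul_assoc, h1 ρ hρ, mul_zero]
  have hz0 : ∫ x in A..B, k (x, α) = 0 := by
    rw [intervalIntegral.integral_congr (g := fun _ => (0 : ℝ))]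
    · simp
    · intro ρ hρ
      rw [uIcc_of_le hAB] at hρ
      simp only [hk]
      rw [mul_assoc, h0 ρ hρ, mul_zero]
  rw [hz1, hz0, sub_zero, zero_add] at key
  have hval : ∀ ρ ∈ Icc A B, ∀ θ ∈ Icc α β, fderiv ℝ f (ρ, θ) (1, 0) + fderiv ℝ k (ρ, θ) (0, 1)
      = w ρ * g θ * (ρ * dvg F1 F2 (Pol ρ θ) + κ)
      + ρ * deriv w ρ * g θ * (κ + Fnr F1 F2 ρ θ) + w ρ * deriv g θ * Ftg F1 F2 ρ θ := by
    intro ρ hρ θ hθ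
    have d1 := (hF1 ρ hρ θ hθ).differentiableAt (by norm_num)
    have d2 := (hF2 ρ hρ θ hθ).differentiableAt (by norm_num)
    have dw := ((hw ρ hρ).differentiableAt (by norm_num)).hasDerivAt
    have dg := ((hg.differentiable (by norm_num)) θ).hasDerivAt
    have e1 : fderiv ℝ f (ρ, θ) (1, 0) = deriv (fun r => f (r, θ)) ρ := by
      have hh : HasDerivAt (fun r : ℝ => ((r, θ) : ℝ × ℝ)) (1, 0) ρ :=
        (hasDerivAt_id ρ).prodMk (hasDerivAt_const ρ θ)
      exact ((((hfC (ρ, θ) ⟨hρ, hθ⟩).differentiableAt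
        (by norm_num)).hasFDerivAt).comp_hasDerivAt ρ hh).deriv.symm
    have e2 : fderiv ℝ k (ρ, θ) (0, 1) = deriv (fun s => k (ρ, s)) θ := by
      have hh : HasDerivAt (fun s : ℝ => ((ρ, s) : ℝ × ℝ)) (0, 1) θ :=
        (hasDerivAt_const θ ρ).prodMk (hasDerivAt_id θ)
      exact ((((hkC (ρ, θ) ⟨hρ, hθ⟩).differentiableAt
        (by norm_num)).hasFDerivAt).comp_hasDerivAt θ hh).deriv.symm
    have e3 := (((dw.mul_const (g θ)).mul (hasDerivAt_id ρ)).mul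
      ((((hasDerivAt_comp_Pol_fst d1).mul_const (cos θ)).add
        ((hasDerivAt_comp_Pol_fst d2).mul_const (sin θ))).const_add κ)).deriv
    have e4 := ((dg.const_mul (w ρ)).mul
      ((((hasDerivAt_comp_Pol_snd d1).neg.mul (hasDerivAt_sin θ))).add
        ((hasDerivAt_comp_Pol_snd d2).mul (hasDerivAt_cos θ)))).deriv
    rw [e1, e2]
    have e3' : deriv (fun r => f (r, θ)) ρ = _ := e3
    have e4' : deriv (fun s => k (ρ, s)) θ = _ := e4
    rw [e3', e4']
    simp only [Fnr, Ftg, dvg, id]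
    have hcs := sin_sq_add_cos_sq θ
    simp only [Pi.mul_apply, Pi.add_apply, Pi.neg_apply, id]
    linear_combination (w ρ * g θ * ρ * (pdx F1 (Pol ρ θ) + pdy F2 (Pol ρ θ))) * hcs
  have hmono : ∫ ρ in A..B, l ρ ≤
      ∫ ρ in A..B, ∫ θ in α..β, fderiv ℝ f (ρ, θ) (1, 0) + fderiv ℝ k (ρ, θ) (0, 1) := by
    apply intervalIntegral.integral_mono_on hAB hl
    · rw [intervalIntegrable_iff_integrableOn_Icc_of_le hAB]
      have h2 : Integrable (fun x : ℝ × ℝ => fderiv ℝ f x (1, 0) + fderiv ℝ k x (0, 1))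
          ((volume.restrict (Icc A B)).prod (volume.restrict (Icc α β))) := by
        rw [Measure.prod_restrict]; exact hInt
      have h3 := h2.integral_prod_left
      refine h3.congr (Eventually.of_forall fun ρ => ?_)
      simp only
      rw [intervalIntegral.integral_of_le hαβ, integral_Icc_eq_integral_Ioc]
    · intro ρ hρ
      refine (hle ρ hρ).trans (le_of_eq ?_)
      apply intervalIntegral.integral_congr
      intro θ hθ
      rw [uIcc_of_le hαβ] at hθ
      exact (hval ρ hρ θ hθ).symm
  exact hmono.trans (le_of_eq key)

/-! ### The field `∇u / W` of a graph -/

/-- First component of `∇u / W`. -/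
def X1 (u : ℝ × ℝ → ℝ) (p : ℝ × ℝ) : ℝ := pdx u p / Wgraph u p

/-- Second component of `∇u / W`. -/
def X2 (u : ℝ × ℝ → ℝ) (p : ℝ × ℝ) : ℝ := pdy u p / Wgraph u p

/-- The constant mean curvature equation in divergence form, `div (∇u / W) = 2H` on `Ω`. -/
def DivCMC (H : ℝ) (Ω : Set (ℝ × ℝ)) (u : ℝ × ℝ → ℝ) : Prop :=
  ContDiffOn ℝ 2 u Ω ∧ ∀ p ∈ Ω, dvg (X1 u) (X2 u) p = 2 * H

lemma W_sq (u : ℝ × ℝ → ℝ) (p : ℝ × ℝ) : Wgraph u p ^ 2 = 1 + pdx u p ^ 2 + pdy u p ^ 2 :=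
  Real.sq_sqrt (by positivity)

lemma one_le_W (u : ℝ × ℝ → ℝ) (p : ℝ × ℝ) : 1 ≤ Wgraph u p := by
  unfold Wgraph; rw [Real.one_le_sqrt]; nlinarith [sq_nonneg (pdx u p), sq_nonneg (pdy u p)]

lemma W_pos (u : ℝ × ℝ → ℝ) (p : ℝ × ℝ) : 0 < Wgraph u p := lt_of_lt_of_le one_pos (one_le_W u p)

lemma X_sq (u : ℝ × ℝ → ℝ) (p : ℝ × ℝ) :
    X1 u p ^ 2 + X2 u p ^ 2 = 1 - 1 / Wgraph u p ^ 2 := by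
  have := W_pos u p
  have h := W_sq u p
  unfold X1 X2
  field_simp
  linarith

lemma X_sq_le (u : ℝ × ℝ → ℝ) (p : ℝ × ℝ) : X1 u p ^ 2 + X2 u p ^ 2 ≤ 1 := by
  rw [X_sq]; have := W_pos u p
  have : 0 ≤ 1 / Wgraph u p ^ 2 := by positivity
  linarith

lemma contDiffAt_pd {u : ℝ × ℝ → ℝ} {p : ℝ × ℝ} (hu : ContDiffAt ℝ 2 u p) :
    ContDiffAt ℝ 1 (pdx u) p ∧ ContDiffAt ℝ 1 (pdy u) p := by
  have h : ContDiffAt ℝ 1 (fderiv ℝ u) p := hu.fderiv_right (by norm_num)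
  exact ⟨h.clm_apply contDiffAt_const, h.clm_apply contDiffAt_const⟩

lemma contDiffAt_W {u : ℝ × ℝ → ℝ} {p : ℝ × ℝ} (hu : ContDiffAt ℝ 2 u p) :
    ContDiffAt ℝ 1 (Wgraph u) p := by
  obtain ⟨h1, h2⟩ := contDiffAt_pd hu
  unfold Wgraph
  apply ContDiffAt.sqrt
  · exact (contDiffAt_const.add (h1.pow 2)).add (h2.pow 2)
  · positivity

lemma contDiffAt_X {u : ℝ × ℝ → ℝ} {p : ℝ × ℝ} (hu : ContDiffAt ℝ 2 u p) :
    ContDiffAt ℝ 1 (X1 u) p ∧ ContDiffAt ℝ 1 (X2 u) p := by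
  obtain ⟨h1, h2⟩ := contDiffAt_pd hu
  have h3 := contDiffAt_W hu
  exact ⟨h1.div h3 (W_pos u p).ne', h2.div h3 (W_pos u p).ne'⟩

lemma fderiv_W {u : ℝ × ℝ → ℝ} {p : ℝ × ℝ} (hu : ContDiffAt ℝ 2 u p) (v : ℝ × ℝ) :
    fderiv ℝ (Wgraph u) p v
      = (pdx u p * fderiv ℝ (pdx u) p v + pdy u p * fderiv ℝ (pdy u) p v) / Wgraph u p := by
  obtain ⟨h1, h2⟩ := contDiffAt_pd hu
  have d1 := (h1.differentiableAt (by norm_num)).hasFDerivAt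
  have d2 := (h2.differentiableAt (by norm_num)).hasFDerivAt
  have d3 := ((contDiffAt_W hu).differentiableAt (by norm_num)).hasFDerivAt
  have e1 := d3.pow 2
  have e2 := ((d1.pow 2).const_add 1).add (d2.pow 2)
  have e3 : (fun q => Wgraph u q ^ 2) = fun q => 1 + pdx u q ^ 2 + pdy u q ^ 2 :=
    funext fun q => W_sq u q
  have e4 : HasFDerivAt (fun q => Wgraph u q ^ 2) _ p := e1
  rw [e3] at e4
  have e5 := e4.unique e2
  have e6 := congrArg (fun A : ℝ × ℝ →L[ℝ] ℝ => A v) e5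
  simp at e6
  have hW := W_pos u p
  rw [eq_div_iff hW.ne']
  linarith

lemma fderiv_div_W {u f : ℝ × ℝ → ℝ} {p : ℝ × ℝ} (hu : ContDiffAt ℝ 2 u p)
    (hf : ContDiffAt ℝ 1 f p) (v : ℝ × ℝ) :
    fderiv ℝ (fun q => f q / Wgraph u q) p v
      = fderiv ℝ f p v / Wgraph u p - f p * fderiv ℝ (Wgraph u) p v / Wgraph u p ^ 2 := by
  have d1 := (hf.differentiableAt (by norm_num)).hasFDerivAt
  have d3 := ((contDiffAt_W hu).differentiableAt (by norm_num)).hasFDerivAt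
  have hW := W_pos u p
  have hX : DifferentiableAt ℝ (fun q => f q / Wgraph u q) p :=
    (hf.div (contDiffAt_W hu) hW.ne').differentiableAt (by norm_num)
  have e1 := hX.hasFDerivAt.mul d3
  have e2 : ((fun q => f q / Wgraph u q) * Wgraph u) = f := by
    funext q
    have := W_pos u q
    simp only [Pi.mul_apply]; field_simp
  rw [e2] at e1
  have e6 := congrArg (fun A : ℝ × ℝ →L[ℝ] ℝ => A v) (d1.unique e1)
  simp at e6
  rw [e6]
  field_simp
  ring

lemma divCMC_of_isCMC {H : ℝ} {Ω : Set (ℝ × ℝ)} {u : ℝ × ℝ → ℝ} (hΩ : IsOpen Ω)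
    (hu : IsCMCSolution H Ω u) : DivCMC H Ω u := by
  refine ⟨hu.1, fun p hp => ?_⟩
  have hc : ContDiffAt ℝ 2 u p := hu.1.contDiffAt (hΩ.mem_nhds hp)
  have heq := hu.2 p hp
  obtain ⟨h1, h2⟩ := contDiffAt_pd hc
  have hsymm : pdx (pdy u) p = pdy (pdx u) p := by
    have hs := hc.isSymmSndFDerivAt (by simp)
    have hd : DifferentiableAt ℝ (fderiv ℝ u) p :=
      (hc.fderiv_right (m := 1) (by norm_num)).differentiableAt (by norm_num)
    have e1 : pdx (pdy u) p = fderiv ℝ (fderiv ℝ u) p (1, 0) (0, 1) := by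
      unfold pdx pdy
      rw [fderiv_clm_apply hd (differentiableAt_const _)]; simp
    have e2 : pdy (pdx u) p = fderiv ℝ (fderiv ℝ u) p (0, 1) (1, 0) := by
      unfold pdx pdy
      rw [fderiv_clm_apply hd (differentiableAt_const _)]; simp
    rw [e1, e2]; exact hs _ _
  have hW := W_pos u p
  have hW2 := W_sq u p
  have hpow : (1 + pdx u p ^ 2 + pdy u p ^ 2) ^ ((3 : ℝ) / 2) = Wgraph u p ^ 3 := by
    rw [← hW2, ← Real.rpow_natCast, ← Real.rpow_natCast, ← Real.rpow_mul hW.le]; norm_num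
  rw [hpow] at heq
  have ex : pdx (X1 u) p = pdx (pdx u) p / Wgraph u p
      - pdx u p * ((pdx u p * pdx (pdx u) p + pdy u p * pdx (pdy u) p) / Wgraph u p)
        / Wgraph u p ^ 2 := by
    have := fderiv_div_W hc h1 (1, 0)
    rw [fderiv_W hc] at this
    exact this
  have ey : pdy (X2 u) p = pdy (pdy u) p / Wgraph u p
      - pdy u p * ((pdx u p * pdy (pdx u) p + pdy u p * pdy (pdy u) p) / Wgraph u p)
        / Wgraph u p ^ 2 := by
    have := fderiv_div_W hc h2 (0, 1)
    rw [fderiv_W hc] at this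
    exact this
  unfold dvg
  rw [ex, ey, hsymm]
  have heq' : (1 + pdy u p ^ 2) * pdx (pdx u) p - 2 * pdx u p * pdy u p * pdy (pdx u) p
      + (1 + pdx u p ^ 2) * pdy (pdy u) p = 2 * H * Wgraph u p ^ 3 := heq
  field_simp
  linear_combination heq' + (pdx (pdx u) p + pdy (pdy u) p) * hW2

/-- The constant mean curvature equation is invariant under the rigid motion
`x ↦ z + x₁ a + x₂ b`, with `a` a unit vector and `b = ± a^⊥` (orientation `ε = ± 1`); the radial
component of the field is read off in the moved frame. -/
lemma divCMC_comp {H : ℝ} {Ω : Set (ℝ × ℝ)} {u : ℝ × ℝ → ℝ} (hΩ : IsOpen Ω)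
    (hu : DivCMC H Ω u) (z : ℝ × ℝ) (a1 a2 ε : ℝ) (ha : a1 ^ 2 + a2 ^ 2 = 1) (hε : ε ^ 2 = 1)
    (T : ℝ × ℝ → ℝ × ℝ)
    (hT : T = fun x => (z.1 + x.1 * a1 + x.2 * (-ε * a2), z.2 + x.1 * a2 + x.2 * (ε * a1))) :
    DivCMC H (T ⁻¹' Ω) (u ∘ T) ∧ ∀ x ∈ T ⁻¹' Ω,
      X1 (u ∘ T) x = a1 * X1 u (T x) + a2 * X2 u (T x) ∧
      X2 (u ∘ T) x = -ε * a2 * X1 u (T x) + ε * a1 * X2 u (T x) := by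
  have hTC : ContDiff ℝ 2 T := by rw [hT]; fun_prop
  have hT' : ∀ x, HasFDerivAt T (fderiv ℝ T x) x := fun x =>
    (hTC.differentiable (by norm_num) x).hasFDerivAt
  have hTx : ∀ x, fderiv ℝ T x (1, 0) = (a1, a2) := by
    intro x
    have hh : HasDerivAt (fun r : ℝ => ((x.1 + r, x.2) : ℝ × ℝ)) (1, 0) 0 :=
      ((hasDerivAt_id (0 : ℝ)).const_add x.1).prodMk (hasDerivAt_const 0 x.2)
    have h0 : HasFDerivAt T (fderiv ℝ T x) ((fun r : ℝ => ((x.1 + r, x.2) : ℝ × ℝ)) 0) := by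
      simpa using hT' x
    have h1 := h0.comp_hasDerivAt (0 : ℝ) hh
    have h2 : HasDerivAt (T ∘ fun r : ℝ => ((x.1 + r, x.2) : ℝ × ℝ)) (a1, a2) 0 := by
      rw [hT]
      have := (((((hasDerivAt_id (0 : ℝ)).const_add x.1).mul_const a1).const_add z.1).add_const
        (x.2 * (-ε * a2))).prodMk
        (((((hasDerivAt_id (0 : ℝ)).const_add x.1).mul_const a2).const_add z.2).add_const
        (x.2 * (ε * a1)))
      simpa [Function.comp_def] using this
    exact h1.unique h2
  have hTy : ∀ x, fderiv ℝ T x (0, 1) = (-ε * a2, ε * a1) := by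
    intro x
    have hh : HasDerivAt (fun r : ℝ => ((x.1, x.2 + r) : ℝ × ℝ)) (0, 1) 0 :=
      (hasDerivAt_const 0 x.1).prodMk ((hasDerivAt_id (0 : ℝ)).const_add x.2)
    have h0 : HasFDerivAt T (fderiv ℝ T x) ((fun r : ℝ => ((x.1, x.2 + r) : ℝ × ℝ)) 0) := by
      simpa using hT' x
    have h1 := h0.comp_hasDerivAt (0 : ℝ) hh
    have h2 : HasDerivAt (T ∘ fun r : ℝ => ((x.1, x.2 + r) : ℝ × ℝ)) (-ε * a2, ε * a1) 0 := by
      rw [hT]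
      have := (((((hasDerivAt_id (0 : ℝ)).const_add x.2).mul_const (-ε * a2)).const_add
        (z.1 + x.1 * a1))).prodMk
        (((((hasDerivAt_id (0 : ℝ)).const_add x.2).mul_const (ε * a1)).const_add (z.2 + x.1 * a2)))
      simpa [Function.comp_def] using this
    exact h1.unique h2
  have hcomp : ∀ (f : ℝ × ℝ → ℝ) (x : ℝ × ℝ), DifferentiableAt ℝ f (T x) →
      pdx (f ∘ T) x = pdx f (T x) * a1 + pdy f (T x) * a2 ∧
      pdy (f ∘ T) x = pdx f (T x) * (-ε * a2) + pdy f (T x) * (ε * a1) := by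
    intro f x hf
    have h := (hf.hasFDerivAt.comp x (hT' x)).fderiv
    constructor
    · unfold pdx; rw [h, ContinuousLinearMap.comp_apply, hTx, fderiv_split]; rfl
    · unfold pdy; rw [h, ContinuousLinearMap.comp_apply, hTy, fderiv_split]; rfl
  have hcu : ∀ x ∈ T ⁻¹' Ω, ContDiffAt ℝ 2 u (T x) := fun x hx =>
    hu.1.contDiffAt (hΩ.mem_nhds hx)
  have hX : ∀ x ∈ T ⁻¹' Ω,
      X1 (u ∘ T) x = a1 * X1 u (T x) + a2 * X2 u (T x) ∧
      X2 (u ∘ T) x = -ε * a2 * X1 u (T x) + ε * a1 * X2 u (T x) := by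
    intro x hx
    obtain ⟨h1, h2⟩ := hcomp u x ((hcu x hx).differentiableAt (by norm_num))
    have hWW : Wgraph (u ∘ T) x = Wgraph u (T x) := by
      unfold Wgraph; rw [h1, h2]; congr 1
      linear_combination (pdx u (T x) ^ 2 + pdy u (T x) ^ 2) * ha +
        (pdx u (T x) * a2 - pdy u (T x) * a1) ^ 2 * hε
    unfold X1 X2
    rw [hWW, h1, h2]
    constructor <;> ring
  have hopen : IsOpen (T ⁻¹' Ω) := hΩ.preimage hTC.continuous
  refine ⟨⟨hu.1.comp hTC.contDiffOn (fun x hx => hx), fun x hx => ?_⟩, hX⟩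
  obtain ⟨c1, c2⟩ := contDiffAt_X (hcu x hx)
  have d1 := c1.differentiableAt (n := 1) (by norm_num)
  have d2 := c2.differentiableAt (n := 1) (by norm_num)
  have E1 : X1 (u ∘ T) =ᶠ[nhds x] (fun y => a1 * X1 u y + a2 * X2 u y) ∘ T := by
    filter_upwards [hopen.mem_nhds hx] with y hy using (hX y hy).1
  have E2 : X2 (u ∘ T) =ᶠ[nhds x] (fun y => -ε * a2 * X1 u y + ε * a1 * X2 u y) ∘ T := by
    filter_upwards [hopen.mem_nhds hx] with y hy using (hX y hy).2
  have lin : ∀ (c d : ℝ) (v : ℝ × ℝ), fderiv ℝ (fun y => c * X1 u y + d * X2 u y) (T x) v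
      = c * fderiv ℝ (X1 u) (T x) v + d * fderiv ℝ (X2 u) (T x) v := by
    intro c d v
    have := ((d1.hasFDerivAt.const_mul c).add (d2.hasFDerivAt.const_mul d)).fderiv
    have h' : fderiv ℝ (fun y => c * X1 u y + d * X2 u y) (T x) = _ := this
    rw [h']; simp
  have dl : ∀ c d : ℝ, DifferentiableAt ℝ (fun y => c * X1 u y + d * X2 u y) (T x) := fun c d =>
    (d1.const_mul c).add (d2.const_mul d)
  have hd := hu.2 (T x) hx
  unfold dvg at hd ⊢
  have P1 : pdx (X1 (u ∘ T)) x = pdx ((fun y => a1 * X1 u y + a2 * X2 u y) ∘ T) x := by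
    unfold pdx; rw [E1.fderiv_eq]
  have P2 : pdy (X2 (u ∘ T)) x = pdy ((fun y => -ε * a2 * X1 u y + ε * a1 * X2 u y) ∘ T) x := by
    unfold pdy; rw [E2.fderiv_eq]
  rw [P1, P2, (hcomp _ x (dl _ _)).1, (hcomp _ x (dl _ _)).2]
  unfold pdx pdy at hd ⊢
  rw [lin, lin, lin, lin]
  linear_combination hd + (fderiv ℝ (X1 u) (T x) (1, 0) + fderiv ℝ (X2 u) (T x) (0, 1)) * ha
    + (fderiv ℝ (X1 u) (T x) (1, 0) * a2 ^ 2 + fderiv ℝ (X2 u) (T x) (0, 1) * a1 ^ 2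
      - a1 * a2 * (fderiv ℝ (X1 u) (T x) (0, 1) + fderiv ℝ (X2 u) (T x) (1, 0))) * hε

lemma continuousAt_snd_comp {f : ℝ × ℝ → ℝ} {ρ θ : ℝ} (hf : ContinuousAt f (Pol ρ θ)) :
    ContinuousAt (fun s => f (Pol ρ s)) θ := by
  have h : Continuous (fun s => Pol ρ s) := by unfold Pol; fun_prop
  exact ContinuousAt.comp (f := fun s => Pol ρ s) hf h.continuousAt

lemma continuousAt_Fnr {F1 F2 : ℝ × ℝ → ℝ} {ρ θ : ℝ} (h1 : ContinuousAt F1 (Pol ρ θ))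
    (h2 : ContinuousAt F2 (Pol ρ θ)) : ContinuousAt (fun s => Fnr F1 F2 ρ s) θ :=
  ((continuousAt_snd_comp h1).mul continuous_cos.continuousAt).add
    ((continuousAt_snd_comp h2).mul continuous_sin.continuousAt)

lemma continuousAt_Ftg {F1 F2 : ℝ × ℝ → ℝ} {ρ θ : ℝ} (h1 : ContinuousAt F1 (Pol ρ θ))
    (h2 : ContinuousAt F2 (Pol ρ θ)) : ContinuousAt (fun s => Ftg F1 F2 ρ s) θ :=
  ((continuousAt_snd_comp h1).neg.mul continuous_sin.continuousAt).add
    ((continuousAt_snd_comp h2).mul continuous_cos.continuousAt)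

lemma integrand_cont (F1 F2 : ℝ × ℝ → ℝ) (g : ℝ → ℝ) (κ c d ρ α β : ℝ)
    (hF1 : ∀ θ ∈ Icc α β, ContDiffAt ℝ 1 F1 (Pol ρ θ))
    (hF2 : ∀ θ ∈ Icc α β, ContDiffAt ℝ 1 F2 (Pol ρ θ)) (hg : ContDiff ℝ 1 g) :
    ContinuousOn (fun θ => c * g θ * (ρ * dvg F1 F2 (Pol ρ θ) + κ)
      + ρ * d * g θ * (κ + Fnr F1 F2 ρ θ) + c * deriv g θ * Ftg F1 F2 ρ θ) (Icc α β) := by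
  intro θ hθ
  apply ContinuousAt.continuousWithinAt
  have c1 := (hF1 θ hθ).continuousAt
  have c2 := (hF2 θ hθ).continuousAt
  have cd : ContinuousAt (fun s => dvg F1 F2 (Pol ρ s)) θ :=
    (continuousAt_snd_comp (continuousAt_fderiv_apply (hF1 θ hθ) (1, 0))).add
      (continuousAt_snd_comp (continuousAt_fderiv_apply (hF2 θ hθ) (0, 1)))
  have cg : ContinuousAt g θ := hg.continuous.continuousAt
  have cg' : ContinuousAt (deriv g) θ := (hg.continuous_deriv (by norm_num)).continuousAt
  have cn := continuousAt_Fnr c1 c2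
  have ct := continuousAt_Ftg c1 c2
  fun_prop

/-- `polar_div` with a constant lower bound for the weighted divergence. -/
lemma polar_div_const (F1 F2 : ℝ × ℝ → ℝ) (w g : ℝ → ℝ) (κ A B α β K : ℝ) (hAB : A ≤ B)
    (hαβ : α ≤ β)
    (hF1 : ∀ ρ ∈ Icc A B, ∀ θ ∈ Icc α β, ContDiffAt ℝ 1 F1 (Pol ρ θ))
    (hF2 : ∀ ρ ∈ Icc A B, ∀ θ ∈ Icc α β, ContDiffAt ℝ 1 F2 (Pol ρ θ))
    (hw : ∀ ρ ∈ Icc A B, ContDiffAt ℝ 1 w ρ) (hg : ContDiff ℝ 1 g)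
    (h0 : ∀ ρ ∈ Icc A B, g α * Ftg F1 F2 ρ α = 0)
    (h1 : ∀ ρ ∈ Icc A B, g β * Ftg F1 F2 ρ β = 0)
    (hle : ∀ ρ ∈ Icc A B, ∀ θ ∈ Icc α β, -K ≤ w ρ * g θ * (ρ * dvg F1 F2 (Pol ρ θ) + κ)
      + ρ * deriv w ρ * g θ * (κ + Fnr F1 F2 ρ θ) + w ρ * deriv g θ * Ftg F1 F2 ρ θ) :
    -K * ((β - α) * (B - A)) ≤ (∫ θ in α..β, w B * g θ * B * (κ + Fnr F1 F2 B θ))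
      - ∫ θ in α..β, w A * g θ * A * (κ + Fnr F1 F2 A θ) := by
  have := polar_div F1 F2 w g (fun _ => -K * (β - α)) κ A B α β hAB hαβ hF1 hF2 hw hg h0 h1
    intervalIntegrable_const (fun ρ hρ => ?_)
  · rw [intervalIntegral.integral_const, smul_eq_mul] at this
    linarith
  · have hc := integrand_cont F1 F2 g κ (w ρ) (deriv w ρ) ρ α β (hF1 ρ hρ) (hF2 ρ hρ) hg
    have := intervalIntegral.integral_mono_on (μ := volume) (f := fun _ => -K) hαβ
      intervalIntegrable_const
      (hc.intervalIntegrable_of_Icc hαβ) (hle ρ hρ)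
    rw [intervalIntegral.integral_const, smul_eq_mul] at this
    linarith

/-! ### Auxiliary functions of one variable -/

/-- The `C¹` function `(s⁺)²`. -/
def sqp (s : ℝ) : ℝ := (max s 0) ^ 2

lemma sqp_nonneg (s : ℝ) : 0 ≤ sqp s := sq_nonneg _

lemma sqp_of_nonpos {s : ℝ} (h : s ≤ 0) : sqp s = 0 := by simp [sqp, h]

lemma hasDerivAt_sqp (s : ℝ) : HasDerivAt sqp (2 * max s 0) s := by
  have hne : ∀ y : ℝ, y ≠ 0 → HasDerivAt sqp (2 * max y 0) y := by
    intro y hy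
    rcases lt_or_gt_of_ne hy with h | h
    · rw [max_eq_right h.le, mul_zero]
      refine (hasDerivAt_const y (0 : ℝ)).congr_of_eventuallyEq ?_
      filter_upwards [Iio_mem_nhds h] with z hz using sqp_of_nonpos (le_of_lt (mem_Iio.1 hz))
    · rw [max_eq_left h.le]
      have : HasDerivAt (fun z : ℝ => z ^ 2) (2 * y) y := by simpa using hasDerivAt_pow 2 y
      refine this.congr_of_eventuallyEq ?_
      filter_upwards [Ioi_mem_nhds h] with z hz
      simp [sqp, max_eq_left (le_of_lt (mem_Ioi.1 hz))]
  by_cases hs : s = 0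
  · subst hs
    refine hasDerivAt_of_hasDerivAt_of_ne (g := fun y => 2 * max y 0) (fun y hy => hne y hy) ?_ ?_
    · unfold sqp; fun_prop
    · fun_prop
  · exact hne s hs

lemma contDiff_sqp : ContDiff ℝ 1 sqp := by
  rw [contDiff_one_iff_deriv]
  refine ⟨fun s => (hasDerivAt_sqp s).differentiableAt, ?_⟩
  have : deriv sqp = fun s => 2 * max s 0 := funext fun s => (hasDerivAt_sqp s).deriv
  rw [this]; fun_prop

/-- A `C¹` nondecreasing truncation: `0` on `(-∞, c]`, with values in `[0, 1)` and at least `1/2`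
on `[c + 1, ∞)`, of slope at most one. -/
def phi (c s : ℝ) : ℝ := sqp (s - c) / (1 + sqp (s - c))

/-- The derivative of `phi c`. -/
def phi' (c s : ℝ) : ℝ := 2 * max (s - c) 0 / (1 + sqp (s - c)) ^ 2

lemma hasDerivAt_phi (c s : ℝ) : HasDerivAt (phi c) (phi' c s) s := by
  have h1 : HasDerivAt (fun s => sqp (s - c)) (2 * max (s - c) 0) s := by
    simpa [Function.comp_def] using
      (hasDerivAt_sqp (s - c)).comp s ((hasDerivAt_id s).sub_const c)
  have hpos : (1 + sqp (s - c)) ≠ 0 := by have := sqp_nonneg (s - c); positivity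
  have := h1.div (h1.const_add 1) hpos
  exact this.congr_deriv (by unfold phi'; ring)

lemma contDiff_phi (c : ℝ) : ContDiff ℝ 1 (phi c) := by
  have h1 : ContDiff ℝ 1 (fun s => sqp (s - c)) := contDiff_sqp.comp (by fun_prop)
  exact h1.div (contDiff_const.add h1) fun s => by have := sqp_nonneg (s - c); positivity

lemma phi_nonneg (c s : ℝ) : 0 ≤ phi c s := by
  have := sqp_nonneg (s - c); unfold phi; positivity

lemma phi_le_one (c s : ℝ) : phi c s ≤ 1 := by
  have := sqp_nonneg (s - c); unfold phi; rw [div_le_one (by positivity)]; linarith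

lemma phi_of_le {c s : ℝ} (h : s ≤ c) : phi c s = 0 := by
  unfold phi; rw [sqp_of_nonpos (by linarith)]; simp

lemma phi'_nonneg (c s : ℝ) : 0 ≤ phi' c s := by
  have := sqp_nonneg (s - c); have := le_max_right (s - c) 0; unfold phi'; positivity

lemma phi'_le_one (c s : ℝ) : phi' c s ≤ 1 := by
  have := le_max_right (s - c) 0
  unfold phi' sqp
  rw [div_le_one (by positivity)]
  set m := max (s - c) 0
  nlinarith [sq_nonneg (m - 1), sq_nonneg (m ^ 2)]

lemma lt_of_phi_lt {c s : ℝ} (h : phi c s < 1 / 2) : s < c + 1 := by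
  by_contra hs
  push Not at hs
  have hm : 1 ≤ max (s - c) 0 := le_trans (by linarith) (le_max_left _ _)
  have h1 : 1 ≤ sqp (s - c) := by unfold sqp; nlinarith
  unfold phi at h
  rw [div_lt_iff₀ (by linarith)] at h
  linarith

/-- The parabola on `[α, β]`, of maximum one, whose squared positive part is the angular cutoff. -/
def par (α β θ : ℝ) : ℝ := 4 * (θ - α) * (β - θ) / (β - α) ^ 2

/-- A `C¹` angular cutoff with support `[α, β]`. -/
def bump (α β θ : ℝ) : ℝ := sqp (par α β θ)

lemma hasDerivAt_par (α β θ : ℝ) :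
    HasDerivAt (par α β) (4 * (α + β - 2 * θ) / (β - α) ^ 2) θ := by
  have := ((((hasDerivAt_id θ).sub_const α).const_mul 4).mul
    ((hasDerivAt_id θ).const_sub β)).div_const ((β - α) ^ 2)
  exact this.congr_deriv (by simp; ring)

lemma hasDerivAt_bump (α β θ : ℝ) : HasDerivAt (bump α β)
    (2 * max (par α β θ) 0 * (4 * (α + β - 2 * θ) / (β - α) ^ 2)) θ :=
  (hasDerivAt_sqp _).comp θ (hasDerivAt_par α β θ)

lemma contDiff_bump (α β : ℝ) : ContDiff ℝ 1 (bump α β) :=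
  contDiff_sqp.comp (by unfold par; fun_prop)

lemma bump_nonneg (α β θ : ℝ) : 0 ≤ bump α β θ := sqp_nonneg _

lemma par_le_one {α β : ℝ} (h : α < β) (θ : ℝ) : par α β θ ≤ 1 := by
  unfold par
  have : 0 < β - α := by linarith
  rw [div_le_one (by positivity)]
  nlinarith [sq_nonneg (α + β - 2 * θ)]

lemma bump_le_one {α β : ℝ} (h : α < β) (θ : ℝ) : bump α β θ ≤ 1 := by
  unfold bump sqp
  have h1 := par_le_one h θ
  have h2 := le_max_right (par α β θ) 0
  have h3 : max (par α β θ) 0 ≤ 1 := max_le h1 zero_le_one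
  nlinarith

lemma par_nonpos {α β θ : ℝ} (h : α < β) (hθ : θ ≤ α ∨ β ≤ θ) : par α β θ ≤ 0 := by
  unfold par
  apply div_nonpos_of_nonpos_of_nonneg _ (sq_nonneg _)
  rcases hθ with h' | h'
  · nlinarith [mul_nonneg (sub_nonneg.2 h') (sub_nonneg.2 (h'.trans h.le))]
  · nlinarith [mul_nonneg (sub_nonneg.2 h') (sub_nonneg.2 (h.le.trans h'))]

lemma bump_eq_zero {α β θ : ℝ} (h : α < β) (hθ : θ ≤ α ∨ β ≤ θ) : bump α β θ = 0 :=
  sqp_of_nonpos (par_nonpos h hθ)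

lemma abs_par' {α β θ : ℝ} (h : α < β) (hθ : θ ∈ Icc α β) :
    |4 * (α + β - 2 * θ) / (β - α) ^ 2| ≤ 4 / (β - α) := by
  have h0 : 0 < β - α := by linarith
  rw [abs_div, abs_of_nonneg (sq_nonneg (β - α)), div_le_div_iff₀ (by positivity) h0, abs_mul]
  have : |α + β - 2 * θ| ≤ β - α := by rw [abs_le]; constructor <;> linarith [hθ.1, hθ.2]
  rw [abs_of_pos (by norm_num : (0:ℝ) < 4)]
  nlinarith

lemma abs_deriv_bump {α β : ℝ} (h : α < β) (θ : ℝ) : |deriv (bump α β) θ| ≤ 8 / (β - α) := by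
  have h0 : 0 < β - α := by linarith
  rw [(hasDerivAt_bump α β θ).deriv]
  by_cases hθ : θ ∈ Icc α β
  · have h1 := abs_par' h hθ
    have h2 := le_max_right (par α β θ) 0
    have h3 : max (par α β θ) 0 ≤ 1 := max_le (par_le_one h θ) zero_le_one
    rw [abs_mul, abs_of_nonneg (by positivity)]
    have : (8:ℝ) / (β - α) = 2 * 1 * (4 / (β - α)) := by ring
    rw [this]
    gcongr
  · have : par α β θ ≤ 0 := by
      apply par_nonpos h
      by_contra hc
      push Not at hc
      exact hθ ⟨hc.1.le, hc.2.le⟩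
    rw [max_eq_right this]; simp; positivity

lemma integral_bump {α β : ℝ} (h : α < β) : ∫ θ in α..β, bump α β θ = 8 / 15 * (β - α) := by
  have h0 : 0 < β - α := by linarith
  have e : ∫ θ in α..β, bump α β θ = ∫ θ in α..β, 16 / (β - α) ^ 4 *
      ((β - α) ^ 2 * (θ - α) ^ 2 - 2 * (β - α) * (θ - α) ^ 3 + (θ - α) ^ 4) := by
    apply intervalIntegral.integral_congr
    intro θ hθ
    rw [uIcc_of_le h.le] at hθ
    have hp : 0 ≤ par α β θ := by
      unfold par
      have := sub_nonneg.2 hθ.1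
      have := sub_nonneg.2 hθ.2
      positivity
    simp only [bump, sqp]
    rw [max_eq_left hp]; unfold par
    field_simp
    ring
  rw [e]
  have hd : ∀ θ ∈ uIcc α β, HasDerivAt (fun θ : ℝ => 16 / (β - α) ^ 4 *
      ((β - α) ^ 2 * ((θ - α) ^ 3 / 3) - 2 * (β - α) * ((θ - α) ^ 4 / 4) + (θ - α) ^ 5 / 5))
      (16 / (β - α) ^ 4 *
      ((β - α) ^ 2 * (θ - α) ^ 2 - 2 * (β - α) * (θ - α) ^ 3 + (θ - α) ^ 4)) θ := by
    intro θ _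
    have hi := (hasDerivAt_id θ).sub_const α
    have := (((((hi.pow 3).div_const 3).const_mul ((β - α) ^ 2)).sub
      (((hi.pow 4).div_const 4).const_mul (2 * (β - α)))).add
      ((hi.pow 5).div_const 5)).const_mul (16 / (β - α) ^ 4)
    exact this.congr_deriv (by simp)
  rw [intervalIntegral.integral_eq_sub_of_hasDerivAt hd
    (Continuous.intervalIntegrable (by fun_prop) _ _)]
  simp only [sub_self]
  field_simp
  ring

/-! ### Pointwise inequalities for `∇u / W` in polar components -/

lemma nr_tg_sq (F1 F2 : ℝ × ℝ → ℝ) (ρ θ : ℝ) :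
    Fnr F1 F2 ρ θ ^ 2 + Ftg F1 F2 ρ θ ^ 2 = F1 (Pol ρ θ) ^ 2 + F2 (Pol ρ θ) ^ 2 := by
  unfold Fnr Ftg
  linear_combination (F1 (Pol ρ θ) ^ 2 + F2 (Pol ρ θ) ^ 2) * sin_sq_add_cos_sq θ

/-- Radial component of `∇u / W`. -/
def Xn (u : ℝ × ℝ → ℝ) (ρ θ : ℝ) : ℝ := Fnr (X1 u) (X2 u) ρ θ

/-- Angular component of `∇u / W`. -/
def Xt (u : ℝ × ℝ → ℝ) (ρ θ : ℝ) : ℝ := Ftg (X1 u) (X2 u) ρ θ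

lemma Xn_sq (u : ℝ × ℝ → ℝ) (ρ θ : ℝ) :
    Xn u ρ θ ^ 2 + Xt u ρ θ ^ 2 = 1 - 1 / Wgraph u (Pol ρ θ) ^ 2 := by
  unfold Xn Xt; rw [nr_tg_sq, X_sq]

lemma abs_Xn_le (u : ℝ × ℝ → ℝ) (ρ θ : ℝ) : |Xn u ρ θ| ≤ 1 := by
  have h := Xn_sq u ρ θ
  have : 0 ≤ 1 / Wgraph u (Pol ρ θ) ^ 2 := by positivity
  rw [abs_le_one_iff_mul_self_le_one]
  nlinarith [sq_nonneg (Xt u ρ θ)]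

lemma abs_Xt_le (u : ℝ × ℝ → ℝ) (ρ θ : ℝ) : |Xt u ρ θ| ≤ 1 := by
  have h := Xn_sq u ρ θ
  have : 0 ≤ 1 / Wgraph u (Pol ρ θ) ^ 2 := by positivity
  rw [abs_le_one_iff_mul_self_le_one]
  nlinarith [sq_nonneg (Xn u ρ θ)]

lemma one_sub_Xn_nonneg (u : ℝ × ℝ → ℝ) (ρ θ : ℝ) : 0 ≤ 1 - Xn u ρ θ := by
  have := (abs_le.1 (abs_Xn_le u ρ θ)).2; linarith

lemma Xt_sq_le (u : ℝ × ℝ → ℝ) (ρ θ : ℝ) : Xt u ρ θ ^ 2 ≤ 2 * (1 - Xn u ρ θ) := by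
  have h := Xn_sq u ρ θ
  have h0 : 0 ≤ 1 / Wgraph u (Pol ρ θ) ^ 2 := by positivity
  nlinarith [sq_nonneg (1 - Xn u ρ θ)]

lemma inv_W_sq_le (u : ℝ × ℝ → ℝ) (ρ θ : ℝ) :
    1 / Wgraph u (Pol ρ θ) ^ 2 ≤ 2 * (1 - Xn u ρ θ) := by
  have h := Xn_sq u ρ θ
  nlinarith [sq_nonneg (1 - Xn u ρ θ), sq_nonneg (Xt u ρ θ)]

/-- Where the radial component of `∇u / W` is close to one, the slope is large. -/
lemma W_ge (u : ℝ × ℝ → ℝ) (ρ θ lam : ℝ) (hl : 0 < lam) :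
    3 * lam / 2 - lam ^ 3 * (1 - Xn u ρ θ) ≤ Wgraph u (Pol ρ θ) := by
  have hW := W_pos u (Pol ρ θ)
  have h1 := inv_W_sq_le u ρ θ
  set W := Wgraph u (Pol ρ θ)
  have h2 : 3 * lam / 2 - lam ^ 3 * (1 / W ^ 2) / 2 ≤ W := by
    have : 0 ≤ (lam - W) ^ 2 * (lam + 2 * W) := by positivity
    rw [← sub_nonneg]
    have e : W - (3 * lam / 2 - lam ^ 3 * (1 / W ^ 2) / 2)
        = (lam - W) ^ 2 * (lam + 2 * W) / (2 * W ^ 2) := by field_simp; ring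
    rw [e]; positivity
  have h3 : lam ^ 3 * (1 / W ^ 2) ≤ lam ^ 3 * (2 * (1 - Xn u ρ θ)) := by gcongr
  linarith

lemma DivCMC.contDiffAt {H : ℝ} {Ω : Set (ℝ × ℝ)} {u : ℝ × ℝ → ℝ} (hΩ : IsOpen Ω)
    (hu : DivCMC H Ω u) {p : ℝ × ℝ} (hp : p ∈ Ω) : ContDiffAt ℝ 2 u p :=
  hu.1.contDiffAt (hΩ.mem_nhds hp)

lemma continuousAt_Xn {H : ℝ} {Ω : Set (ℝ × ℝ)} {u : ℝ × ℝ → ℝ} (hΩ : IsOpen Ω)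
    (hu : DivCMC H Ω u) {ρ θ : ℝ} (hp : Pol ρ θ ∈ Ω) : ContinuousAt (Xn u ρ) θ := by
  have hX := contDiffAt_X (hu.contDiffAt hΩ hp)
  exact continuousAt_Fnr hX.1.continuousAt hX.2.continuousAt

/-! ### Propagation of the defect `1 - X·n` off the circle -/

/-- The defect of the radial component of `∇u / W`, averaged with the angular cutoff over the arc
of radius `ρ`. -/
def Bq (u : ℝ × ℝ → ℝ) (α β ρ : ℝ) : ℝ := ∫ θ in α..β, bump α β θ * ρ * (1 - Xn u ρ θ)

/-- The averaged defect grows at most quadratically with the distance to the circle of radius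
`R = 1/(2H)`: a Caccioppoli type argument with the weight `1/(s + ρ - R)`. -/
lemma strip_bound {H : ℝ} (hH : 0 < H) {Ω : Set (ℝ × ℝ)} (hΩ : IsOpen Ω) {u : ℝ × ℝ → ℝ}
    (hu : DivCMC H Ω u) {R α β s t : ℝ} (hR : R = 1 / (2 * H)) (hαβ : α < β) (hs : 0 < s)
    (ht : 0 ≤ t) (hbox : ∀ ρ ∈ Icc R (R + t), ∀ θ ∈ Icc α β, Pol ρ θ ∈ Ω) :
    Bq u α β (R + t) / (s + t) ≤ Bq u α β R / s + 32 / ((β - α) * R) * t := by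
  have hRpos : 0 < R := by rw [hR]; positivity
  have hD : 0 < β - α := by linarith
  have hX : ∀ ρ ∈ Icc R (R + t), ∀ θ ∈ Icc α β, ContDiffAt ℝ 1 (X1 u) (Pol ρ θ) ∧
      ContDiffAt ℝ 1 (X2 u) (Pol ρ θ) := fun ρ hρ θ hθ =>
    contDiffAt_X (hu.contDiffAt hΩ (hbox ρ hρ θ hθ))
  have hdw : ∀ ρ ∈ Icc R (R + t), HasDerivAt (fun ρ => (s + ρ - R)⁻¹) (-((s + ρ - R)⁻¹ ^ 2)) ρ := by
    intro ρ hρ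
    have hne : s + ρ - R ≠ 0 := by have := hρ.1; intro h; linarith
    have := (((hasDerivAt_id ρ).const_add s).sub_const R).inv hne
    exact this.congr_deriv (by simp [div_eq_mul_inv])
  have key := polar_div_const (X1 u) (X2 u) (fun ρ => (s + ρ - R)⁻¹) (bump α β) (-1) R (R + t) α β
    (32 / ((β - α) ^ 2 * R)) (by linarith) hαβ.le (fun ρ hρ θ hθ => (hX ρ hρ θ hθ).1)
    (fun ρ hρ θ hθ => (hX ρ hρ θ hθ).2)
    (fun ρ hρ => by
      have hne : s + ρ - R ≠ 0 := by have := hρ.1; intro h; linarith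
      exact ContDiffAt.inv (by fun_prop) hne)
    (contDiff_bump α β)
    (fun ρ _ => by rw [bump_eq_zero hαβ (Or.inl le_rfl), zero_mul])
    (fun ρ _ => by rw [bump_eq_zero hαβ (Or.inr le_rfl), zero_mul])
    (fun ρ hρ θ hθ => ?_)
  · have e1 : (∫ θ in α..β, (s + (R + t) - R)⁻¹ * bump α β θ * (R + t) *
        (-1 + Fnr (X1 u) (X2 u) (R + t) θ)) = - (Bq u α β (R + t) / (s + t)) := by
      unfold Bq
      rw [div_eq_mul_inv, mul_comm, ← intervalIntegral.integral_const_mul,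
        ← intervalIntegral.integral_neg]
      congr 1; funext θ
      unfold Xn
      rw [show s + (R + t) - R = s + t by ring]; ring
    have e2 : (∫ θ in α..β, (s + R - R)⁻¹ * bump α β θ * R *
        (-1 + Fnr (X1 u) (X2 u) R θ)) = - (Bq u α β R / s) := by
      unfold Bq
      rw [div_eq_mul_inv, mul_comm, ← intervalIntegral.integral_const_mul,
        ← intervalIntegral.integral_neg]
      congr 1; funext θ
      unfold Xn
      rw [show s + R - R = s by ring]; ring
    rw [e1, e2] at key
    have e3 : 32 / ((β - α) * R) * t = 32 / ((β - α) ^ 2 * R) * ((β - α) * (R + t - R)) := by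
      field_simp; ring
    rw [e3]
    linarith
  · rw [(hdw ρ hρ).deriv, hu.2 _ (hbox ρ hρ θ hθ), (hasDerivAt_bump α β θ).deriv]
    have hw : 0 < (s + ρ - R)⁻¹ := by have := hρ.1; apply inv_pos.2; linarith
    have hq := abs_par' hαβ hθ
    have hε := one_sub_Xn_nonneg u ρ θ
    have ht2 := Xt_sq_le u ρ θ
    have hq0 := le_max_right (par α β θ) 0
    change -_ ≤ (s + ρ - R)⁻¹ * (max (par α β θ) 0) ^ 2 * _ + _ * _ * (max (par α β θ) 0) ^ 2 *
      (-1 + Xn u ρ θ) + _ * _ * Xt u ρ θ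
    set w := (s + ρ - R)⁻¹
    set q := max (par α β θ) 0
    set q' := 4 * (α + β - 2 * θ) / (β - α) ^ 2
    set τ := Xt u ρ θ
    set ε := 1 - Xn u ρ θ with hεd
    have hXn : -1 + Xn u ρ θ = -ε := by rw [hεd]; ring
    rw [hXn]
    have hρ1 : R ≤ ρ := hρ.1
    have h1 : 0 ≤ w * q ^ 2 * (ρ * (2 * H) + -1) := by
      have : 0 ≤ ρ * (2 * H) + -1 := by
        have : R * (2 * H) = 1 := by rw [hR]; field_simp
        nlinarith
      positivity
    have hq2 : q' ^ 2 ≤ 16 / (β - α) ^ 2 := by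
      calc q' ^ 2 ≤ (4 / (β - α)) ^ 2 := by
            rw [← sq_abs]; gcongr
        _ = _ := by rw [div_pow]; norm_num
    -- completing the square in `w * q * τ`
    have h2 : -(2 * q' ^ 2 / R) ≤ ρ * w ^ 2 * q ^ 2 * ε + w * (2 * q * q') * τ := by
      have ha : R * (w * q) ^ 2 * (τ ^ 2 / 2) ≤ ρ * (w * q) ^ 2 * ε := by
        have : τ ^ 2 / 2 ≤ ε := by linarith
        have hρ0 : 0 < ρ := by linarith
        gcongr
      have hb : 0 ≤ (R * (w * q * τ) + 2 * q') ^ 2 / (2 * R) := by positivity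
      have e : (R * (w * q * τ) + 2 * q') ^ 2 / (2 * R)
          = R * (w * q) ^ 2 * (τ ^ 2 / 2) + w * (2 * q * q') * τ + 2 * q' ^ 2 / R := by
        field_simp; ring
      nlinarith
    have h3 : 2 * q' ^ 2 / R ≤ 32 / ((β - α) ^ 2 * R) := by
      have e : 32 / ((β - α) ^ 2 * R) = 2 * (16 / (β - α) ^ 2) / R := by field_simp; norm_num
      rw [e]; gcongr
    nlinarith

/-! ### The truncated test field -/

/-- Cutoff `((h - e·y)⁺)²`, where `y = p - (R, 0)`. -/
def zet (e1 e2 R h : ℝ) (p : ℝ × ℝ) : ℝ := sqp (h - (e1 * (p.1 - R) + e2 * p.2))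

/-- One component (`X` a component of `∇u / W`, `e` the same component of the unit vector
`(e₁, e₂)`) of the test field: `ζ φ(σ(u - u₀)) (σ X - e)` on `Ω`, extended by zero. -/
def tfld (Ω : Set (ℝ × ℝ)) (u : ℝ × ℝ → ℝ) (σ e1 e2 R h c u0 : ℝ) (X : ℝ × ℝ → ℝ) (e : ℝ) :
    ℝ × ℝ → ℝ :=
  Ω.indicator fun p => zet e1 e2 R h p * phi c (σ * (u p - u0)) * (σ * X p - e)

lemma zet_nonneg (e1 e2 R h : ℝ) (p : ℝ × ℝ) : 0 ≤ zet e1 e2 R h p := sqp_nonneg _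

lemma hasFDerivAt_zet (e1 e2 R h : ℝ) (p : ℝ × ℝ) :
    ∃ D : ℝ × ℝ →L[ℝ] ℝ, HasFDerivAt (zet e1 e2 R h) D p ∧
      D (1, 0) = - (2 * max (h - (e1 * (p.1 - R) + e2 * p.2)) 0 * e1) ∧
      D (0, 1) = - (2 * max (h - (e1 * (p.1 - R) + e2 * p.2)) 0 * e2) := by
  have h1 : HasFDerivAt (fun q : ℝ × ℝ => h - (e1 * (q.1 - R) + e2 * q.2))
      (-(e1 • ContinuousLinearMap.fst ℝ ℝ ℝ + e2 • ContinuousLinearMap.snd ℝ ℝ ℝ)) p :=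
    (((hasFDerivAt_fst.sub_const R).const_mul e1).add (hasFDerivAt_snd.const_mul e2)).const_sub h
  refine ⟨_, (hasDerivAt_sqp _).comp_hasFDerivAt p h1, ?_, ?_⟩ <;> simp

lemma contDiff_zet (e1 e2 R h : ℝ) : ContDiff ℝ 1 (zet e1 e2 R h) :=
  contDiff_sqp.comp (by fun_prop)

/-- The test field vanishes near the points outside `Ω` at which `u` is close to `u₀`. -/
lemma tfld_eventually_zero {Ω : Set (ℝ × ℝ)} {u : ℝ × ℝ → ℝ} {σ e1 e2 R h c u0 : ℝ}
    (hσ : |σ| = 1) (X : ℝ × ℝ → ℝ) (e : ℝ) {x : ℝ × ℝ}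
    (hx : ∀ᶠ y in nhds x, y ∈ Ω → |u y - u0| < c) :
    tfld Ω u σ e1 e2 R h c u0 X e =ᶠ[nhds x] fun _ => 0 := by
  filter_upwards [hx] with y hy
  unfold tfld
  by_cases hyΩ : y ∈ Ω
  · rw [indicator_of_mem hyΩ, phi_of_le]
    · ring
    · have := hy hyΩ
      calc σ * (u y - u0) ≤ |σ * (u y - u0)| := le_abs_self _
        _ = |u y - u0| := by rw [abs_mul, hσ, one_mul]
        _ ≤ c := this.le
  · rw [indicator_of_notMem hyΩ]

lemma tfld_eventually_eq {Ω : Set (ℝ × ℝ)} (hΩ : IsOpen Ω) (u : ℝ × ℝ → ℝ)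
    (σ e1 e2 R h c u0 : ℝ) (X : ℝ × ℝ → ℝ) (e : ℝ) {x : ℝ × ℝ} (hx : x ∈ Ω) :
    tfld Ω u σ e1 e2 R h c u0 X e =ᶠ[nhds x]
      fun p => zet e1 e2 R h p * phi c (σ * (u p - u0)) * (σ * X p - e) := by
  filter_upwards [hΩ.mem_nhds hx] with y hy
  exact indicator_of_mem hy _

lemma contDiffAt_tfld {Ω : Set (ℝ × ℝ)} (hΩ : IsOpen Ω) {u : ℝ × ℝ → ℝ}
    {σ e1 e2 R h c u0 : ℝ} (hσ : |σ| = 1) (hu : ContDiffOn ℝ 2 u Ω) (X : ℝ × ℝ → ℝ) (e : ℝ)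
    (hX : ∀ x ∈ Ω, ContDiffAt ℝ 1 X x) {x : ℝ × ℝ}
    (hx : x ∉ Ω → ∀ᶠ y in nhds x, y ∈ Ω → |u y - u0| < c) :
    ContDiffAt ℝ 1 (tfld Ω u σ e1 e2 R h c u0 X e) x := by
  by_cases hxΩ : x ∈ Ω
  · refine ContDiffAt.congr_of_eventuallyEq ?_ (tfld_eventually_eq hΩ u σ e1 e2 R h c u0 X e hxΩ)
    have h1 : ContDiffAt ℝ 1 u x := (hu.contDiffAt (hΩ.mem_nhds hxΩ)).of_le (by norm_num)
    have h2 : ContDiffAt ℝ 1 (fun p => phi c (σ * (u p - u0))) x :=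
      (contDiff_phi c).contDiffAt.comp x (contDiffAt_const.mul (h1.sub contDiffAt_const))
    exact ((contDiff_zet e1 e2 R h).contDiffAt.mul h2).mul
      ((contDiffAt_const.mul (hX x hxΩ)).sub contDiffAt_const)
  · exact contDiffAt_const.congr_of_eventuallyEq (tfld_eventually_zero hσ X e (hx hxΩ))

/-- The algebra behind `dvg_tfld_ge`. -/
lemma dvg_tfld_alg {H σ e1 e2 m ζ φ φ' W A B a b : ℝ} (hH : 0 < H) (hσ : |σ| = 1)
    (he : e1 ^ 2 + e2 ^ 2 = 1) (hm : 0 ≤ m) (hz : 0 ≤ ζ) (hφ0 : 0 ≤ φ) (hφ1 : φ ≤ 1)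
    (hφ0' : 0 ≤ φ') (hφ1' : φ' ≤ 1) (hW : 1 ≤ W) (hAB : A ^ 2 + B ^ 2 = 1 - 1 / W ^ 2)
    (hab : a + b = 2 * H) :
    -(ζ * (2 * H + 1)) ≤ ζ * φ * (σ * a) + ((σ * A - e1) * (ζ * (φ' * (σ * (A * W))))
      + -((σ * A - e1) * (φ * (2 * m * e1)))) + (ζ * φ * (σ * b)
      + ((σ * B - e2) * (ζ * (φ' * (σ * (B * W)))) + -((σ * B - e2) * (φ * (2 * m * e2))))) := by
  have hσ2 : σ ^ 2 = 1 := by rw [← sq_abs, hσ]; norm_num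
  have hσge : -1 ≤ σ := by have := neg_abs_le σ; rw [hσ] at this; exact this
  have hXs : A ^ 2 + B ^ 2 ≤ 1 := by
    rw [hAB]; have : 0 ≤ 1 / W ^ 2 := by positivity
    linarith
  have t2 : σ * (e1 * A + e2 * B) ≤ 1 := by
    nlinarith [sq_nonneg (σ * A - e1), sq_nonneg (σ * B - e2)]
  have t3 : -1 ≤ (A * W) * A + (B * W) * B - σ * ((A * W) * e1 + (B * W) * e2) := by
    have e : W * (A ^ 2 + B ^ 2) = W - 1 / W := by
      rw [hAB]; field_simp
    have h1 : 1 / W ≤ 1 := by rw [div_le_one (by linarith)]; exact hW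
    have h2 := mul_le_mul_of_nonneg_left t2 (by linarith : 0 ≤ W)
    linarith
  have p1 : 0 ≤ m * φ * (1 - σ * (e1 * A + e2 * B)) :=
    mul_nonneg (mul_nonneg hm hφ0) (by linarith)
  have p2 : -(ζ * 1) ≤ ζ * φ' * ((A * W) * A + (B * W) * B
      - σ * ((A * W) * e1 + (B * W) * e2)) := by
    have h1 : 0 ≤ ζ * φ' * (1 + ((A * W) * A + (B * W) * B
      - σ * ((A * W) * e1 + (B * W) * e2))) :=
      mul_nonneg (mul_nonneg hz hφ0') (by linarith)
    have h2 : ζ * φ' ≤ ζ * 1 := by gcongr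
    linarith
  have p3 : -(ζ * (2 * H)) ≤ ζ * φ * (σ * (a + b)) := by
    rw [hab]
    have h1 : 0 ≤ ζ * φ * (2 * H) * (1 + σ) := by
      apply mul_nonneg (by positivity); linarith
    have h2 : ζ * φ * (2 * H) ≤ ζ * 1 * (2 * H) := by gcongr
    linarith
  have key : ζ * φ * (σ * a) + ((σ * A - e1) * (ζ * (φ' * (σ * (A * W))))
      + -((σ * A - e1) * (φ * (2 * m * e1)))) + (ζ * φ * (σ * b)
      + ((σ * B - e2) * (ζ * (φ' * (σ * (B * W)))) + -((σ * B - e2) * (φ * (2 * m * e2)))))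
      = ζ * φ * (σ * (a + b))
       + ζ * φ' * ((A * W) * A + (B * W) * B - σ * ((A * W) * e1 + (B * W) * e2))
       + 2 * (m * φ * (1 - σ * (e1 * A + e2 * B))) := by
    linear_combination (ζ * φ' * ((A * W) * A + (B * W) * B)) * hσ2 + (2 * m * φ) * he
  rw [key]
  linarith

/-- The divergence of the test field is bounded below: the truncation only contributes the
almost nonnegative term `σ∇u·(σX - e) ≥ - 1/W`, the cutoff contributes a nonnegative one. -/
lemma dvg_tfld_ge {H : ℝ} (hH : 0 < H) {Ω : Set (ℝ × ℝ)} (hΩ : IsOpen Ω) {u : ℝ × ℝ → ℝ}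
    (hu : DivCMC H Ω u) {σ e1 e2 R h c u0 : ℝ} (hσ : |σ| = 1) (he : e1 ^ 2 + e2 ^ 2 = 1)
    {x : ℝ × ℝ} (hx : x ∉ Ω → ∀ᶠ y in nhds x, y ∈ Ω → |u y - u0| < c) :
    -(zet e1 e2 R h x * (2 * H + 1)) ≤
      dvg (tfld Ω u σ e1 e2 R h c u0 (X1 u) e1) (tfld Ω u σ e1 e2 R h c u0 (X2 u) e2) x := by
  have hz := zet_nonneg e1 e2 R h x
  by_cases hxΩ : x ∈ Ω
  · have hc := hu.contDiffAt hΩ hxΩ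
    obtain ⟨D, hD, hD1, hD2⟩ := hasFDerivAt_zet e1 e2 R h x
    have du := (hc.differentiableAt (by norm_num)).hasFDerivAt
    have dφ := (hasDerivAt_phi c (σ * (u x - u0))).comp_hasFDerivAt x
      ((du.sub_const u0).const_mul σ)
    have dX1 := (((contDiffAt_X hc).1.differentiableAt (by norm_num)).hasFDerivAt.const_mul
      σ).sub_const e1
    have dX2 := (((contDiffAt_X hc).2.differentiableAt (by norm_num)).hasFDerivAt.const_mul
      σ).sub_const e2
    have f1 := ((hD.mul dφ).mul dX1).fderiv
    have f2 := ((hD.mul dφ).mul dX2).fderiv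
    have g1 := (tfld_eventually_eq hΩ u σ e1 e2 R h c u0 (X1 u) e1 hxΩ).fderiv_eq (𝕜 := ℝ)
    have g2 := (tfld_eventually_eq hΩ u σ e1 e2 R h c u0 (X2 u) e2 hxΩ).fderiv_eq (𝕜 := ℝ)
    have g1' := congrArg (fun A : ℝ × ℝ →L[ℝ] ℝ => A (1, 0)) (g1.trans f1)
    have g2' := congrArg (fun A : ℝ × ℝ →L[ℝ] ℝ => A (0, 1)) (g2.trans f2)
    simp [hD1, hD2] at g1' g2'
    unfold dvg pdx pdy
    rw [g1', g2']
    have hdiv : fderiv ℝ (X1 u) x (1, 0) + fderiv ℝ (X2 u) x (0, 1) = 2 * H := hu.2 x hxΩ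
    rw [show fderiv ℝ u x (1, 0) = pdx u x from rfl, show fderiv ℝ u x (0, 1) = pdy u x from rfl]
    rw [show pdx u x = X1 u x * Wgraph u x from (div_mul_cancel₀ _ (W_pos u x).ne').symm,
      show pdy u x = X2 u x * Wgraph u x from (div_mul_cancel₀ _ (W_pos u x).ne').symm]
    exact dvg_tfld_alg hH hσ he (le_max_right _ _) hz (phi_nonneg _ _) (phi_le_one _ _)
      (phi'_nonneg _ _) (phi'_le_one _ _) (one_le_W u x) (X_sq u x) hdiv
  · have g1 := (tfld_eventually_zero (e1 := e1) (e2 := e2) (R := R) (h := h) hσ (X1 u) e1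
      (hx hxΩ)).fderiv_eq (𝕜 := ℝ)
    have g2 := (tfld_eventually_zero (e1 := e1) (e2 := e2) (R := R) (h := h) hσ (X2 u) e2
      (hx hxΩ)).fderiv_eq (𝕜 := ℝ)
    unfold dvg pdx pdy
    rw [g1, g2]
    simp
    positivity

lemma zet_mul_phi_bounds {c s e1 e2 R h : ℝ} (p : ℝ × ℝ) :
    0 ≤ zet e1 e2 R h p * phi c s ∧ zet e1 e2 R h p * phi c s ≤ zet e1 e2 R h p := by
  have h1 := zet_nonneg e1 e2 R h p
  exact ⟨mul_nonneg h1 (phi_nonneg _ _), mul_le_of_le_one_right h1 (phi_le_one _ _)⟩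

lemma abs_comb_le_one {a b c d : ℝ} (h1 : a ^ 2 + b ^ 2 ≤ 1) (h2 : c ^ 2 + d ^ 2 = 1) :
    |a * c + b * d| ≤ 1 := by
  rw [abs_le]
  constructor
  · nlinarith [sq_nonneg (a + c), sq_nonneg (b + d)]
  · nlinarith [sq_nonneg (a - c), sq_nonneg (b - d)]

/-- Size of the angular component of the test field. -/
lemma abs_Ftg_tfld_le (Ω : Set (ℝ × ℝ)) (u : ℝ × ℝ → ℝ) {σ e1 e2 : ℝ} (R h c u0 : ℝ)
    (hσ : |σ| = 1) (he : e1 ^ 2 + e2 ^ 2 = 1) (ρ θ : ℝ) :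
    |Ftg (tfld Ω u σ e1 e2 R h c u0 (X1 u) e1) (tfld Ω u σ e1 e2 R h c u0 (X2 u) e2) ρ θ|
      ≤ 2 * zet e1 e2 R h (Pol ρ θ) := by
  have hz := zet_nonneg e1 e2 R h (Pol ρ θ)
  unfold Ftg tfld
  by_cases hp : Pol ρ θ ∈ Ω
  · rw [indicator_of_mem hp, indicator_of_mem hp]
    obtain ⟨h1, h2⟩ := zet_mul_phi_bounds (c := c) (s := σ * (u (Pol ρ θ) - u0)) (e1 := e1)
      (e2 := e2) (R := R) (h := h) (Pol ρ θ)
    set k := zet e1 e2 R h (Pol ρ θ) * phi c (σ * (u (Pol ρ θ) - u0))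
    have e : -(k * (σ * X1 u (Pol ρ θ) - e1)) * sin θ + k * (σ * X2 u (Pol ρ θ) - e2) * cos θ
        = k * (σ * Xt u ρ θ - (e1 * -sin θ + e2 * cos θ)) := by
      unfold Xt Ftg; ring
    rw [e, abs_mul, abs_of_nonneg h1]
    have a1 : |e1 * -sin θ + e2 * cos θ| ≤ 1 := abs_comb_le_one he.le (by
      rw [neg_sq]; exact sin_sq_add_cos_sq θ)
    have a2 : |σ * Xt u ρ θ| ≤ 1 := by rw [abs_mul, hσ, one_mul]; exact abs_Xt_le u ρ θ
    have a3 := abs_sub (σ * Xt u ρ θ) (e1 * -sin θ + e2 * cos θ)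
    nlinarith [abs_nonneg (σ * Xt u ρ θ - (e1 * -sin θ + e2 * cos θ))]
  · rw [indicator_of_notMem hp, indicator_of_notMem hp]
    simp; exact hz

/-- Radial component of the test field, multiplied by the sign `σ`. -/
lemma Fnr_tfld {Ω : Set (ℝ × ℝ)} (u : ℝ × ℝ → ℝ) {σ : ℝ} (e1 e2 R h c u0 : ℝ)
    (hσ : |σ| = 1) {ρ θ : ℝ} (hp : Pol ρ θ ∈ Ω) :
    σ * Fnr (tfld Ω u σ e1 e2 R h c u0 (X1 u) e1) (tfld Ω u σ e1 e2 R h c u0 (X2 u) e2) ρ θ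
      = zet e1 e2 R h (Pol ρ θ) * phi c (σ * (u (Pol ρ θ) - u0)) *
        ((1 - σ * (e1 * cos θ + e2 * sin θ)) - (1 - Xn u ρ θ)) := by
  have hσ2 : σ ^ 2 = 1 := by rw [← sq_abs, hσ]; norm_num
  unfold Xn Fnr tfld
  rw [indicator_of_mem hp, indicator_of_mem hp]
  linear_combination (zet e1 e2 R h (Pol ρ θ) * phi c (σ * (u (Pol ρ θ) - u0)) *
    (X1 u (Pol ρ θ) * cos θ + X2 u (Pol ρ θ) * sin θ)) * hσ2

lemma tfld_eq_zero {Ω : Set (ℝ × ℝ)} (u : ℝ × ℝ → ℝ) (σ e1 e2 R h c u0 : ℝ) (X : ℝ × ℝ → ℝ)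
    (e : ℝ) {p : ℝ × ℝ} (hp : p ∈ Ω → zet e1 e2 R h p = 0) :
    tfld Ω u σ e1 e2 R h c u0 X e p = 0 := by
  unfold tfld
  by_cases h : p ∈ Ω
  · rw [indicator_of_mem h, hp h]; ring
  · rw [indicator_of_notMem h]

/-! ### Geometry near the endpoint -/

lemma dist_sq_le {ρ R θ : ℝ} (hR : 0 < R) (h2 : ρ ≤ 2 * R) :
    (ρ * cos θ - R) ^ 2 + (ρ * sin θ) ^ 2 ≤ (ρ - R) ^ 2 + 2 * R ^ 2 * θ ^ 2 := by
  have hc := one_sub_sq_div_two_le_cos (x := θ)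
  have e : (ρ * cos θ - R) ^ 2 + (ρ * sin θ) ^ 2 = (ρ - R) ^ 2 + 2 * (ρ * R) * (1 - cos θ) := by
    linear_combination ρ ^ 2 * sin_sq_add_cos_sq θ
  rw [e]
  have h3 : ρ * R * (1 - cos θ) ≤ (2 * R * R) * (θ ^ 2 / 2) := by
    have : 0 ≤ 1 - cos θ := by linarith [cos_le_one θ]
    have h4 : 1 - cos θ ≤ θ ^ 2 / 2 := by linarith
    gcongr
  nlinarith

/-- A point `y` of the disc of centre `R m` (with origin moved to the endpoint) on the `σ`-side of
the circle of `L`, where `e·y < h` for the bisecting direction `e` of `σ (1, 0)` and `m`, is at distance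
`O(h)` from the endpoint. -/
lemma near_of_lt {R ma mb σ e1 e2 l h y1 y2 : ℝ} (hR : 0 < R) (hm : ma ^ 2 + mb ^ 2 = 1)
    (hmb : 0 < mb) (hσ : |σ| = 1) (hl2 : l ≤ 2) (hl0 : 0 < l) (he1 : l * e1 = σ + ma)
    (he2 : l * e2 = mb) (hh : 0 < h) (hdisc : (y1 ^ 2 + y2 ^ 2) / (2 * R) < ma * y1 + mb * y2)
    (hside : 0 ≤ σ * (2 * R * y1 + (y1 ^ 2 + y2 ^ 2))) (hlt : e1 * y1 + e2 * y2 < h)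
    (hsmall : y1 ^ 2 + y2 ^ 2 ≤ (mb * R / 4) ^ 2) :
    y1 ^ 2 + y2 ^ 2 ≤ (12 * h / mb) ^ 2 := by
  have hn0 : 0 ≤ y1 ^ 2 + y2 ^ 2 := by positivity
  obtain ⟨r, hr0, hr⟩ : ∃ r : ℝ, 0 ≤ r ∧ r ^ 2 = y1 ^ 2 + y2 ^ 2 :=
    ⟨√(y1 ^ 2 + y2 ^ 2), sqrt_nonneg _, sq_sqrt hn0⟩
  rw [← hr] at hdisc hside hsmall ⊢
  have hrs : r ≤ mb * R / 4 := by
    apply le_of_sq_le_sq _ (by positivity); exact hsmall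
  set q := r ^ 2 / (2 * R) with hq
  have hq0 : 0 ≤ q := by positivity
  have hqr : q ≤ mb * r / 8 := by
    rw [hq, div_le_iff₀ (by positivity)]; nlinarith
  have hσs : σ * r ^ 2 ≤ r ^ 2 := by
    have : σ ≤ 1 := hσ ▸ le_abs_self σ
    nlinarith [sq_nonneg r]
  have h1 : -q ≤ σ * y1 := by
    have e : r ^ 2 = 2 * R * q := by rw [hq]; field_simp
    have : 0 ≤ 2 * R * (σ * y1 + q) := by nlinarith
    have := (mul_nonneg_iff_of_pos_left (by positivity : 0 < 2 * R)).1 this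
    linarith
  have h2 : σ * y1 + (ma * y1 + mb * y2) < 2 * h := by
    have e : σ * y1 + (ma * y1 + mb * y2) = l * (e1 * y1 + e2 * y2) := by
      linear_combination (-y1) * he1 - y2 * he2
    rw [e]
    calc l * (e1 * y1 + e2 * y2) < l * h := by gcongr
      _ ≤ 2 * h := by gcongr
  have hy1 : |y1| ≤ 2 * h + q := by
    have : |y1| = |σ * y1| := by rw [abs_mul, hσ, one_mul]
    rw [this, abs_le]; constructor <;> linarith
  have hma : |ma| ≤ 1 := by
    rw [abs_le_one_iff_mul_self_le_one]; nlinarith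
  have hmb1 : mb ≤ 1 := by nlinarith [sq_nonneg ma]
  have hy2 : mb * |y2| ≤ 4 * h + 2 * q := by
    have e : mb * |y2| = |(ma * y1 + mb * y2) - ma * y1| := by
      rw [show (ma * y1 + mb * y2) - ma * y1 = mb * y2 by ring, abs_mul, abs_of_pos hmb]
    rw [e]
    have a1 := abs_sub (ma * y1 + mb * y2) (ma * y1)
    have a2 : |ma * y1 + mb * y2| ≤ 2 * h + q := by
      rw [abs_le]; constructor <;> linarith
    have a3 : |ma * y1| ≤ 2 * h + q := by
      rw [abs_mul]
      calc |ma| * |y1| ≤ 1 * |y1| := by gcongr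
        _ ≤ _ := by linarith
    linarith
  have hrsum : r ≤ |y1| + |y2| := by
    apply le_of_sq_le_sq _ (by positivity)
    rw [hr]
    nlinarith [sq_abs y1, sq_abs y2, mul_nonneg (abs_nonneg y1) (abs_nonneg y2)]
  have h3 : mb * r ≤ 6 * h + 3 * q := by
    have : mb * |y1| ≤ 1 * |y1| := by gcongr
    nlinarith
  have h4 : mb * r ≤ 12 * h := by linarith
  have h5 : r ≤ 12 * h / mb := by rw [le_div_iff₀ hmb]; linarith
  gcongr

/-- Points of the disc and of the box on the `σ`-side of the circle which lie on the sides
`|θ| = 50 h / (m_b R)` of the box, or on its far arc, are outside the support of the cutoff. -/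
lemma zet_eq_zero_of_far {R ma mb σ e1 e2 l h ρ θ : ℝ} (hR : 0 < R) (hm : ma ^ 2 + mb ^ 2 = 1)
    (hmb : 0 < mb) (hσ : |σ| = 1) (hl2 : l ≤ 2) (hl0 : 0 < l) (he1 : l * e1 = σ + ma)
    (he2 : l * e2 = mb) (hh : 0 < h) (hhs : 72 * h / mb ≤ mb * R / 4)
    (hθ1 : 50 * h / (mb * R) ≤ 1)
    (hdisc : ((ρ * cos θ - R) ^ 2 + (ρ * sin θ) ^ 2) / (2 * R)
      < ma * (ρ * cos θ - R) + mb * (ρ * sin θ))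
    (hside : 0 ≤ σ * (ρ - R)) (hρ : |ρ - R| ≤ 13 * h / mb) (hθ : |θ| ≤ 50 * h / (mb * R))
    (hfar : |ρ - R| = 13 * h / mb ∨ |θ| = 50 * h / (mb * R)) :
    zet e1 e2 R h (Pol ρ θ) = 0 := by
  have hmb1 : mb ≤ 1 := by nlinarith [sq_nonneg ma]
  have hd : 13 * h / mb ≤ R / 4 := by
    have : 13 * h / mb ≤ 72 * h / mb := by gcongr; norm_num
    nlinarith
  have hρ1 := abs_le.1 hρ
  have hρlo : R / 2 ≤ ρ := by linarith
  have hρhi : ρ ≤ 2 * R := by linarith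
  apply sqp_of_nonpos
  simp only [Pol]
  by_contra hcon
  push Not at hcon
  have hn := dist_sq_le (θ := θ) hR hρhi
  have hn' : (ρ * cos θ - R) ^ 2 + (ρ * sin θ) ^ 2 ≤ (mb * R / 4) ^ 2 := by
    have e1 : (ρ - R) ^ 2 ≤ (13 * h / mb) ^ 2 := by rw [← sq_abs (ρ - R)]; gcongr
    have e2 : 2 * R ^ 2 * θ ^ 2 ≤ 2 * R ^ 2 * (50 * h / (mb * R)) ^ 2 := by
      rw [← sq_abs θ]; gcongr
    have e3 : (13 * h / mb) ^ 2 + 2 * R ^ 2 * (50 * h / (mb * R)) ^ 2 ≤ (72 * h / mb) ^ 2 := by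
      have e4 : (13 * h / mb) ^ 2 + 2 * R ^ 2 * (50 * h / (mb * R)) ^ 2
        = 5169 * (h / mb) ^ 2 := by field_simp; norm_num
      have e5 : (72 * h / mb) ^ 2 = 5184 * (h / mb) ^ 2 := by field_simp; norm_num
      rw [e4, e5]; gcongr; norm_num
    have e6 : (72 * h / mb) ^ 2 ≤ (mb * R / 4) ^ 2 := by gcongr
    linarith
  have key := near_of_lt hR hm hmb hσ hl2 hl0 he1 he2 hh hdisc (by
    have e : 2 * R * (ρ * cos θ - R) + ((ρ * cos θ - R) ^ 2 + (ρ * sin θ) ^ 2)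
        = (ρ - R) * (ρ + R) := by linear_combination ρ ^ 2 * sin_sq_add_cos_sq θ
    rw [e, ← mul_assoc]; apply mul_nonneg hside; linarith) (by linarith) hn'
  rcases hfar with hf | hf
  · have e1 : (ρ - R) ^ 2 ≤ (ρ * cos θ - R) ^ 2 + (ρ * sin θ) ^ 2 := by
      have : 0 ≤ 1 - cos θ := by linarith [cos_le_one θ]
      have : 0 ≤ 2 * (ρ * R) * (1 - cos θ) := by
        apply mul_nonneg _ this; apply mul_nonneg (by norm_num); nlinarith
      have e : (ρ * cos θ - R) ^ 2 + (ρ * sin θ) ^ 2 = (ρ - R) ^ 2 + 2 * (ρ * R) * (1 - cos θ) := by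
        linear_combination ρ ^ 2 * sin_sq_add_cos_sq θ
      linarith
    rw [← sq_abs (ρ - R), hf] at e1
    have := le_of_sq_le_sq (e1.trans key) (by positivity)
    rw [div_le_div_iff_of_pos_right hmb] at this
    linarith
  · have hs : |θ| / 2 ≤ |sin θ| := by
      have hθ1' : |θ| ≤ 1 := hθ.trans hθ1
      have h2 : |θ| / 2 ≤ sin |θ| := by
        have := mul_le_sin (abs_nonneg θ) (by have := pi_gt_three; linarith)
        have h3 : 1 / 2 ≤ 2 / π := by
          rw [div_le_div_iff₀ (by norm_num) pi_pos]; linarith [pi_lt_four]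
        nlinarith [abs_nonneg θ]
      rcases abs_cases θ with ⟨hc, _⟩ | ⟨hc, _⟩
      · rw [hc] at h2 ⊢; exact h2.trans (le_abs_self _)
      · rw [hc] at h2 ⊢; rw [sin_neg] at h2; exact h2.trans (neg_le_abs _)
    have e1 : (R / 2 * (|θ| / 2)) ^ 2 ≤ (12 * h / mb) ^ 2 := by
      have e2 : (R / 2 * (|θ| / 2)) ^ 2 ≤ (ρ * sin θ) ^ 2 := by
        rw [← sq_abs (ρ * sin θ), abs_mul, abs_of_nonneg (by linarith : 0 ≤ ρ)]
        have : 0 ≤ ρ := by linarith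
        gcongr
      nlinarith [sq_nonneg (ρ * cos θ - R)]
    have := le_of_sq_le_sq e1 (by positivity)
    rw [hf] at this
    have e3 : R / 2 * (50 * h / (mb * R) / 2) = 12.5 * h / mb := by field_simp; norm_num
    rw [e3, div_le_div_iff_of_pos_right hmb] at this
    linarith

lemma zet_le {R e1 e2 h ρ θ D : ℝ} (he : e1 ^ 2 + e2 ^ 2 = 1) (hh : 0 ≤ h) (hD : 0 ≤ D)
    (hy : (ρ * cos θ - R) ^ 2 + (ρ * sin θ) ^ 2 ≤ D ^ 2) :
    zet e1 e2 R h (Pol ρ θ) ≤ (h + D) ^ 2 := by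
  unfold zet sqp
  simp only [Pol]
  have h1 : (e1 * (ρ * cos θ - R) + e2 * (ρ * sin θ)) ^ 2 ≤ D ^ 2 := by
    nlinarith [sq_nonneg (e1 * (ρ * sin θ) - e2 * (ρ * cos θ - R))]
  have h2 := abs_le.1 (abs_le_of_sq_le_sq h1 hD)
  have h3 : max (h - (e1 * (ρ * cos θ - R) + e2 * (ρ * sin θ))) 0 ≤ h + D :=
    max_le (by linarith) (by linarith)
  have := le_max_right (h - (e1 * (ρ * cos θ - R) + e2 * (ρ * sin θ))) 0
  gcongr

lemma zet_ge {R e1 e2 h ρ θ : ℝ} (he : e1 ^ 2 + e2 ^ 2 = 1) (hh : 0 ≤ h)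
    (hy : (ρ * cos θ - R) ^ 2 + (ρ * sin θ) ^ 2 ≤ (h / 2) ^ 2) :
    h ^ 2 / 4 ≤ zet e1 e2 R h (Pol ρ θ) := by
  unfold zet sqp
  simp only [Pol]
  have h1 : (e1 * (ρ * cos θ - R) + e2 * (ρ * sin θ)) ^ 2 ≤ (h / 2) ^ 2 := by
    nlinarith [sq_nonneg (e1 * (ρ * sin θ) - e2 * (ρ * cos θ - R))]
  have h2 := abs_le.1 (abs_le_of_sq_le_sq h1 (by positivity))
  have h3 : h / 2 ≤ max (h - (e1 * (ρ * cos θ - R) + e2 * (ρ * sin θ))) 0 :=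
    le_trans (by linarith) (le_max_left _ _)
  nlinarith

/-! ### Flux of the test field through the arcs -/

lemma Fnr_eq_zero {F1 F2 : ℝ × ℝ → ℝ} {ρ θ : ℝ} (h1 : F1 (Pol ρ θ) = 0) (h2 : F2 (Pol ρ θ) = 0) :
    Fnr F1 F2 ρ θ = 0 := by unfold Fnr; rw [h1, h2]; ring

lemma Ftg_eq_zero {F1 F2 : ℝ × ℝ → ℝ} {ρ θ : ℝ} (h1 : F1 (Pol ρ θ) = 0) (h2 : F2 (Pol ρ θ) = 0) :
    Ftg F1 F2 ρ θ = 0 := by unfold Ftg; rw [h1, h2]; ring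

/-- Flux balance for a field which vanishes on the far arc `ρ = R + σ d` and on the sides of the box
on the `σ`-side of the circle of radius `R`. The flux is measured through the circle `ρ = R`, moved
to `ρ = R + t` with the weight `g = bump α β`. -/
lemma flux_ineq (F1 F2 : ℝ × ℝ → ℝ) {σ R d θm Z κ t α β : ℝ} (hσ : σ = 1 ∨ σ = -1) (hR : 0 < R)
    (hdR : d ≤ R / 2) (ht : 0 ≤ t) (htd : t ≤ d) (hαβ : α < β) (hα : -θm ≤ α) (hβ : β ≤ θm)
    (hκ : 0 ≤ κ)
    (hC : ∀ ρ θ, |ρ - R| ≤ d → |θ| ≤ θm → ContDiffAt ℝ 1 F1 (Pol ρ θ) ∧ ContDiffAt ℝ 1 F2 (Pol ρ θ))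
    (hdiv : ∀ ρ θ, |ρ - R| ≤ d → |θ| ≤ θm → -κ ≤ dvg F1 F2 (Pol ρ θ))
    (hT : ∀ ρ θ, |ρ - R| ≤ d → |θ| ≤ θm → |Ftg F1 F2 ρ θ| ≤ 2 * Z)
    (hfar : ∀ ρ θ, |ρ - R| ≤ d → |θ| ≤ θm → 0 ≤ σ * (ρ - R) → (|ρ - R| = d ∨ |θ| = θm) →
      F1 (Pol ρ θ) = 0 ∧ F2 (Pol ρ θ) = 0) :
    σ * ((∫ θ in (-θm)..θm, bump α β θ * (R + t) * Fnr F1 F2 (R + t) θ)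
      + ∫ θ in (-θm)..θm, (1 - bump α β θ) * R * Fnr F1 F2 R θ)
      ≤ 2 * θm * (2 * R * κ * (d + t) + 16 / (β - α) * Z * t) := by
  have hθm : 0 ≤ θm := by linarith
  have hd0 : 0 ≤ d := by linarith
  have hD : 0 < β - α := by linarith
  have hZ : 0 ≤ Z := by
    have := (abs_nonneg _).trans (hT R 0 (by simpa using hd0) (by simpa using hθm)); linarith
  have mρ : ∀ {ρ : ℝ}, R - d ≤ ρ → ρ ≤ R + d → |ρ - R| ≤ d := fun h1 h2 => by
    rw [abs_le]; constructor <;> linarith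
  have mθ : ∀ {θ : ℝ}, θ ∈ Icc (-θm) θm → |θ| ≤ θm := fun h => abs_le.2 h
  -- pointwise lower bounds for the weighted divergence
  have low : ∀ (G : ℝ → ℝ) (K : ℝ), (∀ θ, 0 ≤ G θ ∧ G θ ≤ 1) → (∀ θ, |deriv G θ| ≤ K) →
      ∀ ρ θ, |ρ - R| ≤ d → |θ| ≤ θm → -(2 * R * κ + 2 * K * Z) ≤
        (1 : ℝ) * G θ * (ρ * dvg F1 F2 (Pol ρ θ) + 0)
        + ρ * deriv (fun _ : ℝ => (1 : ℝ)) ρ * G θ * (0 + Fnr F1 F2 ρ θ)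
        + 1 * deriv G θ * Ftg F1 F2 ρ θ := by
    intro G K hG hK ρ θ hρ hθ
    have h1 := hdiv ρ θ hρ hθ
    have h2 := hT ρ θ hρ hθ
    have h3 := hK θ
    have hρ' := abs_le.1 hρ
    have hρ0 : 0 ≤ ρ := by linarith
    have hρ2 : ρ ≤ 2 * R := by linarith
    obtain ⟨g0, g1⟩ := hG θ
    have h4 : |deriv G θ * Ftg F1 F2 ρ θ| ≤ K * (2 * Z) := by
      rw [abs_mul]
      have := (abs_nonneg _).trans h3
      gcongr
    have h5 := (abs_le.1 h4).1
    have h6 : G θ * ρ * κ ≤ 1 * (2 * R) * κ := by gcongr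
    have h7 : 0 ≤ G θ * ρ * (dvg F1 F2 (Pol ρ θ) + κ) :=
      mul_nonneg (mul_nonneg g0 hρ0) (by linarith)
    rw [deriv_const]
    linarith
  have hg0 := bump_nonneg α β
  have hg1 := fun θ => bump_le_one hαβ θ
  have hgd := fun θ => abs_deriv_bump hαβ θ
  have hgα : bump α β (-θm) = 0 := bump_eq_zero hαβ (Or.inl hα)
  have hgβ : bump α β θm = 0 := bump_eq_zero hαβ (Or.inr hβ)
  have cF : ∀ ρ, |ρ - R| ≤ d → ContinuousOn (Fnr F1 F2 ρ) (Icc (-θm) θm) := fun ρ hρ θ hθ =>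
    (continuousAt_Fnr (hC ρ θ hρ (mθ hθ)).1.continuousAt
      (hC ρ θ hρ (mθ hθ)).2.continuousAt).continuousWithinAt
  have hmm : -θm ≤ θm := by linarith
  have cg : Continuous (bump α β) := (contDiff_bump α β).continuous
  have split : ∀ ρ, |ρ - R| ≤ d →
      (∫ θ in (-θm)..θm, (1 : ℝ) * 1 * ρ * (0 + Fnr F1 F2 ρ θ))
      = (∫ θ in (-θm)..θm, bump α β θ * ρ * Fnr F1 F2 ρ θ)
        + ∫ θ in (-θm)..θm, (1 - bump α β θ) * ρ * Fnr F1 F2 ρ θ := by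
    intro ρ hρ
    rw [← intervalIntegral.integral_add]
    · congr 1; funext θ; ring
    · exact ContinuousOn.intervalIntegrable_of_Icc hmm
        ((cg.continuousOn.mul continuousOn_const).mul (cF ρ hρ))
    · exact ContinuousOn.intervalIntegrable_of_Icc hmm
        (((continuousOn_const.sub cg.continuousOn).mul continuousOn_const).mul (cF ρ hρ))
  have hnorm : ∀ (G : ℝ → ℝ) (ρ : ℝ),
      (∫ θ in (-θm)..θm, (1 : ℝ) * G θ * ρ * (0 + Fnr F1 F2 ρ θ))
        = ∫ θ in (-θm)..θm, G θ * ρ * Fnr F1 F2 ρ θ := by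
    intro G ρ; congr 1; funext θ; ring
  rcases hσ with rfl | rfl
  · have k1 := polar_div_const F1 F2 (fun _ => 1) (fun θ => 1 - bump α β θ) 0 R (R + t) (-θm) θm
      (2 * R * κ + 2 * (8 / (β - α)) * Z) (by linarith) hmm
      (fun ρ hρ θ hθ => (hC ρ θ (mρ (by linarith [hρ.1]) (by linarith [hρ.2])) (mθ hθ)).1)
      (fun ρ hρ θ hθ => (hC ρ θ (mρ (by linarith [hρ.1]) (by linarith [hρ.2])) (mθ hθ)).2)
      (fun _ _ => contDiffAt_const) (contDiff_const.sub (contDiff_bump α β))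
      (fun ρ hρ => by
        obtain ⟨z1, z2⟩ := hfar ρ (-θm) (mρ (by linarith [hρ.1]) (by linarith [hρ.2]))
          (by rw [abs_neg, abs_of_nonneg hθm]) (by linarith [hρ.1])
          (Or.inr (by rw [abs_neg, abs_of_nonneg hθm]))
        rw [Ftg_eq_zero z1 z2, mul_zero])
      (fun ρ hρ => by
        obtain ⟨z1, z2⟩ := hfar ρ θm (mρ (by linarith [hρ.1]) (by linarith [hρ.2]))
          (by rw [abs_of_nonneg hθm]) (by linarith [hρ.1])
          (Or.inr (by rw [abs_of_nonneg hθm]))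
        rw [Ftg_eq_zero z1 z2, mul_zero])
      (fun ρ hρ θ hθ => low (fun θ => 1 - bump α β θ) (8 / (β - α))
        (fun θ => ⟨by linarith [hg1 θ], by linarith [hg0 θ]⟩)
        (fun θ => by rw [deriv_const_sub, abs_neg]; exact hgd θ) ρ θ
        (mρ (by linarith [hρ.1]) (by linarith [hρ.2])) (mθ hθ))
    have k2 := polar_div_const F1 F2 (fun _ => 1) (fun _ => 1) 0 (R + t) (R + d) (-θm) θm
      (2 * R * κ + 2 * 0 * Z) (by linarith) hmm
      (fun ρ hρ θ hθ => (hC ρ θ (mρ (by linarith [hρ.1]) (by linarith [hρ.2])) (mθ hθ)).1)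
      (fun ρ hρ θ hθ => (hC ρ θ (mρ (by linarith [hρ.1]) (by linarith [hρ.2])) (mθ hθ)).2)
      (fun _ _ => contDiffAt_const) contDiff_const
      (fun ρ hρ => by
        obtain ⟨z1, z2⟩ := hfar ρ (-θm) (mρ (by linarith [hρ.1]) (by linarith [hρ.2]))
          (by rw [abs_neg, abs_of_nonneg hθm]) (by linarith [hρ.1])
          (Or.inr (by rw [abs_neg, abs_of_nonneg hθm]))
        rw [Ftg_eq_zero z1 z2, mul_zero])
      (fun ρ hρ => by
        obtain ⟨z1, z2⟩ := hfar ρ θm (mρ (by linarith [hρ.1]) (by linarith [hρ.2]))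
          (by rw [abs_of_nonneg hθm]) (by linarith [hρ.1])
          (Or.inr (by rw [abs_of_nonneg hθm]))
        rw [Ftg_eq_zero z1 z2, mul_zero])
      (fun ρ hρ θ hθ => low (fun _ => 1) 0 (fun θ => ⟨by norm_num, by norm_num⟩)
        (fun θ => by simp) ρ θ (mρ (by linarith [hρ.1]) (by linarith [hρ.2])) (mθ hθ))
    have z : (∫ θ in (-θm)..θm, (1 : ℝ) * 1 * (R + d) * (0 + Fnr F1 F2 (R + d) θ)) = 0 := by
      rw [intervalIntegral.integral_congr (g := fun _ => (0 : ℝ))]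
      · simp
      · intro θ hθ
        rw [uIcc_of_le hmm] at hθ
        obtain ⟨z1, z2⟩ := hfar (R + d) θ (mρ (by linarith) (by linarith)) (mθ hθ) (by linarith)
          (Or.inl (by rw [add_sub_cancel_left, abs_of_nonneg hd0]))
        simp only
        rw [Fnr_eq_zero z1 z2]; ring
    rw [hnorm (fun θ => 1 - bump α β θ) (R + t), hnorm (fun θ => 1 - bump α β θ) R] at k1
    rw [z, split (R + t) (mρ (by linarith) (by linarith))] at k2
    have e : 2 * θm * (2 * R * κ * (d + t) + 16 / (β - α) * Z * t)
        = (2 * R * κ + 2 * (8 / (β - α)) * Z) * ((θm - -θm) * (R + t - R))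
          + (2 * R * κ + 2 * 0 * Z) * ((θm - -θm) * (R + d - (R + t)))
          + 2 * θm * (2 * R * κ * t) := by ring
    have e2 : 0 ≤ 2 * θm * (2 * R * κ * t) := by positivity
    linarith
  · have k1 := polar_div_const F1 F2 (fun _ => 1) (bump α β) 0 R (R + t) (-θm) θm
      (2 * R * κ + 2 * (8 / (β - α)) * Z) (by linarith) hmm
      (fun ρ hρ θ hθ => (hC ρ θ (mρ (by linarith [hρ.1]) (by linarith [hρ.2])) (mθ hθ)).1)
      (fun ρ hρ θ hθ => (hC ρ θ (mρ (by linarith [hρ.1]) (by linarith [hρ.2])) (mθ hθ)).2)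
      (fun _ _ => contDiffAt_const) (contDiff_bump α β)
      (fun ρ hρ => by rw [hgα, zero_mul]) (fun ρ hρ => by rw [hgβ, zero_mul])
      (fun ρ hρ θ hθ => low (bump α β) (8 / (β - α)) (fun θ => ⟨hg0 θ, hg1 θ⟩) hgd ρ θ
        (mρ (by linarith [hρ.1]) (by linarith [hρ.2])) (mθ hθ))
    have k2 := polar_div_const F1 F2 (fun _ => 1) (fun _ => 1) 0 (R - d) R (-θm) θm
      (2 * R * κ + 2 * 0 * Z) (by linarith) hmm
      (fun ρ hρ θ hθ => (hC ρ θ (mρ (by linarith [hρ.1]) (by linarith [hρ.2])) (mθ hθ)).1)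
      (fun ρ hρ θ hθ => (hC ρ θ (mρ (by linarith [hρ.1]) (by linarith [hρ.2])) (mθ hθ)).2)
      (fun _ _ => contDiffAt_const) contDiff_const
      (fun ρ hρ => by
        obtain ⟨z1, z2⟩ := hfar ρ (-θm) (mρ (by linarith [hρ.1]) (by linarith [hρ.2]))
          (by rw [abs_neg, abs_of_nonneg hθm]) (by linarith [hρ.2])
          (Or.inr (by rw [abs_neg, abs_of_nonneg hθm]))
        rw [Ftg_eq_zero z1 z2, mul_zero])
      (fun ρ hρ => by
        obtain ⟨z1, z2⟩ := hfar ρ θm (mρ (by linarith [hρ.1]) (by linarith [hρ.2]))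
          (by rw [abs_of_nonneg hθm]) (by linarith [hρ.2])
          (Or.inr (by rw [abs_of_nonneg hθm]))
        rw [Ftg_eq_zero z1 z2, mul_zero])
      (fun ρ hρ θ hθ => low (fun _ => 1) 0 (fun θ => ⟨by norm_num, by norm_num⟩)
        (fun θ => by simp) ρ θ (mρ (by linarith [hρ.1]) (by linarith [hρ.2])) (mθ hθ))
    have z : (∫ θ in (-θm)..θm, (1 : ℝ) * 1 * (R - d) * (0 + Fnr F1 F2 (R - d) θ)) = 0 := by
      rw [intervalIntegral.integral_congr (g := fun _ => (0 : ℝ))]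
      · simp
      · intro θ hθ
        rw [uIcc_of_le hmm] at hθ
        obtain ⟨z1, z2⟩ := hfar (R - d) θ (mρ (by linarith) (by linarith)) (mθ hθ) (by linarith)
          (Or.inl (by rw [show R - d - R = -d by ring, abs_neg, abs_of_nonneg hd0]))
        simp only
        rw [Fnr_eq_zero z1 z2]; ring
    rw [hnorm (bump α β) (R + t), hnorm (bump α β) R] at k1
    rw [z, split R (mρ (by linarith) (by linarith))] at k2
    have e : 2 * θm * (2 * R * κ * (d + t) + 16 / (β - α) * Z * t)
        = (2 * R * κ + 2 * (8 / (β - α)) * Z) * ((θm - -θm) * (R + t - R))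
          + (2 * R * κ + 2 * 0 * Z) * ((θm - -θm) * (R - (R - d))) := by ring
    linarith

/-! ### Smallness of the set where `u` is far from its boundary values -/

/-- The normalised configuration at the endpoint `(R, 0)` of the divergence line: the line is the
arc `{Pol R θ : 0 < θ < θ₀}` of the circle of radius `R = 1/(2H)` centred at the origin, and near
the endpoint `Ω` lies in the disc of radius `R` and centre `(R, 0) + R m`, `m` a unit vector. -/
structure Endpoint (H R ma mb r0 θ0 : ℝ) (Ω O : Set (ℝ × ℝ)) : Prop where
  hH : 0 < H
  hR : R = 1 / (2 * H)
  hm : ma ^ 2 + mb ^ 2 = 1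
  hmb : 0 < mb
  hΩ : IsOpen Ω
  hr0 : 0 < r0
  hθ0 : 0 < θ0
  box : ∀ ρ θ, |ρ - R| ≤ r0 → |θ| ≤ r0 → Pol ρ θ ∈ O
  disc : ∀ ρ θ, |ρ - R| ≤ r0 → |θ| ≤ r0 → Pol ρ θ ∈ Ω →
    ((ρ * cos θ - R) ^ 2 + (ρ * sin θ) ^ 2) / (2 * R)
      < ma * (ρ * cos θ - R) + mb * (ρ * sin θ)
  arc : ∀ θ, 0 < θ → θ < θ0 → Pol R θ ∈ Ω

lemma Endpoint.R_pos {H R ma mb r0 θ0 : ℝ} {Ω O : Set (ℝ × ℝ)}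
    (E : Endpoint H R ma mb r0 θ0 Ω O) : 0 < R := by
  rw [E.hR]; have := E.hH; positivity

lemma Endpoint.notMem {H R ma mb r0 θ0 : ℝ} {Ω O : Set (ℝ × ℝ)}
    (E : Endpoint H R ma mb r0 θ0 Ω O) {θ : ℝ} (h1 : θ ≤ 0) (h2 : |θ| ≤ r0) (h3 : -1 ≤ θ) :
    Pol R θ ∉ Ω := by
  intro hp
  have hR := E.R_pos
  have hd := E.disc R θ (by simpa using E.hr0.le) h2 hp
  have hs : sin θ ≤ 0 := sin_nonpos_of_nonpos_of_neg_pi_le h1 (by linarith [pi_gt_three])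
  have hc := cos_le_one θ
  have hm := E.hm
  have hmb := E.hmb
  have hma : -1 ≤ ma := by nlinarith [sq_nonneg mb]
  have e : ((R * cos θ - R) ^ 2 + (R * sin θ) ^ 2) / (2 * R) = R * (1 - cos θ) := by
    field_simp
    linear_combination sin_sq_add_cos_sq θ
  rw [e] at hd
  have h4 : 0 ≤ R * ((1 - cos θ) * (1 + ma)) :=
    mul_nonneg hR.le (mul_nonneg (by linarith) (by linarith))
  have h5 : mb * (R * sin θ) ≤ 0 :=
    mul_nonpos_of_nonneg_of_nonpos hmb.le (mul_nonpos_of_nonneg_of_nonpos hR.le hs)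
  linarith

lemma intervalIntegrable_defect {H : ℝ} {Ω : Set (ℝ × ℝ)} (hΩ : IsOpen Ω) {u : ℝ × ℝ → ℝ}
    (hu : DivCMC H Ω u) {R θ0 : ℝ} (hθ0 : 0 ≤ θ0)
    (harc : ∀ θ, 0 < θ → θ < θ0 → Pol R θ ∈ Ω) :
    IntervalIntegrable (fun θ => 1 - Xn u R θ) volume 0 θ0 := by
  rw [intervalIntegrable_iff_integrableOn_Ioo_of_le hθ0]
  have hc : ContinuousOn (fun θ => 1 - Xn u R θ) (Ioo 0 θ0) := fun θ hθ =>
    (continuousAt_const.sub (continuousAt_Xn hΩ hu (harc θ hθ.1 hθ.2))).continuousWithinAt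
  refine Integrable.mono' (g := fun _ => (2 : ℝ)) (integrableOn_const (by simp))
    (hc.aestronglyMeasurable measurableSet_Ioo) (Eventually.of_forall fun θ => ?_)
  have := abs_le.1 (abs_Xn_le u R θ)
  rw [norm_eq_abs, abs_le]; constructor <;> linarith

lemma integral_bump_mul {α β a b : ℝ} (hαβ : α < β) (ha : a ≤ α) (hb : β ≤ b) (f : ℝ → ℝ) :
    ∫ θ in a..b, bump α β θ * f θ = ∫ θ in α..β, bump α β θ * f θ := by
  rw [intervalIntegral.integral_of_le (by linarith), intervalIntegral.integral_of_le hαβ.le]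
  apply setIntegral_eq_of_subset_of_forall_sdiff_eq_zero measurableSet_Ioc
    (Ioc_subset_Ioc ha hb)
  intro θ hθ
  rw [bump_eq_zero hαβ, zero_mul]
  by_contra hc
  push Not at hc
  exact hθ.2 ⟨hc.1, hc.2.le⟩

/-- Unit vector in the direction of the bisector of `σ (1, 0)` and `m`. -/
lemma exists_bisector {ma mb σ : ℝ} (hm : ma ^ 2 + mb ^ 2 = 1) (hmb : 0 < mb)
    (hσ : |σ| = 1) : ∃ l e1 e2 : ℝ, 0 < l ∧ l < 2 ∧ l * e1 = σ + ma ∧ l * e2 = mb ∧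
      e1 ^ 2 + e2 ^ 2 = 1 ∧ σ * e1 = l / 2 := by
  have hσ2 : σ ^ 2 = 1 := by rw [← sq_abs, hσ]; norm_num
  have hma : (σ * ma) ^ 2 < 1 := by nlinarith
  have hma' : |σ * ma| < 1 := by
    rw [← sq_lt_one_iff_abs_lt_one]; exact hma
  obtain ⟨h1, h2⟩ := abs_lt.1 hma'
  have hpos : 0 < 2 + 2 * (σ * ma) := by linarith
  have hl : 0 < √(2 + 2 * (σ * ma)) := sqrt_pos.2 hpos
  have hls : √(2 + 2 * (σ * ma)) ^ 2 = 2 + 2 * (σ * ma) := sq_sqrt hpos.le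
  set l := √(2 + 2 * (σ * ma))
  refine ⟨l, (σ + ma) / l, mb / l, hl, ?_, by field_simp, by field_simp, ?_, ?_⟩
  · nlinarith
  · field_simp
    rw [hls]; nlinarith
  · field_simp
    rw [hls]; nlinarith

set_option maxHeartbeats 4000000 in
/-- The truncation `φ(σ(u - u₀))` has small average on the arc of radius `R + t`, up to the defect
of the radial component of `∇u / W`: testing the equation with the truncated field. The constant
does not depend on the scale `h`. -/
lemma psi_bound {H R ma mb r0 θ0 : ℝ} {Ω O : Set (ℝ × ℝ)} (E : Endpoint H R ma mb r0 θ0 Ω O)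
    {σ : ℝ} (hσ' : σ = 1 ∨ σ = -1) : ∃ C2 > 0, ∃ h0 > 0, ∀ h, 0 < h → h ≤ h0 →
    ∀ (u : ℝ × ℝ → ℝ) (u0 c : ℝ), DivCMC H Ω u →
    (∀ x ∈ O, x ∉ Ω → ∀ᶠ y in nhds x, y ∈ Ω → |u y - u0| < c) →
    ∀ t, 0 ≤ t → t ≤ h / 4 → (∀ θ ∈ Icc (h / (8 * R)) (h / (4 * R)), Pol (R + t) θ ∈ Ω) →
    ∫ θ in (h / (8 * R))..(h / (4 * R)), bump (h / (8 * R)) (h / (4 * R)) θ *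
        phi c (σ * (u (Pol (R + t) θ) - u0))
      ≤ C2 * (Bq u (h / (8 * R)) (h / (4 * R)) (R + t) + (∫ θ in 0..θ0, (1 - Xn u R θ))
        + h ^ 2 + t) := by
  have hR := E.R_pos
  have hH := E.hH
  have hmb := E.hmb
  have hm := E.hm
  have hmb1 : mb ≤ 1 := by nlinarith [sq_nonneg ma]
  have hr0 := E.hr0
  have hθ0 := E.hθ0
  have hσ : |σ| = 1 := by rcases hσ' with rfl | rfl <;> simp
  obtain ⟨l, e1, e2, hl0, hl2, he1, he2, he, hσe⟩ := exists_bisector hm hmb hσ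
  set c0 := (1 - l / 2) / 2 with hc0
  have hc0pos : 0 < c0 := by rw [hc0]; linarith
  set z := (73 / mb) ^ 2 with hz
  have hzpos : 0 < z := by positivity
  set T := z + z * R + 2800 * z * (2 * H + 1) / mb ^ 2 + 12800 * z / mb with hT
  have hTpos : 0 < T := by positivity
  refine ⟨4 / (R * c0) * T, by positivity, min (min (mb ^ 2 * R / 288) (mb * R / 50))
    (min (min (mb * r0 / 13) (mb * R * r0 / 50)) (min (mb * R * θ0 / 100) (4 * R * c0))),
    by positivity, ?_⟩
  intro h hh hh0 u u0 c hu hbd t ht0 ht hΩt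
  simp only [le_min_iff] at hh0
  obtain ⟨⟨b1, b2⟩, ⟨b3, b4⟩, b5, b6⟩ := hh0
  have hαdef : h / (8 * R) < h / (4 * R) := by
    rw [div_lt_div_iff₀ (by positivity) (by positivity)]; linarith [mul_pos hh hR]
  have hba : h / (4 * R) - h / (8 * R) = h / (8 * R) := by field_simp; norm_num
  have hα0 : 0 < h / (8 * R) := by positivity
  have hβc : h / (4 * R) ≤ c0 := by rw [div_le_iff₀ (by positivity)]; linarith
  have hβm : h / (4 * R) ≤ 50 * h / (mb * R) := by
    rw [div_le_div_iff₀ (by positivity) (by positivity)]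
    have : h * R * mb ≤ h * R * 1 := by gcongr
    linarith [mul_pos hh hR]
  have hhs : 72 * h / mb ≤ mb * R / 4 := by
    rw [div_le_iff₀ hmb]; linarith
  have hhm : h ≤ h / mb := by
    rw [le_div_iff₀ hmb]; exact mul_le_of_le_one_right hh.le hmb1
  have hθ1 : 50 * h / (mb * R) ≤ 1 := by rw [div_le_one (by positivity)]; linarith
  have hdr : 13 * h / mb ≤ r0 := by rw [div_le_iff₀ hmb]; linarith
  have hθr : 50 * h / (mb * R) ≤ r0 := by rw [div_le_iff₀ (by positivity)]; linarith
  have hθθ : 50 * h / (mb * R) < θ0 := by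
    rw [div_lt_iff₀ (by positivity)]; linarith [mul_pos (mul_pos hmb hR) hθ0]
  have hd13 : 13 * h ≤ 13 * h / mb := by
    have : 13 * h / mb = 13 * (h / mb) := by ring
    linarith
  have hdR : 13 * h / mb ≤ R / 2 := by
    have : 13 * h / mb ≤ 72 * h / mb := by gcongr; norm_num
    have : mb * R ≤ R := mul_le_of_le_one_left hR.le hmb1
    linarith
  have hy72 : ∀ ρ θ, |ρ - R| ≤ 13 * h / mb → |θ| ≤ 50 * h / (mb * R) →
      (ρ * cos θ - R) ^ 2 + (ρ * sin θ) ^ 2 ≤ (72 * h / mb) ^ 2 := by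
    intro ρ θ hρ hθ
    have hn := dist_sq_le (θ := θ) hR (by linarith [(abs_le.1 hρ).2] : ρ ≤ 2 * R)
    have e1 : (ρ - R) ^ 2 ≤ (13 * h / mb) ^ 2 := by rw [← sq_abs (ρ - R)]; gcongr
    have e2 : 2 * R ^ 2 * θ ^ 2 ≤ 2 * R ^ 2 * (50 * h / (mb * R)) ^ 2 := by
      rw [← sq_abs θ]; gcongr
    have e4 : (13 * h / mb) ^ 2 + 2 * R ^ 2 * (50 * h / (mb * R)) ^ 2
      = 5169 * (h / mb) ^ 2 := by field_simp; norm_num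
    have e5 : (72 * h / mb) ^ 2 = 5184 * (h / mb) ^ 2 := by field_simp; norm_num
    have : 0 ≤ (h / mb) ^ 2 := by positivity
    linarith
  have hZ : ∀ ρ θ, |ρ - R| ≤ 13 * h / mb → |θ| ≤ 50 * h / (mb * R) →
      zet e1 e2 R h (Pol ρ θ) ≤ z * h ^ 2 := by
    intro ρ θ hρ hθ
    refine (zet_le he hh.le (by positivity) (hy72 ρ θ hρ hθ)).trans ?_
    have e : z * h ^ 2 = (73 * (h / mb)) ^ 2 := by rw [hz]; field_simp
    rw [e]
    have : h + 72 * h / mb ≤ 73 * (h / mb) := by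
      have e' : 72 * h / mb = 72 * (h / mb) := by ring
      rw [e']; linarith
    gcongr
  set F1 := tfld Ω u σ e1 e2 R h c u0 (X1 u) e1 with hF1
  set F2 := tfld Ω u σ e1 e2 R h c u0 (X2 u) e2 with hF2
  set d := 13 * h / mb with hd
  set θm := 50 * h / (mb * R) with hθm
  set α := h / (8 * R) with hα
  set β := h / (4 * R) with hβ
  have hO : ∀ ρ θ, |ρ - R| ≤ d → |θ| ≤ θm → Pol ρ θ ∈ O := fun ρ θ h1 h2 =>
    E.box ρ θ (h1.trans hdr) (h2.trans hθr)
  have hC : ∀ ρ θ, |ρ - R| ≤ d → |θ| ≤ θm →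
      ContDiffAt ℝ 1 F1 (Pol ρ θ) ∧ ContDiffAt ℝ 1 F2 (Pol ρ θ) := fun ρ θ h1 h2 =>
    ⟨contDiffAt_tfld E.hΩ hσ hu.1 _ _ (fun x hx => (contDiffAt_X (hu.contDiffAt E.hΩ hx)).1)
      (hbd _ (hO ρ θ h1 h2)),
     contDiffAt_tfld E.hΩ hσ hu.1 _ _ (fun x hx => (contDiffAt_X (hu.contDiffAt E.hΩ hx)).2)
      (hbd _ (hO ρ θ h1 h2))⟩
  have flux := flux_ineq F1 F2 (σ := σ) (R := R) (d := d) (θm := θm) (Z := z * h ^ 2)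
    (κ := z * h ^ 2 * (2 * H + 1)) (t := t) (α := α) (β := β) hσ' hR hdR ht0 (by linarith) hαdef
    (by linarith) hβm (by positivity) hC
    (fun ρ θ h1 h2 => by
      refine le_trans ?_ (dvg_tfld_ge hH E.hΩ hu hσ he (hbd _ (hO ρ θ h1 h2)))
      have := hZ ρ θ h1 h2
      have : zet e1 e2 R h (Pol ρ θ) * (2 * H + 1) ≤ z * h ^ 2 * (2 * H + 1) := by gcongr
      linarith)
    (fun ρ θ h1 h2 => by
      refine (abs_Ftg_tfld_le Ω u R h c u0 hσ he ρ θ).trans ?_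
      have := hZ ρ θ h1 h2
      linarith)
    (fun ρ θ h1 h2 h3 h4 => by
      have key : Pol ρ θ ∈ Ω → zet e1 e2 R h (Pol ρ θ) = 0 := fun hp =>
        zet_eq_zero_of_far hR hm hmb hσ hl2.le hl0 he1 he2 hh hhs hθ1
          (E.disc ρ θ (h1.trans hdr) (h2.trans hθr) hp) h3 h1 h2 h4
      exact ⟨tfld_eq_zero u σ e1 e2 R h c u0 _ _ key, tfld_eq_zero u σ e1 e2 R h c u0 _ _ key⟩)
  have hn1 : ∀ θ, σ * (e1 * cos θ + e2 * sin θ) ≤ 1 := by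
    intro θ
    have := abs_comb_le_one he.le (by rw [add_comm]; exact sin_sq_add_cos_sq θ :
      cos θ ^ 2 + sin θ ^ 2 = 1)
    calc _ ≤ |σ * (e1 * cos θ + e2 * sin θ)| := le_abs_self _
      _ ≤ 1 := by rw [abs_mul, hσ, one_mul]; exact this
  have hθm0 : 0 ≤ θm := by positivity
  have hd0 : 0 ≤ d := by positivity
  have htd : |R + t - R| ≤ d := by
    rw [add_sub_cancel_left, abs_of_nonneg ht0]; linarith
  set ψ : ℝ → ℝ := fun θ => phi c (σ * (u (Pol (R + t) θ) - u0)) with hψ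
  have cψ : ContinuousOn ψ (Icc α β) := by
    intro θ hθ
    apply ContinuousAt.continuousWithinAt
    have h1 : ContinuousAt u (Pol (R + t) θ) := (hu.contDiffAt E.hΩ (hΩt θ hθ)).continuousAt
    have h2 := continuousAt_snd_comp h1
    exact (contDiff_phi c).continuous.continuousAt.comp
      (continuousAt_const.mul (h2.sub continuousAt_const))
  have cX : ContinuousOn (Xn u (R + t)) (Icc α β) := fun θ hθ =>
    (continuousAt_Xn E.hΩ hu (hΩt θ hθ)).continuousWithinAt
  have cF : ∀ ρ, |ρ - R| ≤ d → ContinuousOn (Fnr F1 F2 ρ) (Icc (-θm) θm) := fun ρ hρ θ hθ =>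
    (continuousAt_Fnr (hC ρ θ hρ (abs_le.2 hθ)).1.continuousAt
      (hC ρ θ hρ (abs_le.2 hθ)).2.continuousAt).continuousWithinAt
  have cg : Continuous (bump α β) := (contDiff_bump α β).continuous
  -- the flux through the part of the arc moved to radius `R + t`
  have T1 : h ^ 2 / 4 * R * c0 * (∫ θ in α..β, bump α β θ * ψ θ)
      - z * h ^ 2 * Bq u α β (R + t)
      ≤ σ * ∫ θ in (-θm)..θm, bump α β θ * (R + t) * Fnr F1 F2 (R + t) θ := by
    have e : ∀ θ, bump α β θ * (R + t) * Fnr F1 F2 (R + t) θ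
        = bump α β θ * ((R + t) * Fnr F1 F2 (R + t) θ) := fun θ => mul_assoc _ _ _
    simp_rw [e]
    rw [integral_bump_mul hαdef (by linarith) hβm]
    unfold Bq
    rw [← intervalIntegral.integral_const_mul, ← intervalIntegral.integral_const_mul,
      ← intervalIntegral.integral_const_mul, ← intervalIntegral.integral_sub]
    · apply intervalIntegral.integral_mono_on hαdef.le
      · exact ContinuousOn.intervalIntegrable_of_Icc hαdef.le (by fun_prop)
      · have := (cF (R + t) htd).mono (Icc_subset_Icc (by linarith : -θm ≤ α) hβm)
        exact ContinuousOn.intervalIntegrable_of_Icc hαdef.le (by fun_prop)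
      · intro θ hθ
        have hθm' : |θ| ≤ θm := by rw [abs_le]; constructor <;> linarith [hθ.1, hθ.2]
        have hfn := Fnr_tfld u e1 e2 R h c u0 hσ (hΩt θ hθ)
        have hg := bump_nonneg α β θ
        have hψ0 : 0 ≤ ψ θ := phi_nonneg _ _
        have hψ1 : ψ θ ≤ 1 := phi_le_one _ _
        have hε := one_sub_Xn_nonneg u (R + t) θ
        have hz1 := hZ (R + t) θ htd hθm'
        have hz2 : h ^ 2 / 4 ≤ zet e1 e2 R h (Pol (R + t) θ) := by
          apply zet_ge he hh.le
          refine (dist_sq_le hR (by linarith)).trans ?_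
          have hθ2 : θ ^ 2 ≤ β ^ 2 := by
            have := hθ.1; have := hθ.2
            have : 0 ≤ θ := by linarith
            gcongr
          have hr : 2 * R ^ 2 * β ^ 2 = h ^ 2 / 8 := by rw [hβ]; field_simp; norm_num
          have h3 : 2 * R ^ 2 * θ ^ 2 ≤ 2 * R ^ 2 * β ^ 2 := by gcongr
          have h4 : t ^ 2 ≤ (h / 4) ^ 2 := by gcongr
          rw [add_sub_cancel_left]
          linarith [sq_nonneg h]
        have hA : c0 ≤ 1 - σ * (e1 * cos θ + e2 * sin θ) := by
          have hθ0' : 0 ≤ θ := by linarith [hθ.1]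
          have a1 : σ * e1 * cos θ ≤ l / 2 := by
            rw [hσe]; exact mul_le_of_le_one_right (by linarith) (cos_le_one θ)
          have a2 : σ * e2 * sin θ ≤ θ := by
            have h1 : |sin θ| ≤ θ := by
              have := abs_sin_le_abs (x := θ); rwa [abs_of_nonneg hθ0'] at this
            have h2 : |σ * e2| ≤ 1 := by
              rw [abs_mul, hσ, one_mul, abs_le_one_iff_mul_self_le_one]
              linarith [sq_nonneg e1]
            calc σ * e2 * sin θ ≤ |σ * e2 * sin θ| := le_abs_self _
              _ = |σ * e2| * |sin θ| := abs_mul _ _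
              _ ≤ 1 * θ := by gcongr
              _ = θ := one_mul _
          have : θ ≤ c0 := hθ.2.trans hβc
          have e : σ * (e1 * cos θ + e2 * sin θ) = σ * e1 * cos θ + σ * e2 * sin θ := by ring
          rw [e]; linarith
        have main : h ^ 2 / 4 * R * c0 * ψ θ - z * h ^ 2 * ((R + t) * (1 - Xn u (R + t) θ))
            ≤ (R + t) * (σ * Fnr F1 F2 (R + t) θ) := by
          rw [hfn]
          set ζ := zet e1 e2 R h (Pol (R + t) θ)
          set A := 1 - σ * (e1 * cos θ + e2 * sin θ)
          set ε := 1 - Xn u (R + t) θ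
          change _ ≤ (R + t) * (ζ * ψ θ * (A - ε))
          have hζ0 : 0 ≤ ζ := zet_nonneg _ _ _ _ _
          have m1 : (h ^ 2 / 4) * R * c0 * ψ θ ≤ ζ * (R + t) * A * ψ θ := by
            have : R ≤ R + t := by linarith
            gcongr
          have m2 : ζ * ψ θ * ((R + t) * ε) ≤ (z * h ^ 2) * 1 * ((R + t) * ε) := by gcongr
          linarith
        have := mul_le_mul_of_nonneg_left main hg
        linarith
    · exact ContinuousOn.intervalIntegrable_of_Icc hαdef.le (by fun_prop)
    · exact ContinuousOn.intervalIntegrable_of_Icc hαdef.le (by fun_prop)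
  -- the flux through the remaining part of the arc of radius `R`
  have hInt := intervalIntegrable_defect E.hΩ hu hθ0.le E.arc
  have hsub : IntervalIntegrable (fun θ => 1 - Xn u R θ) volume 0 θm :=
    hInt.mono_set (by rw [uIcc_of_le hθm0, uIcc_of_le hθ0.le]; exact Icc_subset_Icc le_rfl hθθ.le)
  have hR0 : |R - R| ≤ d := by simpa using hd0
  have cL : ContinuousOn (fun θ => (1 - bump α β θ) * R * Fnr F1 F2 R θ) (Icc (-θm) θm) := by
    have := cF R hR0
    fun_prop
  have T2 : -(z * h ^ 2 * R * ∫ θ in 0..θ0, (1 - Xn u R θ))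
      ≤ σ * ∫ θ in (-θm)..θm, (1 - bump α β θ) * R * Fnr F1 F2 R θ := by
    have i1 : IntervalIntegrable (fun θ => (1 - bump α β θ) * R * Fnr F1 F2 R θ) volume (-θm) 0 :=
      ContinuousOn.intervalIntegrable_of_Icc (by linarith)
        (cL.mono (Icc_subset_Icc le_rfl hθm0))
    have i2 : IntervalIntegrable (fun θ => (1 - bump α β θ) * R * Fnr F1 F2 R θ) volume 0 θm :=
      ContinuousOn.intervalIntegrable_of_Icc hθm0
        (cL.mono (Icc_subset_Icc (by linarith) le_rfl))
    have hneg : ∀ θ, -θm ≤ θ → θ ≤ 0 → Fnr F1 F2 R θ = 0 := by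
      intro θ h1 h2
      have hmem : Pol R θ ∉ Ω := E.notMem h2
        ((abs_le.2 ⟨h1, by linarith⟩).trans hθr) (by linarith)
      exact Fnr_eq_zero (tfld_eq_zero u σ e1 e2 R h c u0 _ _ fun h => absurd h hmem)
        (tfld_eq_zero u σ e1 e2 R h c u0 _ _ fun h => absurd h hmem)
    have z1 : ∫ θ in (-θm)..0, (1 - bump α β θ) * R * Fnr F1 F2 R θ = 0 := by
      rw [intervalIntegral.integral_congr (g := fun _ => (0 : ℝ))]
      · simp
      · intro θ hθ
        rw [uIcc_of_le (by linarith)] at hθ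
        simp only
        rw [hneg θ hθ.1 hθ.2, mul_zero]
    rw [← intervalIntegral.integral_add_adjacent_intervals i1 i2, z1, zero_add,
      ← intervalIntegral.integral_const_mul σ]
    have s1 : -(z * h ^ 2 * R * ∫ θ in 0..θm, (1 - Xn u R θ))
        ≤ ∫ θ in 0..θm, σ * ((1 - bump α β θ) * R * Fnr F1 F2 R θ) := by
      rw [← intervalIntegral.integral_const_mul (z * h ^ 2 * R), ← intervalIntegral.integral_neg]
      apply intervalIntegral.integral_mono_on hθm0 (hsub.const_mul _).neg (i2.const_mul σ)
      intro θ hθ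
      have hε := one_sub_Xn_nonneg u R θ
      change -(z * h ^ 2 * R * (1 - Xn u R θ)) ≤ _
      rcases eq_or_lt_of_le hθ.1 with h0 | h0
      · rw [hneg θ (by linarith) h0.ge]
        have : 0 ≤ z * h ^ 2 * R * (1 - Xn u R θ) := by positivity
        linarith
      · have hfn := Fnr_tfld u e1 e2 R h c u0 hσ (E.arc θ h0 (lt_of_le_of_lt hθ.2 hθθ))
        have hz1 := hZ R θ hR0 (by rw [abs_of_pos h0]; exact hθ.2)
        obtain ⟨q0, q1⟩ := zet_mul_phi_bounds (c := c) (s := σ * (u (Pol R θ) - u0)) (e1 := e1)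
          (e2 := e2) (R := R) (h := h) (Pol R θ)
        have hg0 := bump_nonneg α β θ
        have hg1 := bump_le_one hαdef θ
        have hA := hn1 θ
        have e : σ * ((1 - bump α β θ) * R * Fnr F1 F2 R θ)
          = (1 - bump α β θ) * R * (σ * Fnr F1 F2 R θ) := by ring
        rw [e, hfn]
        set k := zet e1 e2 R h (Pol R θ) * phi c (σ * (u (Pol R θ) - u0))
        set A := 1 - σ * (e1 * cos θ + e2 * sin θ)
        set ε := 1 - Xn u R θ
        have hA0 : 0 ≤ A := by linarith
        have hg2 : 0 ≤ 1 - bump α β θ := by linarith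
        have m1 : 0 ≤ (1 - bump α β θ) * R * (k * A) := by positivity
        have m2 : (1 - bump α β θ) * (R * k * ε) ≤ 1 * (R * (z * h ^ 2) * ε) := by
          have : k ≤ z * h ^ 2 := q1.trans hz1
          gcongr
          linarith
        linarith
    have s2 : ∫ θ in 0..θm, (1 - Xn u R θ) ≤ ∫ θ in 0..θ0, (1 - Xn u R θ) := by
      apply intervalIntegral.integral_mono_interval le_rfl hθm0 hθθ.le _ hInt
      exact Eventually.of_forall fun θ => one_sub_Xn_nonneg u R θ
    have s3 : z * h ^ 2 * R * ∫ θ in 0..θm, (1 - Xn u R θ)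
        ≤ z * h ^ 2 * R * ∫ θ in 0..θ0, (1 - Xn u R θ) := by gcongr
    linarith
  rw [mul_add] at flux
  set Ψ := ∫ θ in α..β, bump α β θ * ψ θ
  set B := Bq u α β (R + t) with hB
  set I := ∫ θ in 0..θ0, (1 - Xn u R θ) with hI
  have hB0 : 0 ≤ B := by
    apply intervalIntegral.integral_nonneg hαdef.le
    intro θ _
    have := bump_nonneg α β θ
    have := one_sub_Xn_nonneg u (R + t) θ
    positivity
  have hI0 : 0 ≤ I := by
    apply intervalIntegral.integral_nonneg hθ0.le
    intro θ _
    exact one_sub_Xn_nonneg u R θ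
  have hRHS : 2 * θm * (2 * R * (z * h ^ 2 * (2 * H + 1)) * (d + t) + 16 / (β - α) * (z * h ^ 2) * t)
      ≤ h ^ 2 * (2800 * z * (2 * H + 1) / mb ^ 2 * h ^ 2 + 12800 * z / mb * t) := by
    have e1 : 2 * θm * (16 / (β - α) * (z * h ^ 2) * t) = h ^ 2 * (12800 * z / mb * t) := by
      rw [hba, hθm, hα]; field_simp; ring
    have e2 : d + t ≤ 14 * h / mb := by
      have e : 14 * h / mb = d + h / mb := by rw [hd]; ring
      rw [e]; linarith
    have e3 : 2 * θm * (2 * R * (z * h ^ 2 * (2 * H + 1)) * (d + t))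
        ≤ 2 * θm * (2 * R * (z * h ^ 2 * (2 * H + 1)) * (14 * h / mb)) := by gcongr
    have e4 : 2 * θm * (2 * R * (z * h ^ 2 * (2 * H + 1)) * (14 * h / mb))
        = h ^ 2 * (2800 * z * (2 * H + 1) / mb ^ 2 * h ^ 2) := by
      rw [hθm]; field_simp; norm_num
    linarith
  have fin : h ^ 2 * (R * c0 / 4 * Ψ) ≤ h ^ 2 * (z * B + z * R * I
      + 2800 * z * (2 * H + 1) / mb ^ 2 * h ^ 2 + 12800 * z / mb * t) := by linarith
  have fin2 := le_of_mul_le_mul_left fin (by positivity)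
  have fin3 : R * c0 / 4 * Ψ ≤ T * (B + I + h ^ 2 + t) := by
    have q1 : 0 ≤ 2800 * z * (2 * H + 1) / mb ^ 2 := by positivity
    have q2 : 0 ≤ 12800 * z / mb := by positivity
    have q3 : 0 ≤ z * R := by positivity
    have hh2 : 0 ≤ h ^ 2 := by positivity
    set k1 := 2800 * z * (2 * H + 1) / mb ^ 2
    set k2 := 12800 * z / mb
    set k3 := z * R
    rw [hT]
    have : 0 ≤ z * (I + h ^ 2 + t) + k3 * (B + h ^ 2 + t) + k1 * (B + I + t)
      + k2 * (B + I + h ^ 2) := by positivity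
    linarith
  have e : 4 / (R * c0) * T * (B + I + h ^ 2 + t) = 4 / (R * c0) * (T * (B + I + h ^ 2 + t)) := by
    ring
  rw [e]
  calc Ψ = 4 / (R * c0) * (R * c0 / 4 * Ψ) := by field_simp
    _ ≤ _ := by gcongr

/-! ### Logarithmic growth and the contradiction -/

/-- On an arc where the defect is small and `u` is mostly close to `u₀`, the weighted integral of
`W / (1 + (u - u₀)²)` is large; `lam` is a free parameter. -/
lemma slice_bound {H : ℝ} {Ω : Set (ℝ × ℝ)} (hΩ : IsOpen Ω) {u : ℝ × ℝ → ℝ}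
    (hu : DivCMC H Ω u) {R ρ α β c u0 lam : ℝ} (hR : 0 < R) (hρ : R ≤ ρ) (hαβ : α < β)
    (hlam : 0 < lam) (hp : ∀ θ ∈ Icc α β, Pol ρ θ ∈ Ω) :
    3 * lam / 2 * (1 / (1 + (c + 1) ^ 2)) * (8 / 15 * (β - α)
        - 2 * (∫ θ in α..β, bump α β θ * phi c (1 * (u (Pol ρ θ) - u0)))
        - 2 * (∫ θ in α..β, bump α β θ * phi c (-1 * (u (Pol ρ θ) - u0))))
        - lam ^ 3 * (Bq u α β ρ / R)
      ≤ ∫ θ in α..β, bump α β θ * (Wgraph u (Pol ρ θ) / (1 + (u (Pol ρ θ) - u0) ^ 2)) := by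
  have hρ0 : 0 < ρ := lt_of_lt_of_le hR hρ
  have cu : ContinuousOn (fun θ => u (Pol ρ θ)) (Icc α β) := fun θ hθ =>
    (continuousAt_snd_comp (hu.contDiffAt hΩ (hp θ hθ)).continuousAt).continuousWithinAt
  have cW : ContinuousOn (fun θ => Wgraph u (Pol ρ θ)) (Icc α β) := fun θ hθ =>
    (continuousAt_snd_comp
      (contDiffAt_W (hu.contDiffAt hΩ (hp θ hθ))).continuousAt).continuousWithinAt
  have cX : ContinuousOn (Xn u ρ) (Icc α β) := fun θ hθ =>
    (continuousAt_Xn hΩ hu (hp θ hθ)).continuousWithinAt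
  have cg : Continuous (bump α β) := (contDiff_bump α β).continuous
  have cphi : Continuous (phi c) := (contDiff_phi c).continuous
  have cψ : ∀ σ : ℝ, ContinuousOn (fun θ => phi c (σ * (u (Pol ρ θ) - u0))) (Icc α β) := fun σ =>
    cphi.comp_continuousOn (continuousOn_const.mul (cu.sub continuousOn_const))
  have c1 := cψ 1
  have c2 := cψ (-1)
  set k := 1 / (1 + (c + 1) ^ 2) with hk
  have hk0 : 0 < k := by positivity
  have hk1 : k ≤ 1 := by
    rw [hk, div_le_one (by positivity)]; linarith [sq_nonneg (c + 1)]
  set v : ℝ → ℝ := fun θ => u (Pol ρ θ) - u0 with hv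
  have hB : Bq u α β ρ / ρ ≤ Bq u α β ρ / R := by
    have : 0 ≤ Bq u α β ρ := by
      apply intervalIntegral.integral_nonneg hαβ.le
      intro θ _
      have := bump_nonneg α β θ
      have := one_sub_Xn_nonneg u ρ θ
      positivity
    gcongr
  have hB' : Bq u α β ρ / ρ = ∫ θ in α..β, bump α β θ * (1 - Xn u ρ θ) := by
    unfold Bq
    rw [div_eq_inv_mul, ← intervalIntegral.integral_const_mul]
    congr 1; ext θ; field_simp
  have hcont : ContinuousOn
      (fun θ => bump α β θ * (Wgraph u (Pol ρ θ) / (1 + v θ ^ 2))) (Icc α β) := by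
    refine cg.continuousOn.mul (cW.div ?_ fun θ _ => by positivity)
    exact continuousOn_const.add ((cu.sub continuousOn_const).pow 2)
  have mono : ∫ θ in α..β, (3 * lam / 2 * k * (bump α β θ - 2 * (bump α β θ * phi c (1 * v θ))
        - 2 * (bump α β θ * phi c (-1 * v θ))) - lam ^ 3 * (bump α β θ * (1 - Xn u ρ θ)))
      ≤ ∫ θ in α..β, bump α β θ * (Wgraph u (Pol ρ θ) / (1 + v θ ^ 2)) := by
    apply intervalIntegral.integral_mono_on hαβ.le
    · exact ContinuousOn.intervalIntegrable_of_Icc hαβ.le (by fun_prop)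
    · exact hcont.intervalIntegrable_of_Icc hαβ.le
    intro θ _
    have hg := bump_nonneg α β θ
    have hε := one_sub_Xn_nonneg u ρ θ
    have hW := W_ge u ρ θ lam hlam
    have hW0 := W_pos u (Pol ρ θ)
    have p1 := phi_nonneg c (1 * v θ)
    have p2 := phi_nonneg c (-1 * v θ)
    have key : 3 * lam / 2 * k * (1 - 2 * phi c (1 * v θ) - 2 * phi c (-1 * v θ))
        - lam ^ 3 * (1 - Xn u ρ θ) ≤ Wgraph u (Pol ρ θ) / (1 + v θ ^ 2) := by
      have hl3 : 0 ≤ lam ^ 3 * (1 - Xn u ρ θ) := by positivity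
      have hq : 0 ≤ 3 * lam / 2 * k := by positivity
      by_cases hs : phi c (1 * v θ) < 1 / 2 ∧ phi c (-1 * v θ) < 1 / 2
      · have a1 := lt_of_phi_lt hs.1
        have a2 := lt_of_phi_lt hs.2
        have a3 : v θ ^ 2 ≤ (c + 1) ^ 2 := by
          apply sq_le_sq' <;> linarith
        have a4 : k * Wgraph u (Pol ρ θ) ≤ Wgraph u (Pol ρ θ) / (1 + v θ ^ 2) := by
          rw [hk, one_div_mul_eq_div]
          gcongr
        have a5 := mul_le_mul_of_nonneg_left hW hk0.le
        have a6 := mul_le_mul_of_nonneg_right hk1 hl3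
        have a7 : 0 ≤ 3 * lam / 2 * k * (2 * phi c (1 * v θ) + 2 * phi c (-1 * v θ)) := by
          positivity
        linarith
      · have a1 : 1 - 2 * phi c (1 * v θ) - 2 * phi c (-1 * v θ) ≤ 0 := by
          by_contra hcon
          exact hs ⟨by linarith, by linarith⟩
        have a2 := mul_nonpos_of_nonneg_of_nonpos hq a1
        have a3 : 0 ≤ Wgraph u (Pol ρ θ) / (1 + v θ ^ 2) := by positivity
        linarith
    have := mul_le_mul_of_nonneg_left key hg
    linarith
  have i0 : IntervalIntegrable (bump α β) volume α β := cg.intervalIntegrable _ _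
  have i1 : IntervalIntegrable (fun θ => bump α β θ * phi c (1 * v θ)) volume α β :=
    ContinuousOn.intervalIntegrable_of_Icc hαβ.le (by fun_prop)
  have i2 : IntervalIntegrable (fun θ => bump α β θ * phi c (-1 * v θ)) volume α β :=
    ContinuousOn.intervalIntegrable_of_Icc hαβ.le (by fun_prop)
  have i3 : IntervalIntegrable (fun θ => bump α β θ * (1 - Xn u ρ θ)) volume α β :=
    ContinuousOn.intervalIntegrable_of_Icc hαβ.le (by fun_prop)
  rw [intervalIntegral.integral_sub
      (((i0.sub (i1.const_mul 2)).sub (i2.const_mul 2)).const_mul _) (i3.const_mul _),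
    intervalIntegral.integral_const_mul, intervalIntegral.integral_const_mul,
    intervalIntegral.integral_sub (i0.sub (i1.const_mul 2)) (i2.const_mul 2),
    intervalIntegral.integral_sub i0 (i1.const_mul 2), intervalIntegral.integral_const_mul,
    intervalIntegral.integral_const_mul, integral_bump hαβ, ← hB'] at mono
  have := mul_le_mul_of_nonneg_left hB (by positivity : 0 ≤ lam ^ 3)
  linarith

/-- Divergence of the bounded field `arctan (u - u₀) ∇u / W`. -/
lemma dvg_arctan_ge {H : ℝ} (hH : 0 < H) {Ω : Set (ℝ × ℝ)} (hΩ : IsOpen Ω) {u : ℝ × ℝ → ℝ}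
    (hu : DivCMC H Ω u) (u0 : ℝ) {x : ℝ × ℝ} (hx : x ∈ Ω) :
    Wgraph u x / (1 + (u x - u0) ^ 2) - (1 + 4 * H) ≤
      dvg (fun y => arctan (u y - u0) * X1 u y) (fun y => arctan (u y - u0) * X2 u y) x := by
  have hc := hu.contDiffAt hΩ hx
  have du := (hc.differentiableAt (by norm_num)).hasFDerivAt
  have da := (hasDerivAt_arctan (u x - u0)).comp_hasFDerivAt x (du.sub_const u0)
  have dX1 := ((contDiffAt_X hc).1.differentiableAt (by norm_num)).hasFDerivAt
  have dX2 := ((contDiffAt_X hc).2.differentiableAt (by norm_num)).hasFDerivAt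
  have g1 := congrArg (fun A : ℝ × ℝ →L[ℝ] ℝ => A (1, 0)) (da.mul dX1).fderiv
  have g2 := congrArg (fun A : ℝ × ℝ →L[ℝ] ℝ => A (0, 1)) (da.mul dX2).fderiv
  have e1 : pdx (fun y => arctan (u y - u0) * X1 u y) x
      = arctan (u x - u0) * fderiv ℝ (X1 u) x (1, 0)
        + X1 u x * ((1 + (u x - u0) ^ 2)⁻¹ * pdx u x) := by
    simp [Function.comp_def] at g1
    exact g1
  have e2 : pdy (fun y => arctan (u y - u0) * X2 u y) x
      = arctan (u x - u0) * fderiv ℝ (X2 u) x (0, 1)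
        + X2 u x * ((1 + (u x - u0) ^ 2)⁻¹ * pdy u x) := by
    simp [Function.comp_def] at g2
    exact g2
  have hdiv : fderiv ℝ (X1 u) x (1, 0) + fderiv ℝ (X2 u) x (0, 1) = 2 * H := hu.2 x hx
  unfold dvg
  rw [e1, e2, show pdx u x = X1 u x * Wgraph u x from (div_mul_cancel₀ _ (W_pos u x).ne').symm,
      show pdy u x = X2 u x * Wgraph u x from (div_mul_cancel₀ _ (W_pos u x).ne').symm]
  have hW := one_le_W u x
  have hX := X_sq u x
  have hq : (1 + (u x - u0) ^ 2)⁻¹ ≤ 1 := inv_le_one_of_one_le₀ (by linarith [sq_nonneg (u x - u0)])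
  have hq0 : 0 ≤ (1 + (u x - u0) ^ 2)⁻¹ := by positivity
  rw [div_eq_mul_inv]
  set q := (1 + (u x - u0) ^ 2)⁻¹
  set W := Wgraph u x
  have hWX : W * (X1 u x ^ 2 + X2 u x ^ 2) = W - 1 / W := by rw [hX]; field_simp
  have hW1 : 1 / W ≤ 1 := by rw [div_le_one (by linarith)]; exact hW
  have ha : -2 ≤ arctan (u x - u0) := by
    have := neg_pi_div_two_lt_arctan (u x - u0); linarith [pi_lt_four]
  have key : arctan (u x - u0) * fderiv ℝ (X1 u) x (1, 0) + X1 u x * (q * (X1 u x * W)) +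
      (arctan (u x - u0) * fderiv ℝ (X2 u) x (0, 1) + X2 u x * (q * (X2 u x * W)))
      = arctan (u x - u0) * (2 * H) + q * (W - 1 / W) := by
    rw [← hdiv, ← hWX]; ring
  rw [key]
  have m1 := mul_le_mul_of_nonneg_right ha (by linarith : 0 ≤ 2 * H)
  have m2 : q * (1 / W) ≤ 1 := by
    have : 0 ≤ 1 / W := by positivity
    exact mul_le_one₀ hq this hW1
  linarith

/-- If the integrals of `W / (1 + (u - u₀)²)` on the arcs of radius `ρ ∈ [R, R + δ]` are at least
`a / (s + ρ - R)`, then `log (1 + δ / s)` is bounded in terms of `a` and the geometry only. -/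
lemma log_bound {H : ℝ} (hH : 0 < H) {Ω : Set (ℝ × ℝ)} (hΩ : IsOpen Ω) {u : ℝ × ℝ → ℝ}
    (hu : DivCMC H Ω u) {R α β δ s a u0 : ℝ} (hR : 0 < R) (hαβ : α < β) (hδ : 0 < δ) (hδR : δ ≤ R)
    (hs : 0 < s) (hbox : ∀ ρ ∈ Icc R (R + δ), ∀ θ ∈ Icc α β, Pol ρ θ ∈ Ω)
    (ha : ∀ ρ ∈ Icc R (R + δ), a / (s + (ρ - R)) ≤
      ∫ θ in α..β, bump α β θ * (Wgraph u (Pol ρ θ) / (1 + (u (Pol ρ θ) - u0) ^ 2))) :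
    R * a * log ((s + δ) / s) ≤
      (β - α) * (2 * R * (1 + 4 * H) + 16 / (β - α)) * δ + 6 * R * (β - α) := by
  set F1 : ℝ × ℝ → ℝ := fun y => arctan (u y - u0) * X1 u y with hF1
  set F2 : ℝ × ℝ → ℝ := fun y => arctan (u y - u0) * X2 u y with hF2
  have hba : 0 < β - α := by linarith
  set K := 2 * R * (1 + 4 * H) + 16 / (β - α) with hK
  have cF : ∀ x ∈ Ω, ContDiffAt ℝ 1 F1 x ∧ ContDiffAt ℝ 1 F2 x := by
    intro x hx
    have hc := hu.contDiffAt hΩ hx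
    have h1 : ContDiffAt ℝ 1 (fun y => arctan (u y - u0)) x :=
      ((hc.of_le (by norm_num)).sub contDiffAt_const).arctan
    exact ⟨h1.mul (contDiffAt_X hc).1, h1.mul (contDiffAt_X hc).2⟩
  have harct : ∀ y, |arctan y| ≤ 2 := by
    intro y
    rw [abs_le]
    constructor <;> linarith [neg_pi_div_two_lt_arctan y, arctan_lt_pi_div_two y, pi_lt_four]
  have hn : ∀ ρ θ, |Fnr F1 F2 ρ θ| ≤ 2 := by
    intro ρ θ
    have e : Fnr F1 F2 ρ θ = arctan (u (Pol ρ θ) - u0) * Xn u ρ θ := by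
      simp only [Fnr, Xn, hF1, hF2]; ring
    rw [e, abs_mul]
    calc |arctan (u (Pol ρ θ) - u0)| * |Xn u ρ θ| ≤ 2 * 1 :=
          mul_le_mul (harct _) (abs_Xn_le u ρ θ) (abs_nonneg _) (by norm_num)
      _ = 2 := by norm_num
  have ht : ∀ ρ θ, |Ftg F1 F2 ρ θ| ≤ 2 := by
    intro ρ θ
    have e : Ftg F1 F2 ρ θ = arctan (u (Pol ρ θ) - u0) * Xt u ρ θ := by
      simp only [Ftg, Xt, hF1, hF2]; ring
    rw [e, abs_mul]
    calc |arctan (u (Pol ρ θ) - u0)| * |Xt u ρ θ| ≤ 2 * 1 :=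
          mul_le_mul (harct _) (abs_Xt_le u ρ θ) (abs_nonneg _) (by norm_num)
      _ = 2 := by norm_num
  have hden : ∀ ρ ∈ Icc R (R + δ), s + (ρ - R) ≠ 0 := fun ρ hρ => by
    have := hρ.1; exact (by linarith : 0 < s + (ρ - R)).ne'
  have hcl : ContinuousOn (fun ρ => a / (s + (ρ - R))) (Icc R (R + δ)) :=
    continuousOn_const.div (by fun_prop) hden
  have hil : IntervalIntegrable (fun ρ => a / (s + (ρ - R))) volume R (R + δ) :=
    hcl.intervalIntegrable_of_Icc (by linarith)
  have main := polar_div F1 F2 (fun _ => 1) (bump α β)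
    (fun ρ => R * (a / (s + (ρ - R))) - (β - α) * K) 0 R (R + δ) α β (by linarith) hαβ.le
    (fun ρ hρ θ hθ => (cF _ (hbox ρ hρ θ hθ)).1) (fun ρ hρ θ hθ => (cF _ (hbox ρ hρ θ hθ)).2)
    (fun _ _ => contDiffAt_const) (contDiff_bump α β)
    (fun ρ _ => by rw [bump_eq_zero hαβ (Or.inl le_rfl), zero_mul])
    (fun ρ _ => by rw [bump_eq_zero hαβ (Or.inr le_rfl), zero_mul])
    ((hil.const_mul R).sub intervalIntegrable_const) (fun ρ hρ => ?_)
  · have e1 : ∫ ρ in R..(R + δ), (R * (a / (s + (ρ - R))) - (β - α) * K)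
        = R * a * log ((s + δ) / s) - (β - α) * K * δ := by
      rw [intervalIntegral.integral_sub (hil.const_mul R) intervalIntegrable_const,
        intervalIntegral.integral_const, intervalIntegral.integral_const_mul]
      have : ∫ ρ in R..(R + δ), a / (s + (ρ - R)) = a * log ((s + δ) / s) := by
        simp_rw [div_eq_mul_inv a]
        rw [intervalIntegral.integral_const_mul]
        have e : ∀ ρ, (s + (ρ - R))⁻¹ = (fun x : ℝ => x⁻¹) (ρ + (s - R)) := fun ρ => by
          simp only; congr 1; ring
        simp_rw [e]
        rw [intervalIntegral.integral_comp_add_right (fun x : ℝ => x⁻¹),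
          integral_inv_of_pos (by linarith) (by linarith)]
        congr 3 <;> ring
      rw [this, smul_eq_mul]; ring
    rw [e1] at main
    have fl : ∀ ρ, 0 ≤ ρ → |∫ θ in α..β, 1 * bump α β θ * ρ * (0 + Fnr F1 F2 ρ θ)|
        ≤ 2 * ρ * (β - α) := by
      intro ρ hρ
      have := intervalIntegral.norm_integral_le_of_norm_le_const (a := α) (b := β)
        (f := fun θ => 1 * bump α β θ * ρ * (0 + Fnr F1 F2 ρ θ)) (C := 2 * ρ) (fun θ _ => ?_)
      · rwa [norm_eq_abs, abs_of_pos hba] at this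
      · have h1 := hn ρ θ
        have h2 := bump_le_one hαβ θ
        have h3 := bump_nonneg α β θ
        rw [norm_eq_abs, zero_add, one_mul, abs_mul, abs_of_nonneg (mul_nonneg h3 hρ)]
        calc _ ≤ 1 * ρ * 2 := by gcongr
          _ = 2 * ρ := by ring
    have f1 := (abs_le.1 (fl R hR.le)).1
    have f2 := (abs_le.1 (fl (R + δ) (by linarith))).2
    have f3 : 2 * (R + δ) * (β - α) ≤ 2 * (R + R) * (β - α) := by gcongr
    linarith
  · have hc := integrand_cont F1 F2 (bump α β) 0 1 (deriv (fun _ => (1 : ℝ)) ρ) ρ α β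
      (fun θ hθ => (cF _ (hbox ρ hρ θ hθ)).1) (fun θ hθ => (cF _ (hbox ρ hρ θ hθ)).2)
      (contDiff_bump α β)
    have hρ1 := hρ.1
    have hρ0 : 0 ≤ ρ := by linarith
    have hρ2 : ρ ≤ 2 * R := by linarith [hρ.2]
    have cW : ContinuousOn (fun θ => bump α β θ * (Wgraph u (Pol ρ θ) /
        (1 + (u (Pol ρ θ) - u0) ^ 2))) (Icc α β) := by
      intro θ hθ
      have hcu := hu.contDiffAt hΩ (hbox ρ hρ θ hθ)
      exact ((contDiff_bump α β).continuous.continuousAt.mul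
        ((continuousAt_snd_comp (contDiffAt_W hcu).continuousAt).div
          (continuousAt_const.add (((continuousAt_snd_comp hcu.continuousAt).sub
            continuousAt_const).pow 2))
          (by positivity : 1 + (u (Pol ρ θ) - u0) ^ 2 ≠ 0))).continuousWithinAt
    have iW := cW.intervalIntegrable_of_Icc hαβ.le (μ := volume)
    have hmono := intervalIntegral.integral_mono_on (μ := volume) hαβ.le
      ((iW.const_mul R).sub (intervalIntegrable_const (c := K))) (hc.intervalIntegrable_of_Icc hαβ.le)
      (fun θ hθ => ?_)
    · rw [intervalIntegral.integral_sub (iW.const_mul R) intervalIntegrable_const,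
        intervalIntegral.integral_const_mul, intervalIntegral.integral_const, smul_eq_mul] at hmono
      have := mul_le_mul_of_nonneg_left (ha ρ hρ) hR.le
      refine le_trans ?_ hmono
      linarith
    · have hdv := dvg_arctan_ge hH hΩ hu u0 (hbox ρ hρ θ hθ)
      have hg0 := bump_nonneg α β θ
      have hg1 := bump_le_one hαβ θ
      have hW0 : 0 ≤ Wgraph u (Pol ρ θ) / (1 + (u (Pol ρ θ) - u0) ^ 2) := by
        have := W_pos u (Pol ρ θ); positivity
      have hg' := abs_deriv_bump hαβ θ
      have m3 : -(16 / (β - α)) ≤ deriv (bump α β) θ * Ftg F1 F2 ρ θ := by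
        have : |deriv (bump α β) θ * Ftg F1 F2 ρ θ| ≤ 8 / (β - α) * 2 := by
          rw [abs_mul]; gcongr; exact ht ρ θ
        have := (abs_le.1 this).1
        have e : 8 / (β - α) * 2 = 16 / (β - α) := by ring
        linarith
      simp only [deriv_const, mul_zero, zero_mul, add_zero, one_mul]
      set w := Wgraph u (Pol ρ θ) / (1 + (u (Pol ρ θ) - u0) ^ 2)
      set D := dvg F1 F2 (Pol ρ θ)
      have m1 : bump α β θ * (ρ * (w - (1 + 4 * H))) ≤ bump α β θ * (ρ * D) := by gcongr
      have m2 : bump α β θ * ρ * (1 + 4 * H) ≤ 1 * (2 * R) * (1 + 4 * H) := by gcongr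
      have m4 : R * (bump α β θ * w) ≤ ρ * (bump α β θ * w) := by gcongr
      linarith

/-- The arcs near an endpoint configuration cannot carry arbitrarily small defect: the bound `s`
depends on the geometry and on the oscillation bound only. -/
lemma defect_ge {H R ma mb r0 θ0 : ℝ} {Ω O : Set (ℝ × ℝ)} (E : Endpoint H R ma mb r0 θ0 Ω O)
    (M : ℝ) : ∃ s > 0, ∀ (u : ℝ × ℝ → ℝ) (u0 : ℝ), DivCMC H Ω u →
    (∀ x ∈ O, x ∉ Ω → ∀ᶠ y in nhds x, y ∈ Ω → |u y - u0| < M) →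
    s ^ 2 < ∫ θ in 0..θ0, (1 - Xn u R θ) := by
  have hR := E.R_pos
  have hH := E.hH
  have hθ0 := E.hθ0
  obtain ⟨D1, hD1, h1, hh1, ψ1⟩ := psi_bound E (σ := 1) (Or.inl rfl)
  obtain ⟨D2, hD2, h2, hh2, ψ2⟩ := psi_bound E (σ := -1) (Or.inr rfl)
  set D := D1 + D2 with hD
  have hD0 : 0 < D := by positivity
  -- the scale `h` is fixed so small that the `h ^ 2` term of `psi_bound` is negligible
  obtain ⟨h, hh, b1, b2, b3, b4⟩ : ∃ h > 0, h ≤ h1 ∧ h ≤ h2 ∧ h ≤ 2 * R * θ0 ∧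
      h ≤ 1 / (120 * R * D) := by
    refine ⟨min (min h1 h2) (min (2 * R * θ0) (1 / (120 * R * D))), by positivity, ?_, ?_, ?_, ?_⟩
    exacts [(min_le_left _ _).trans (min_le_left _ _), (min_le_left _ _).trans (min_le_right _ _),
      (min_le_right _ _).trans (min_le_left _ _), (min_le_right _ _).trans (min_le_right _ _)]
  replace ψ1 := ψ1 h hh b1
  replace ψ2 := ψ2 h hh b2
  have hα0 : 0 < h / (8 * R) := by positivity
  have hba : h / (4 * R) - h / (8 * R) = h / (8 * R) := by field_simp; norm_num
  have hβ : h / (4 * R) ≤ θ0 / 2 := by rw [div_le_iff₀ (by positivity)]; linarith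
  have hN : 8 / 15 * (h / (8 * R)) = h / (15 * R) := by field_simp
  set α := h / (8 * R) with hα
  set β := h / (4 * R) with hβ'
  have hαβ : α < β := by linarith
  have hh2 : 2 * D * h ^ 2 ≤ h / (60 * R) := by
    have : 2 * D * h ^ 2 = 2 * D * h * h := by ring
    rw [this]
    have : 2 * D * h * h ≤ 2 * D * h * (1 / (120 * R * D)) := by gcongr
    refine this.trans_eq ?_
    field_simp; norm_num
  set k := R + 32 / ((β - α) * R) with hk
  have hk0 : 0 < k := by rw [hk, hba]; positivity
  -- the width `δ` of the region swept by the arcs of radius `R + t`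
  have htube : ∀ᶠ ρ in nhds R, ∀ θ ∈ Icc α β, Pol ρ θ ∈ Ω := by
    refine isCompact_Icc.eventually_forall_of_forall_eventually fun θ hθ => ?_
    have hc : Continuous fun x : ℝ × ℝ => Pol x.1 x.2 := contDiff_Pol.continuous
    exact hc.continuousAt.eventually_mem (E.hΩ.mem_nhds
      (E.arc θ (by linarith [hθ.1]) (by linarith [hθ.2])))
  obtain ⟨δ0, hδ0, htube⟩ := Metric.eventually_nhds_iff.1 htube
  obtain ⟨δ, hδ, c1, c2, c3, c4, c5⟩ : ∃ δ > 0, δ ≤ δ0 / 2 ∧ δ ≤ 1 ∧ δ ≤ R ∧ δ ≤ h / 4 ∧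
      δ ≤ h / (120 * R * D * (4 * k + 2)) := by
    refine ⟨min (δ0 / 2) (min (min 1 R) (min (h / 4) (h / (120 * R * D * (4 * k + 2))))),
      by positivity, min_le_left _ _, ?_, ?_, ?_, ?_⟩
    exacts [(min_le_right _ _).trans ((min_le_left _ _).trans (min_le_left _ _)),
      (min_le_right _ _).trans ((min_le_left _ _).trans (min_le_right _ _)),
      (min_le_right _ _).trans ((min_le_right _ _).trans (min_le_left _ _)),
      (min_le_right _ _).trans ((min_le_right _ _).trans (min_le_right _ _))]
  have hbox : ∀ ρ ∈ Icc R (R + δ), ∀ θ ∈ Icc α β, Pol ρ θ ∈ Ω := by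
    intro ρ hρ
    apply htube
    rw [Real.dist_eq, abs_of_nonneg (by linarith [hρ.1])]
    linarith [hρ.2]
  have hδ5 : 2 * D * (δ * (4 * k + 2)) ≤ h / (60 * R) := by
    have : 2 * D * (δ * (4 * k + 2))
        ≤ 2 * D * (h / (120 * R * D * (4 * k + 2)) * (4 * k + 2)) := by gcongr
    refine this.trans_eq ?_
    field_simp; norm_num
  set cM := 1 / (1 + (M + 1) ^ 2) with hcM
  have hcM0 : 0 < cM := by positivity
  set N := h / (15 * R) with hNdef
  have hN0 : 0 < N := by positivity
  -- `κ ^ 2 * k / R = cM * N / 4`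
  obtain ⟨κ, hκ, hκ2⟩ : ∃ κ > 0, κ ^ 2 * (k / R) = cM * N / 4 :=
    ⟨√(cM * N / 4 / (k / R)), by positivity, by
      rw [Real.sq_sqrt (by positivity)]; field_simp⟩
  set a := κ * cM * N / 2 with ha
  have ha0 : 0 < a := by positivity
  set K := (β - α) * (2 * R * (1 + 4 * H) + 16 / (β - α)) * δ + 6 * R * (β - α) with hK
  have hK0 : 0 < K := by rw [hK, hba]; positivity
  set s := δ * exp (-((K + 1) / (R * a))) with hs
  have hs0 : 0 < s := by positivity
  have hsδ : s ≤ δ := by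
    rw [hs]
    apply mul_le_of_le_one_right hδ.le
    rw [exp_le_one_iff]
    have : 0 ≤ (K + 1) / (R * a) := by positivity
    linarith
  refine ⟨s, hs0, fun u u0 hu hbd => ?_⟩
  by_contra hI
  push Not at hI
  have hInt := intervalIntegrable_defect E.hΩ hu hθ0.le E.arc
  set I := ∫ θ in 0..θ0, (1 - Xn u R θ) with hIdef
  have hBR : Bq u α β R ≤ R * s ^ 2 := by
    have s1 : ∫ θ in α..β, (1 - Xn u R θ) ≤ I := by
      apply intervalIntegral.integral_mono_interval hα0.le hαβ.le (by linarith) _ hInt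
      exact Eventually.of_forall fun θ => one_sub_Xn_nonneg u R θ
    have cX : ContinuousOn (Xn u R) (Icc α β) := fun θ hθ =>
      (continuousAt_Xn E.hΩ hu (hbox R ⟨le_rfl, by linarith⟩ θ hθ)).continuousWithinAt
    have cg : Continuous (bump α β) := (contDiff_bump α β).continuous
    have s2 : Bq u α β R ≤ ∫ θ in α..β, R * (1 - Xn u R θ) := by
      apply intervalIntegral.integral_mono_on hαβ.le
      · exact ContinuousOn.intervalIntegrable_of_Icc hαβ.le (by fun_prop)
      · exact ContinuousOn.intervalIntegrable_of_Icc hαβ.le (by fun_prop)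
      intro θ _
      have := one_sub_Xn_nonneg u R θ
      have := bump_le_one hαβ θ
      calc bump α β θ * R * (1 - Xn u R θ) ≤ 1 * R * (1 - Xn u R θ) := by gcongr
        _ = _ := by ring
    rw [intervalIntegral.integral_const_mul] at s2
    refine s2.trans ?_
    gcongr
    exact s1.trans hI
  have hB : ∀ t, 0 ≤ t → t ≤ δ → Bq u α β (R + t) ≤ k * (s + t) ^ 2 := by
    intro t ht0 ht
    have hst : 0 < s + t := by linarith
    have := strip_bound hH E.hΩ hu E.hR hαβ hs0 ht0 (t := t) (s := s)
      (fun ρ hρ => hbox ρ ⟨hρ.1, by linarith [hρ.2]⟩)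
    rw [div_le_iff₀ hst] at this
    refine this.trans ?_
    have q1 : Bq u α β R / s ≤ R * s := by
      rw [div_le_iff₀ hs0]; linarith
    have q2 : 0 ≤ 32 / ((β - α) * R) := by rw [hba]; positivity
    have q3 : Bq u α β R / s + 32 / ((β - α) * R) * t ≤ k * (s + t) := by
      rw [hk]
      have := mul_nonneg q2 hs0.le
      have := mul_nonneg hR.le ht0
      linarith
    calc _ ≤ (k * (s + t)) * (s + t) := by gcongr
      _ = k * (s + t) ^ 2 := by ring
  have hlog := log_bound hH E.hΩ hu (u0 := u0) (a := a) hR hαβ hδ c3 hs0 hbox ?_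
  · have q1 : (K + 1) / (R * a) ≤ log ((s + δ) / s) := by
      rw [le_log_iff_exp_le (by positivity), le_div_iff₀ hs0]
      have : exp ((K + 1) / (R * a)) * s = δ := by
        rw [hs, mul_left_comm, ← exp_add]; simp
      linarith
    rw [div_le_iff₀ (by positivity)] at q1
    linarith
  · intro ρ hρ
    obtain ⟨t, rfl⟩ : ∃ t, ρ = R + t := ⟨ρ - R, by ring⟩
    have ht0 : 0 ≤ t := by linarith [hρ.1]
    have ht : t ≤ δ := by linarith [hρ.2]
    have hst : 0 < s + t := by linarith
    rw [add_sub_cancel_left]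
    have B := hB t ht0 ht
    have P1 := ψ1 u u0 M hu hbd t ht0 (by linarith) (hbox _ hρ)
    have P2 := ψ2 u u0 M hu hbd t ht0 (by linarith) (hbox _ hρ)
    have S := slice_bound E.hΩ hu (c := M) (u0 := u0) (lam := κ / (s + t)) hR hρ.1 hαβ
      (by positivity) (hbox _ hρ)
    refine le_trans ?_ S
    set Ψ1 := ∫ θ in α..β, bump α β θ * phi M (1 * (u (Pol (R + t) θ) - u0))
    set Ψ2 := ∫ θ in α..β, bump α β θ * phi M (-1 * (u (Pol (R + t) θ) - u0))
    set b := Bq u α β (R + t)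
    have hsum : b + I + t ≤ δ * (4 * k + 2) := by
      have e1 : (s + t) ^ 2 ≤ (2 * δ) ^ 2 := by gcongr; linarith
      have e2 : k * (s + t) ^ 2 ≤ k * (2 * δ) ^ 2 := by gcongr
      have e3 : δ ^ 2 ≤ δ := by
        rw [sq]; exact mul_le_of_le_one_left hδ.le c2
      have e4 : k * δ ^ 2 ≤ k * δ := by gcongr
      have e5 : s ^ 2 ≤ δ ^ 2 := by gcongr
      linarith
    have hΨ : 2 * Ψ1 + 2 * Ψ2 ≤ N / 2 := by
      have e1 : 2 * D * (b + I + t) ≤ 2 * D * (δ * (4 * k + 2)) := by gcongr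
      have e2 : N / 2 = h / (60 * R) + h / (60 * R) := by rw [hNdef]; field_simp; norm_num
      rw [e2]
      have e3 : 2 * D * (b + I + h ^ 2 + t) = 2 * D * (b + I + t) + 2 * D * h ^ 2 := by ring
      have e4 : 2 * (D1 * (b + I + h ^ 2 + t)) + 2 * (D2 * (b + I + h ^ 2 + t))
        = 2 * D * (b + I + h ^ 2 + t) := by rw [hD]; ring
      linarith
    rw [hba, hN]
    have e1 : (κ / (s + t)) ^ 3 * (b / R) ≤ κ / (s + t) * (cM * N / 4) := by
      have : (κ / (s + t)) ^ 3 * (b / R) ≤ (κ / (s + t)) ^ 3 * (k * (s + t) ^ 2 / R) := by gcongr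
      refine this.trans_eq ?_
      rw [← hκ2]; field_simp
    have e2 : 3 * (κ / (s + t)) / 2 * cM * (N / 2)
        ≤ 3 * (κ / (s + t)) / 2 * cM * (N - 2 * Ψ1 - 2 * Ψ2) := by
      gcongr; linarith
    have e3 : a / (s + t) = κ / (s + t) * (cM * N / 2) := by rw [ha]; ring
    rw [e3]
    linarith

/-! ### The divergence line near its endpoint -/

lemma enorm2_sq (p : ℝ × ℝ) : enorm2 p ^ 2 = p.1 ^ 2 + p.2 ^ 2 := Real.sq_sqrt (by positivity)

/-- An angle in `(0, 2π)` for a point of the unit circle other than `(1, 0)`. -/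
lemma exists_angle {x y : ℝ} (h : x ^ 2 + y ^ 2 = 1) (hne : ¬(x = 1 ∧ y = 0)) :
    ∃ θ, 0 < θ ∧ θ < 2 * π ∧ cos θ = x ∧ sin θ = y := by
  have hn : ‖(⟨x, y⟩ : ℂ)‖ = 1 := by
    rw [← sq_eq_sq₀ (norm_nonneg _) zero_le_one, Complex.sq_norm, Complex.normSq_mk]; linarith
  have h0 : (⟨x, y⟩ : ℂ) ≠ 0 := by intro h0; rw [h0] at hn; simp at hn
  have hc : cos (Complex.arg ⟨x, y⟩) = x := by rw [Complex.cos_arg h0, hn]; simp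
  have hs : sin (Complex.arg ⟨x, y⟩) = y := by rw [Complex.sin_arg, hn]; simp
  set t := Complex.arg ⟨x, y⟩
  have h1 : -π < t := Complex.neg_pi_lt_arg _
  have h2 : t ≤ π := Complex.arg_le_pi _
  have hp := pi_pos
  rcases lt_trichotomy t 0 with ht | ht | ht
  · exact ⟨t + 2 * π, by linarith, by linarith, by rw [cos_add_two_pi, hc],
      by rw [sin_add_two_pi, hs]⟩
  · exfalso; rw [ht] at hc hs; simp at hc hs; exact hne ⟨hc.symm, hs.symm⟩
  · exact ⟨t, ht, by linarith, hc, hs⟩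

/-- A connected subset of a circle which accumulates at a point `z + R a` of the circle outside of
it contains a one-sided punctured neighbourhood of that point; `ε` records the side. -/
lemma arc_end {R a1 a2 : ℝ} {z : ℝ × ℝ} {L : Set (ℝ × ℝ)} (hR : 0 < R)
    (ha : a1 ^ 2 + a2 ^ 2 = 1) (hc : IsConnected L)
    (hL : ∀ q ∈ L, (q.1 - z.1) ^ 2 + (q.2 - z.2) ^ 2 = R ^ 2)
    (hP : (z.1 + R * a1, z.2 + R * a2) ∉ L) (hPc : (z.1 + R * a1, z.2 + R * a2) ∈ closure L) :
    ∃ ε : ℝ, (ε = 1 ∨ ε = -1) ∧ ∃ θ0 > 0, ∀ θ, 0 < θ → θ ≤ θ0 →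
      (z.1 + R * cos θ * a1 + R * sin θ * (-ε * a2),
        z.2 + R * cos θ * a2 + R * sin θ * (ε * a1)) ∈ L := by
  set Γ : ℝ → ℝ × ℝ := fun θ => (z.1 + R * cos θ * a1 + R * sin θ * (-a2),
    z.2 + R * cos θ * a2 + R * sin θ * a1) with hΓ
  set X : ℝ × ℝ → ℝ := fun q => ((q.1 - z.1) * a1 + (q.2 - z.2) * a2) / R with hX
  set Y : ℝ × ℝ → ℝ := fun q => (-(q.1 - z.1) * a2 + (q.2 - z.2) * a1) / R with hY
  have cX : Continuous X := by rw [hX]; fun_prop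
  have cY : Continuous Y := by rw [hY]; fun_prop
  have XΓ : ∀ θ, X (Γ θ) = cos θ := by
    intro θ
    simp only [hX, hΓ]
    rw [div_eq_iff hR.ne']
    linear_combination (R * cos θ) * ha
  have YΓ : ∀ θ, Y (Γ θ) = sin θ := by
    intro θ
    simp only [hY, hΓ]
    rw [div_eq_iff hR.ne']
    linear_combination (R * sin θ) * ha
  have hΓXY : ∀ q θ, cos θ = X q → sin θ = Y q → Γ θ = q := by
    intro q θ h1 h2
    simp only [hΓ, h1, h2, hX, hY]
    ext
    · simp only; field_simp; linear_combination (q.1 - z.1) * ha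
    · simp only; field_simp; linear_combination (q.2 - z.2) * ha
  have hang : ∀ q ∈ L, ∃ θ, 0 < θ ∧ θ < 2 * π ∧ Γ θ = q := by
    intro q hq
    have h1 : X q ^ 2 + Y q ^ 2 = 1 := by
      have e : X q ^ 2 + Y q ^ 2
          = ((q.1 - z.1) ^ 2 + (q.2 - z.2) ^ 2) * (a1 ^ 2 + a2 ^ 2) / R ^ 2 := by
        simp only [hX, hY]; field_simp; ring
      rw [e, hL q hq, ha]; field_simp
    obtain ⟨θ, t1, t2, t3, t4⟩ := exists_angle h1 (by
      rintro ⟨e1, e2⟩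
      apply hP
      have := hΓXY q 0 (by rw [e1, cos_zero]) (by rw [e2, sin_zero])
      rw [← this] at hq
      convert hq using 1
      simp [hΓ])
    exact ⟨θ, t1, t2, hΓXY q θ t3 t4⟩
  have hord : ∀ t1 t2 t3, 0 < t1 → t1 < t2 → t2 < t3 → t3 < 2 * π → Γ t1 ∈ L → Γ t3 ∈ L →
      Γ t2 ∈ L := by
    intro t1 t2 t3 p1 p2 p3 p4 m1 m3
    -- the chord through `z + R a` and `Γ t2` separates `Γ t1` from `Γ t3`
    set g : ℝ × ℝ → ℝ := fun q => X q * cos (t2 / 2) + Y q * sin (t2 / 2) - cos (t2 / 2) with hg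
    have gΓ : ∀ t, g (Γ t) = -2 * (sin (t / 2) * sin ((t - t2) / 2)) := by
      intro t
      simp only [hg, XΓ, YΓ]
      have e : cos t * cos (t2 / 2) + sin t * sin (t2 / 2) = cos (t - t2 / 2) := by
        rw [cos_sub]
      rw [e, cos_sub_cos]
      ring_nf
    have cg : Continuous g := by rw [hg]; fun_prop
    have s1 : 0 ≤ g (Γ t1) := by
      rw [gΓ]
      have q1 : 0 < sin (t1 / 2) := sin_pos_of_pos_of_lt_pi (by linarith) (by linarith)
      have q2 : sin ((t1 - t2) / 2) < 0 := sin_neg_of_neg_of_neg_pi_lt (by linarith) (by linarith)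
      linarith [mul_neg_of_pos_of_neg q1 q2]
    have s3 : g (Γ t3) ≤ 0 := by
      rw [gΓ]
      have q1 : 0 < sin (t3 / 2) := sin_pos_of_pos_of_lt_pi (by linarith) (by linarith)
      have q2 : 0 < sin ((t3 - t2) / 2) := sin_pos_of_pos_of_lt_pi (by linarith) (by linarith)
      linarith [mul_pos q1 q2]
    obtain ⟨q, hq, hq0⟩ :=
      hc.isPreconnected.intermediate_value m3 m1 cg.continuousOn ⟨s3, s1⟩
    obtain ⟨t, t0, t2p, rfl⟩ := hang q hq
    rw [gΓ] at hq0
    have q1 : 0 < sin (t / 2) := sin_pos_of_pos_of_lt_pi (by linarith) (by linarith)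
    have q2 : sin ((t - t2) / 2) = 0 := by
      have : sin (t / 2) * sin ((t - t2) / 2) = 0 := by linarith
      exact (mul_eq_zero.1 this).resolve_left q1.ne'
    have q3 := (sin_eq_zero_iff_of_lt_of_lt (by linarith) (by linarith)).1 q2
    have : t = t2 := by linarith
    rwa [← this]
  obtain ⟨q0, hq0⟩ := hc.nonempty
  obtain ⟨ts, ts0, tsp, rfl⟩ := hang q0 hq0
  have hacc : ∀ η, 0 < η → η ≤ π → ∃ t, 0 < t ∧ t < 2 * π ∧ Γ t ∈ L ∧ (t < η ∨ 2 * π - η < t) := by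
    intro η h1 h2
    have hXP : X (z.1 + R * a1, z.2 + R * a2) = 1 := by
      simp only [hX]; rw [div_eq_iff hR.ne']; linear_combination R * ha
    have hcos : cos η < 1 := by
      rw [← cos_zero]; exact cos_lt_cos_of_nonneg_of_le_pi le_rfl h2 h1
    have hopen : IsOpen {q | cos η < X q} := isOpen_lt continuous_const cX
    obtain ⟨q, hq1, hq2⟩ := mem_closure_iff.1 hPc _ hopen (by
      change cos η < X _; rw [hXP]; exact hcos)
    obtain ⟨t, t0, t2p, rfl⟩ := hang q hq2
    refine ⟨t, t0, t2p, hq2, ?_⟩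
    by_contra hcon
    push Not at hcon
    have hq1' : cos η < cos t := by rw [← XΓ t]; exact hq1
    rcases le_total t π with hle | hle
    · have := cos_le_cos_of_nonneg_of_le_pi h1.le hle hcon.1
      linarith
    · have := cos_le_cos_of_nonneg_of_le_pi h1.le (by linarith : 2 * π - t ≤ π)
        (by linarith [hcon.2])
      rw [cos_two_pi_sub] at this
      linarith
  by_cases hside : ∀ η, 0 < η → ∃ t, 0 < t ∧ t < η ∧ Γ t ∈ L
  · refine ⟨1, Or.inl rfl, ts, ts0, fun θ h1 h2 => ?_⟩
    have : Γ θ ∈ L := by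
      rcases eq_or_lt_of_le h2 with h2 | h2
      · rwa [h2]
      · obtain ⟨t, p1, p2, p3⟩ := hside θ h1
        exact hord t θ ts p1 p2 h2 tsp p3 hq0
    simpa [hΓ] using this
  · push Not at hside
    obtain ⟨η, hη, hside⟩ := hside
    refine ⟨-1, Or.inr rfl, 2 * π - ts, by linarith, fun θ h1 h2 => ?_⟩
    have : Γ (2 * π - θ) ∈ L := by
      rcases eq_or_lt_of_le h2 with h2 | h2
      · rw [h2]; simpa using hq0
      · have hp := pi_pos
        obtain ⟨t, p1, p2, p3, p4⟩ := hacc (min (min η θ) π) (by positivity) (min_le_right _ _)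
        have k1 : min (min η θ) π ≤ η := (min_le_left _ _).trans (min_le_left _ _)
        have k2 : min (min η θ) π ≤ θ := (min_le_left _ _).trans (min_le_right _ _)
        rcases p4 with p4 | p4
        · exact absurd p3 (hside t p1 (by linarith))
        · exact hord ts (2 * π - θ) t ts0 (by linarith) (by linarith) p2 hq0 p3
    simpa [hΓ, cos_two_pi_sub, sin_two_pi_sub] using this

/-- Existence of the normalised configuration in the moved frame `T`. -/
lemma exists_endpoint {H R a1 a2 ε θ0 : ℝ} {z P zP : ℝ × ℝ} {Ω U V : Set (ℝ × ℝ)}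
    {T : ℝ × ℝ → ℝ × ℝ} (hH : 0 < H) (hR : R = 1 / (2 * H)) (hΩ : IsOpen Ω)
    (ha : a1 ^ 2 + a2 ^ 2 = 1) (hε : ε = 1 ∨ ε = -1)
    (hT : ∀ x, T x = (z.1 + x.1 * a1 + x.2 * (-ε * a2), z.2 + x.1 * a2 + x.2 * (ε * a1)))
    (hP : P = (z.1 + R * a1, z.2 + R * a2)) (hzP : enorm2 (P - zP) = R)
    (hU : IsOpen U) (hPU : P ∈ U) (hV : IsOpen V) (hPV : P ∈ V)
    (hdisc : Ω ∩ V ⊆ {q | enorm2 (q - zP) < R}) (hθ0 : 0 < θ0)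
    (harc : ∀ θ, 0 < θ → θ ≤ θ0 → T (Pol R θ) ∈ Ω) :
    ∃ ma mb r0, Endpoint H R ma mb r0 θ0 (T ⁻¹' Ω) (T ⁻¹' (U ∩ V)) := by
  have hRpos : 0 < R := by rw [hR]; positivity
  have hε2 : ε ^ 2 = 1 := by rcases hε with rfl | rfl <;> norm_num
  have cT : Continuous T := by
    have : T = fun x => (z.1 + x.1 * a1 + x.2 * (-ε * a2), z.2 + x.1 * a2 + x.2 * (ε * a1)) :=
      funext hT
    rw [this]; fun_prop
  have hTP : T (Pol R 0) = P := by rw [hT, hP]; simp [Pol]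
  have hnhds : ∀ᶠ x : ℝ × ℝ in nhds (R, 0), T (Pol x.1 x.2) ∈ U ∩ V := by
    have hc : Continuous fun x : ℝ × ℝ => T (Pol x.1 x.2) := cT.comp contDiff_Pol.continuous
    exact hc.continuousAt.eventually_mem ((hU.inter hV).mem_nhds (by
      change T (Pol R 0) ∈ _; rw [hTP]; exact ⟨hPU, hPV⟩))
  obtain ⟨r, hr, hball⟩ := Metric.eventually_nhds_iff.1 hnhds
  have hbox : ∀ ρ θ, |ρ - R| ≤ r / 2 → |θ| ≤ r / 2 → T (Pol ρ θ) ∈ U ∩ V := by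
    intro ρ θ h1 h2
    apply hball (y := (ρ, θ))
    rw [Prod.dist_eq, max_lt_iff, Real.dist_eq, Real.dist_eq]
    constructor
    · simp only; linarith
    · simp only [sub_zero]; linarith
  have hzP2 : (P.1 - zP.1) ^ 2 + (P.2 - zP.2) ^ 2 = R ^ 2 := by
    have := enorm2_sq (P - zP); rw [hzP] at this; simpa using this.symm
  set m1 := (zP.1 - P.1) / R with hm1
  set m2 := (zP.2 - P.2) / R with hm2
  have e1 : zP.1 = P.1 + R * m1 := by rw [hm1, mul_div_cancel₀ _ hRpos.ne']; ring
  have e2 : zP.2 = P.2 + R * m2 := by rw [hm2, mul_div_cancel₀ _ hRpos.ne']; ring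
  have hm : m1 ^ 2 + m2 ^ 2 = 1 := by
    have q1 : R * m1 = zP.1 - P.1 := by rw [hm1, mul_div_cancel₀ _ hRpos.ne']
    have q2 : R * m2 = zP.2 - P.2 := by rw [hm2, mul_div_cancel₀ _ hRpos.ne']
    have : R ^ 2 * (m1 ^ 2 + m2 ^ 2) = R ^ 2 * 1 := by
      linear_combination hzP2 + (R * m1 + (zP.1 - P.1)) * q1 + (R * m2 + (zP.2 - P.2)) * q2
    exact mul_left_cancel₀ (by positivity) this
  have hmm : (m1 * a1 + m2 * a2) ^ 2 + (ε * (-m1 * a2 + m2 * a1)) ^ 2 = 1 := by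
    linear_combination (-m1 * a2 + m2 * a1) ^ 2 * hε2 + (m1 ^ 2 + m2 ^ 2) * ha + hm
  have hd : ∀ ρ θ, |ρ - R| ≤ r / 2 → |θ| ≤ r / 2 → Pol ρ θ ∈ T ⁻¹' Ω →
      ((ρ * cos θ - R) ^ 2 + (ρ * sin θ) ^ 2) / (2 * R)
      < (m1 * a1 + m2 * a2) * (ρ * cos θ - R) + (ε * (-m1 * a2 + m2 * a1)) * (ρ * sin θ) := by
    intro ρ θ h1 h2 h3
    have h4 : enorm2 (T (Pol ρ θ) - zP) < R := hdisc ⟨h3, (hbox ρ θ h1 h2).2⟩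
    have h5 : enorm2 (T (Pol ρ θ) - zP) ^ 2 < R ^ 2 := by
      have : 0 ≤ enorm2 (T (Pol ρ θ) - zP) := Real.sqrt_nonneg _
      gcongr
    rw [enorm2_sq, hT] at h5
    simp only [Prod.fst_sub, Prod.snd_sub, Pol] at h5
    rw [e1, e2, hP] at h5
    rw [div_lt_iff₀ (by positivity)]
    set p := ρ * cos θ
    set q := ρ * sin θ
    have key : (z.1 + p * a1 + q * (-ε * a2) - (z.1 + R * a1 + R * m1)) ^ 2
        + (z.2 + p * a2 + q * (ε * a1) - (z.2 + R * a2 + R * m2)) ^ 2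
        = (p - R) ^ 2 + q ^ 2 - 2 * R * ((m1 * a1 + m2 * a2) * (p - R)
          + (ε * (-m1 * a2 + m2 * a1)) * q) + R ^ 2 := by
      linear_combination ((p - R) ^ 2 + ε ^ 2 * q ^ 2) * ha + q ^ 2 * hε2 + R ^ 2 * hm
    rw [key] at h5
    linarith
  refine ⟨m1 * a1 + m2 * a2, ε * (-m1 * a2 + m2 * a1), r / 2, hH, hR, hmm, ?_,
    hΩ.preimage cT, by positivity, hθ0, hbox, hd, fun θ h1 h2 => harc θ h1 h2.le⟩
  -- positivity of the tangential component: the arc enters the disc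
  obtain ⟨θ, t0, t1, t2, t3⟩ : ∃ θ > 0, θ ≤ θ0 ∧ θ ≤ r / 2 ∧ θ ≤ 1 :=
    ⟨min θ0 (min (r / 2) 1), by positivity, min_le_left _ _,
      (min_le_right _ _).trans (min_le_left _ _), (min_le_right _ _).trans (min_le_right _ _)⟩
  have hdθ := hd R θ (by simp; positivity) (by rw [abs_of_pos t0]; exact t2) (harc θ t0 t1)
  have hs : 0 < sin θ := sin_pos_of_pos_of_lt_pi t0 (by linarith [pi_gt_three])
  set ma := m1 * a1 + m2 * a2
  set mb := ε * (-m1 * a2 + m2 * a1)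
  have hma : -1 ≤ ma := by nlinarith [sq_nonneg mb]
  have e : ((R * cos θ - R) ^ 2 + (R * sin θ) ^ 2) / (2 * R) = R * (1 - cos θ) := by
    field_simp
    linear_combination sin_sq_add_cos_sq θ
  rw [e] at hdθ
  have h4 : 0 ≤ R * ((1 - cos θ) * (1 + ma)) :=
    mul_nonneg hRpos.le (mul_nonneg (by linarith [cos_le_one θ]) (by linarith))
  have h5 : 0 < mb * (R * sin θ) := by linarith
  exact pos_of_mul_pos_left h5 (by positivity)

/-- On the divergence line the radial component of `∇u / W` tends to `1`, so its defect tends to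
zero in `L¹` of the arc. -/
lemma tendsto_defect {H R a1 a2 ε θ0 : ℝ} {z : ℝ × ℝ} {Ω L : Set (ℝ × ℝ)} {T : ℝ × ℝ → ℝ × ℝ}
    (hR : R = 1 / (2 * H)) (hH : 0 < H) (hΩ : IsOpen Ω) (ha : a1 ^ 2 + a2 ^ 2 = 1)
    (hε2 : ε ^ 2 = 1)
    (hT : T = fun x => (z.1 + x.1 * a1 + x.2 * (-ε * a2), z.2 + x.1 * a2 + x.2 * (ε * a1)))
    (hLΩ : L ⊆ Ω) (hθ0 : 0 < θ0) (harc : ∀ θ, 0 < θ → θ ≤ θ0 → T (Pol R θ) ∈ L)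
    {w : ℕ → ℝ × ℝ → ℝ} (hw : ∀ n, DivCMC H Ω (w n))
    (hlim : ∀ Q ∈ L, Tendsto (fun n => normalVec (w n) Q) atTop
        (nhds (2 * H * (z.1 - Q.1), 2 * H * (z.2 - Q.2), 0))) :
    Tendsto (fun n => ∫ θ in 0..θ0, (1 - Xn (w n ∘ T) R θ)) atTop (nhds 0) := by
  have hRpos : 0 < R := by rw [hR]; positivity
  have hHR : 2 * H * R = 1 := by rw [hR]; field_simp
  have cT : Continuous T := by rw [hT]; fun_prop
  have h0 : (0 : ℝ) = ∫ θ in 0..θ0, (0 : ℝ) := by simp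
  have hc : IntervalIntegrable (fun _ : ℝ => (2 : ℝ)) volume 0 θ0 :=
    continuous_const.intervalIntegrable _ _
  suffices h : Tendsto (fun n => ∫ θ in 0..θ0, (1 - Xn (w n ∘ T) R θ)) atTop
      (nhds (∫ θ in 0..θ0, (0 : ℝ))) by rwa [← h0] at h
  refine intervalIntegral.tendsto_integral_filter_of_dominated_convergence (fun _ => 2)
    (Eventually.of_forall fun n => ?_) (Eventually.of_forall fun n => ?_)
    hc (Eventually.of_forall fun θ hθ => ?_)
  · have := intervalIntegrable_defect (hΩ.preimage cT)
      (divCMC_comp hΩ (hw n) z a1 a2 ε ha hε2 T hT).1 hθ0.le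
      (fun θ h1 h2 => hLΩ (harc θ h1 h2.le))
    exact this.def'.aestronglyMeasurable
  · refine Eventually.of_forall fun θ _ => ?_
    have := abs_le.1 (abs_Xn_le (w n ∘ T) R θ)
    rw [norm_eq_abs, abs_le]; constructor <;> linarith
  · rw [uIoc_of_le hθ0.le] at hθ
    have hq := harc θ hθ.1 hθ.2
    have e : ∀ n, 1 - Xn (w n ∘ T) R θ = 1 +
        ((normalVec (w n) (T (Pol R θ))).1 * (a1 * cos θ - ε * a2 * sin θ) +
          (normalVec (w n) (T (Pol R θ))).2.1 * (a2 * cos θ + ε * a1 * sin θ)) := by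
      intro n
      obtain ⟨g1, g2⟩ := (divCMC_comp hΩ (hw n) z a1 a2 ε ha hε2 T hT).2 (Pol R θ) (hLΩ hq)
      unfold Xn Fnr
      rw [g1, g2]
      simp only [normalVec, X1, X2]
      ring
    simp_rw [e]
    have l := hlim _ hq
    have l1 := (continuous_fst.tendsto _).comp l
    have l2 := ((continuous_fst.comp continuous_snd).tendsto _).comp l
    have := ((l1.mul_const (a1 * cos θ - ε * a2 * sin θ)).add
      (l2.mul_const (a2 * cos θ + ε * a1 * sin θ))).const_add 1
    convert this using 2
    · rfl
    have t1 : (T (Pol R θ)).1 = z.1 + R * cos θ * a1 + R * sin θ * (-ε * a2) := by rw [hT]; rfl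
    have t2 : (T (Pol R θ)).2 = z.2 + R * cos θ * a2 + R * sin θ * (ε * a1) := by rw [hT]; rfl
    change (0 : ℝ) = 1 + (2 * H * (z.1 - (T (Pol R θ)).1) * (a1 * cos θ - ε * a2 * sin θ) +
      2 * H * (z.2 - (T (Pol R θ)).2) * (a2 * cos θ + ε * a1 * sin θ))
    rw [t1, t2]
    have hs := sin_sq_add_cos_sq θ
    linear_combination ((sin θ ^ 2 + cos θ ^ 2) * (a1 ^ 2 + a2 ^ 2)) * hHR
      + (a1 ^ 2 + a2 ^ 2) * hs + ha + (2 * H * R * sin θ ^ 2 * (a1 ^ 2 + a2 ^ 2)) * hε2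

/-- if the oscillations of the `u_n` on a boundary arc `C` of exterior
curvature at least `2H` are uniformly bounded, then no divergence line has an endpoint
on `C`. -/
theorem stmt_14 (H : ℝ) (hH : 0 < H) (Ω : Set (ℝ × ℝ)) (hΩ : IsOpen Ω)
    (hΩconn : IsConnected Ω) (C : Set (ℝ × ℝ)) (hCne : C.Nonempty)
    (hCconn : IsPreconnected C)
    (hCopen : ∃ U : Set (ℝ × ℝ), IsOpen U ∧ C = frontier Ω ∩ U)
    (hcurv : ∀ P ∈ C, ∃ z : ℝ × ℝ, enorm2 (P - z) = 1 / (2 * H) ∧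
      ∃ V : Set (ℝ × ℝ), IsOpen V ∧ P ∈ V ∧
        Ω ∩ V ⊆ {q : ℝ × ℝ | enorm2 (q - z) < 1 / (2 * H)})
    (u : ℕ → ℝ × ℝ → ℝ) (hu : ∀ n, IsCMCSolution H Ω (u n))
    (hcont : ∀ n, ContinuousOn (u n) (Ω ∪ C))
    (M : ℝ) (hM : ∀ n, ∀ P ∈ C, ∀ Q ∈ C, u n P - u n Q ≤ M) :
    ∀ L : Set (ℝ × ℝ), IsDivergenceLine H Ω u L → closure L ∩ C = ∅ := by
  intro L hL
  obtain ⟨z, hLΩ, hLc, hLconn, -, φ, -, hlim⟩ := hL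
  rw [eq_empty_iff_forall_notMem]
  rintro P ⟨hPL, hPC⟩
  obtain ⟨U, hU, rfl⟩ := hCopen
  obtain ⟨zP, hzP, V, hV, hPV, hdisc⟩ := hcurv P hPC
  set R := 1 / (2 * H) with hR
  have hRpos : 0 < R := by positivity
  have hLc2 : ∀ q ∈ L, (q.1 - z.1) ^ 2 + (q.2 - z.2) ^ 2 = R ^ 2 := by
    intro q hq
    have := enorm2_sq (q - z)
    rw [hLc q hq] at this
    simpa using this.symm
  have hP2 : (P.1 - z.1) ^ 2 + (P.2 - z.2) ^ 2 = R ^ 2 := by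
    have hcl : IsClosed {q : ℝ × ℝ | (q.1 - z.1) ^ 2 + (q.2 - z.2) ^ 2 = R ^ 2} :=
      isClosed_eq (by fun_prop) continuous_const
    exact closure_minimal (fun q hq => hLc2 q hq) hcl hPL
  have hPΩ : P ∉ Ω := fun h => by
    have := hPC.1.2; rw [hΩ.interior_eq] at this; exact this h
  set a1 := (P.1 - z.1) / R with ha1
  set a2 := (P.2 - z.2) / R with ha2
  have ha : a1 ^ 2 + a2 ^ 2 = 1 := by
    rw [ha1, ha2, div_pow (P.1 - z.1) R, div_pow (P.2 - z.2) R, ← add_div, hP2]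
    exact div_self (pow_ne_zero 2 hRpos.ne')
  have hPa : P = (z.1 + R * a1, z.2 + R * a2) := by
    rw [ha1, ha2, mul_div_cancel₀ _ hRpos.ne', mul_div_cancel₀ _ hRpos.ne']
    ext <;> simp
  obtain ⟨ε, hε, θ0, hθ0, harc⟩ := arc_end hRpos ha hLconn hLc2
    (by rw [← hPa]; exact fun h => hPΩ (hLΩ h)) (by rw [← hPa]; exact hPL)
  have hε2 : ε ^ 2 = 1 := by rcases hε with rfl | rfl <;> norm_num
  set T : ℝ × ℝ → ℝ × ℝ :=
    fun x => (z.1 + x.1 * a1 + x.2 * (-ε * a2), z.2 + x.1 * a2 + x.2 * (ε * a1)) with hT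
  have cT : Continuous T := by rw [hT]; fun_prop
  obtain ⟨ma, mb, r0, E⟩ := exists_endpoint (T := T) hH hR hΩ ha hε (fun _ => rfl) hPa hzP
    hU hPC.2 hV hPV hdisc hθ0 (fun θ h1 h2 => hLΩ (harc θ h1 h2))
  obtain ⟨s, hs, hge⟩ := defect_ge E (M + 1)
  have hw : ∀ n, DivCMC H Ω (u n) := fun n => divCMC_of_isCMC hΩ (hu n)
  have hlim0 := tendsto_defect hR hH hΩ ha hε2 hT hLΩ hθ0 harc (fun n => hw (φ n)) hlim
  obtain ⟨n, hn⟩ := (hlim0.eventually_lt_const (by positivity : (0 : ℝ) < s ^ 2)).exists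
  refine lt_asymm hn (hge (u (φ n) ∘ T) (u (φ n) P)
    (divCMC_comp hΩ (hw (φ n)) z a1 a2 ε ha hε2 T hT).1 ?_)
  -- near a point of `U` outside `Ω`, `u` is within `M + 1` of its value at `P`
  intro x hx hxΩ
  by_cases hxc : T x ∈ closure Ω
  · have hxC : T x ∈ frontier Ω ∩ U :=
      ⟨⟨hxc, fun h => hxΩ (show T x ∈ Ω from interior_subset h)⟩, hx.1⟩
    have hcw := hcont (φ n) (T x) (Or.inr hxC)
    have h1 : ∀ᶠ y in nhds (T x), y ∈ Ω ∪ frontier Ω ∩ U → |u (φ n) y - u (φ n) (T x)| < 1 :=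
      eventually_nhdsWithin_iff.1
        ((Metric.tendsto_nhds.1 hcw 1 one_pos).mono fun y hy => by rwa [Real.dist_eq] at hy)
    filter_upwards [cT.continuousAt.eventually h1] with y hy hyΩ
    have h2 := abs_lt.1 (hy (Or.inl hyΩ))
    have h3 := hM (φ n) (T x) hxC P hPC
    have h4 := hM (φ n) P hPC (T x) hxC
    simp only [Function.comp]
    rw [abs_lt]
    constructor <;> linarith [h2.1, h2.2]
  · have h1 : ∀ᶠ y in nhds (T x), y ∉ closure Ω := isClosed_closure.isOpen_compl.mem_nhds hxc
    filter_upwards [cT.continuousAt.eventually h1] with y hy hyΩ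
    exact absurd (subset_closure (show T y ∈ Ω from hyΩ)) hy
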